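/- arXiv:2507.16730 — 3 statements merged into one kernel-verified Lean document; each statement's English description precedes it below -/
import Mathlib

section
/- For every m ≥ 2 and every hierarchy S of size m, letting H_n denote the number of isomorphism classes of hierarchies of size n and H^{(m)}_n the number of isomorphism classes of hierarchies of size n containing no subhierarchy isomorphic to S, one has lim_{n→∞} H^{(m)}_n / H_n = 0. -/
/-- Finite rooted unordered trees, presented with an ordered list of children
(unorderedness is taken care of by the isomorphism relation `RTree.Iso`). -/
inductive RTree : Type
  | node : List RTree → RTree

/-- The number of leaves (external vertices) of a rooted tree: the *size* of a hierarchy. -/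
def RTree.leaves : RTree → ℕ
  | .node [] => 1
  | .node (a :: l) => ((a :: l).attach.map (fun x => RTree.leaves x.1)).sum
decreasing_by
  have := List.sizeOf_lt_of_mem x.2
  simp only [RTree.node.sizeOf_spec]
  omega

/-- A hierarchy: a rooted tree in which no vertex has exactly one child. -/
inductive RTree.IsHierarchy : RTree → Prop
  | node {l : List RTree} : l.length ≠ 1 → (∀ t ∈ l, RTree.IsHierarchy t) →
      RTree.IsHierarchy (.node l)

/-- `s.SubtreeOf t` : `s` is the subtree of `t` rooted at some vertex of `t`
(that vertex together with all of its descendants). -/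
inductive RTree.SubtreeOf : RTree → RTree → Prop
  | refl (t : RTree) : RTree.SubtreeOf t t
  | child {s c : RTree} {l : List RTree} : c ∈ l → RTree.SubtreeOf s c →
      RTree.SubtreeOf s (.node l)

/-- Isomorphism of rooted unordered trees: the children of the two roots can be
matched up bijectively by isomorphisms. -/
inductive RTree.Iso : RTree → RTree → Prop
  | node {l₁ l l₂ : List RTree} (h₁ : List.Forall₂ RTree.Iso l₁ l) (h₂ : l.Perm l₂) :
      RTree.Iso (.node l₁) (.node l₂)

/-- The number of isomorphism classes of hierarchies of size `n` (OEIS A000669). -/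
noncomputable def hierarchyCount (n : ℕ) : ℕ :=
  Nat.card (Quot fun a b : {t : RTree // t.IsHierarchy ∧ t.leaves = n} => RTree.Iso a.1 b.1)

/-- `t` contains no subhierarchy isomorphic to `S`. -/
def RTree.Avoids (t S : RTree) : Prop :=
  ∀ s : RTree, s.SubtreeOf t → ¬ RTree.Iso s S

/-- The number of isomorphism classes of hierarchies of size `n` containing
no subhierarchy isomorphic to `S`. -/
noncomputable def avoidCount (S : RTree) (n : ℕ) : ℕ :=
  Nat.card (Quot fun a b : {t : RTree // t.IsHierarchy ∧ t.leaves = n ∧ t.Avoids S} =>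
    RTree.Iso a.1 b.1)

namespace RTree

theorem ind {P : RTree → Prop} (h : ∀ l : List RTree, (∀ t ∈ l, P t) → P (.node l)) :
    ∀ t, P t
  | .node l => h l (fun t ht => ind h t)
decreasing_by
  have := List.sizeOf_lt_of_mem ht
  simp only [RTree.node.sizeOf_spec]
  omega

theorem leaves_node (l : List RTree) :
    (RTree.node l).leaves = if l = [] then 1 else (l.map RTree.leaves).sum := by
  cases l with
  | nil => simp [RTree.leaves]
  | cons a l => rw [RTree.leaves, List.attach_map_val (f := RTree.leaves)]; simp

theorem iso_node {l₁ l₂ : List RTree} : Iso (.node l₁) (.node l₂) ↔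
    ∃ l, List.Forall₂ Iso l₁ l ∧ l.Perm l₂ := by
  constructor
  · rintro ⟨h1, h2⟩
    exact ⟨_, h1, h2⟩
  · rintro ⟨l, h1, h2⟩
    exact .node h1 h2

theorem iso_refl (t : RTree) : Iso t t := by
  induction t using ind with
  | h l ih => exact .node (List.forall₂_same.2 ih) (List.Perm.refl l)

theorem iso_symm (t : RTree) : ∀ s, Iso t s → Iso s t := by
  induction t using ind with
  | h l ih =>
    rintro ⟨l₂⟩ h
    obtain ⟨l', h1, h2⟩ := iso_node.1 h
    have h3 : List.Forall₂ Iso l' l := by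
      clear h h2
      induction h1 with
      | nil => exact .nil
      | cons hab _ ih2 =>
        refine .cons (ih _ (by simp) _ hab) (ih2 fun t ht => ih t (by simp [ht]))
    obtain ⟨k, h4, h5⟩ := List.perm_comp_forall₂ (h2.symm) h3
    exact .node h4 h5

theorem iso_trans (t : RTree) : ∀ s r, Iso t s → Iso s r → Iso t r := by
  induction t using ind with
  | h l ih =>
    rintro ⟨l₂⟩ ⟨l₃⟩ h h'
    obtain ⟨l', h1, h2⟩ := iso_node.1 h
    obtain ⟨l'', h3, h4⟩ := iso_node.1 h'
    obtain ⟨k, h5, h6⟩ := List.perm_comp_forall₂ (h2) h3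
    refine .node (l := k) ?_ (h6.trans h4)
    clear h h' h2 h3 h4 h6
    induction h1 generalizing k with
    | nil => exact h5
    | cons hab _ ih2 =>
      cases h5 with
      | cons a b => exact .cons (ih _ (by simp) _ _ hab a) (ih2 (fun t ht => ih t (by simp [ht])) _ b)

instance isoSetoid : Setoid RTree where
  r := Iso
  iseqv := ⟨iso_refl, fun h => iso_symm _ _ h, fun h h' => iso_trans _ _ _ h h'⟩

theorem leaves_iso (t : RTree) : ∀ s, Iso t s → t.leaves = s.leaves := by
  induction t using ind with
  | h l ih =>
    rintro ⟨l₂⟩ h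
    obtain ⟨l', h1, h2⟩ := iso_node.1 h
    have h3 : l.map leaves = l'.map leaves := by
      clear h h2
      induction h1 with
      | nil => rfl
      | cons hab _ ih2 =>
        simp only [List.map_cons]
        rw [ih _ (by simp) _ hab, ih2 fun t ht => ih t (by simp [ht])]
    have h4 : l = [] ↔ l₂ = [] := by
      rw [← List.length_eq_zero_iff, ← List.length_eq_zero_iff, h1.length_eq, h2.length_eq]
    rw [leaves_node, leaves_node, h3, (h2.map leaves).sum_eq]
    simp [h4]

theorem leaves_pos (t : RTree) : 1 ≤ t.leaves := by
  induction t using ind with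
  | h l ih =>
    rw [leaves_node]
    cases l with
    | nil => simp
    | cons a l =>
      have := ih a (by simp)
      simp; omega

end RTree

open RTree in
/-- Isomorphism classes of rooted trees. -/
abbrev UTree : Type := Quotient RTree.isoSetoid

namespace UTree

def size : UTree → ℕ := Quotient.lift RTree.leaves (fun a b h => RTree.leaves_iso a b h)

def preCh : RTree → Multiset UTree
  | .node l => (l.map (Quotient.mk RTree.isoSetoid) : Multiset UTree)

theorem mk_forall₂ {l l' : List RTree} : List.Forall₂ RTree.Iso l l' ↔
    l.map (Quotient.mk RTree.isoSetoid) = l'.map (Quotient.mk RTree.isoSetoid) := by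
  rw [← List.forall₂_eq_eq_eq, List.forall₂_map_left_iff, List.forall₂_map_right_iff]
  have : (fun a c : RTree => (Quotient.mk RTree.isoSetoid a) = Quotient.mk RTree.isoSetoid c)
      = RTree.Iso := by
    funext a b
    exact propext Quotient.eq
  rw [this]

theorem preCh_iff (a b : RTree) : preCh a = preCh b ↔ RTree.Iso a b := by
  obtain ⟨l⟩ := a
  obtain ⟨l₂⟩ := b
  rw [RTree.iso_node]
  simp only [preCh, Multiset.coe_eq_coe]
  constructor
  · intro h
    have h3 : List.Forall₂ (fun (q : UTree) (t : RTree) => q = Quotient.mk RTree.isoSetoid t)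
        (l₂.map (Quotient.mk RTree.isoSetoid)) l₂ := by
      rw [List.forall₂_map_left_iff]
      exact List.forall₂_same.2 fun _ _ => rfl
    obtain ⟨k, h1, h2⟩ := List.perm_comp_forall₂ h h3
    refine ⟨k, ?_, h2⟩
    rw [List.forall₂_map_left_iff] at h1
    exact h1.imp fun a b h => Quotient.eq.1 h
  · rintro ⟨k, h1, h2⟩
    rw [mk_forall₂.1 h1]
    exact h2.map _

/-- The multiset of children. -/
def ch : UTree → Multiset UTree := Quotient.lift preCh (fun a b h => (preCh_iff a b).2 h)

theorem ch_inj {p q : UTree} (h : ch p = ch q) : p = q := by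
  induction p, q using Quotient.inductionOn₂ with
  | h a b => exact Quotient.sound ((preCh_iff a b).1 h)

open Classical in
theorem size_eq (q : UTree) : size q = if ch q = 0 then 1 else ((ch q).map size).sum := by
  induction q using Quotient.inductionOn with
  | h t =>
    obtain ⟨l⟩ := t
    change RTree.leaves _ = _
    rw [RTree.leaves_node]
    simp only [ch, preCh, Quotient.lift_mk, Multiset.coe_eq_zero, List.map_eq_nil_iff, Multiset.map_coe, Multiset.sum_coe, List.map_map]
    rfl

theorem size_pos (q : UTree) : 1 ≤ size q := by
  induction q using Quotient.inductionOn with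
  | h t => exact RTree.leaves_pos t

theorem size_of_ne {q : UTree} (h : ch q ≠ 0) : size q = ((ch q).map size).sum := by
  rw [size_eq, if_neg h]

/-- Classes of trees having a representative that satisfies `P`. -/
def cls (P : RTree → Prop) : Set UTree := {q | ∃ t, P t ∧ Quotient.mk RTree.isoSetoid t = q}

theorem card_quot (P : RTree → Prop) :
    Nat.card (Quot fun a b : {t : RTree // P t} => RTree.Iso a.1 b.1) = (cls P).ncard := by
  rw [← Nat.card_coe_set_eq]
  refine Nat.card_congr (Equiv.ofBijective
    (Quot.lift (fun t => ⟨Quotient.mk RTree.isoSetoid t.1, t.1, t.2, rfl⟩) ?_) ⟨?_, ?_⟩)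
  · intro a b h
    exact Subtype.ext (Quotient.sound h)
  · intro a b
    induction a using Quot.inductionOn with
    | h a =>
    induction b using Quot.inductionOn with
    | h b =>
    intro h
    exact Quot.sound (Quotient.exact (congrArg Subtype.val h))
  · rintro ⟨_, t, ht, rfl⟩
    exact ⟨Quot.mk _ ⟨t, ht⟩, rfl⟩

/-- Hierarchies. -/
def HH : Set UTree := cls RTree.IsHierarchy

theorem card_ch_lt {q : UTree} : (ch q).card ≤ size q := by
  rw [size_eq]
  split_ifs with h
  · simp [h]
  · have : ∀ M : Multiset UTree, M.card ≤ (M.map size).sum := by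
      intro M
      induction M using Multiset.induction with
      | empty => simp
      | cons a M ih => have := size_pos a; simp; omega
    exact this _

theorem size_lt_of_mem {q c : UTree} (h : c ∈ ch q) (h2 : 2 ≤ (ch q).card) :
    size c < size q := by
  obtain ⟨M, hM⟩ := Multiset.exists_cons_of_mem h
  rw [size_of_ne (q := q) (by rintro h; simp [h] at h2)]
  rw [hM] at h2 ⊢
  simp at h2
  obtain ⟨d, hd⟩ := Multiset.card_pos_iff_exists_mem.1 (show 0 < M.card by omega)
  obtain ⟨M', rfl⟩ := Multiset.exists_cons_of_mem hd
  have := size_pos d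
  simp; omega

theorem HH_ch {q : UTree} (h : q ∈ HH) : (ch q = 0 ∨ 2 ≤ (ch q).card) ∧ ∀ c ∈ ch q, c ∈ HH := by
  obtain ⟨t, ht, rfl⟩ := h
  cases ht with
  | @node l h1 h2 =>
    change (preCh (.node l) = 0 ∨ 2 ≤ (preCh (.node l)).card) ∧ ∀ c ∈ preCh (.node l), c ∈ HH
    simp only [preCh]
    constructor
    · rcases l with _ | ⟨a, _ | ⟨b, l⟩⟩
      · simp
      · simp at h1
      · right; simp
    · intro c hc
      simp at hc
      obtain ⟨a, ha, rfl⟩ := hc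
      exact ⟨a, h2 a ha, rfl⟩

theorem exists_list (P : RTree → Prop) (M : Multiset UTree) (h : ∀ c ∈ M, c ∈ cls P) :
    ∃ l : List RTree, (∀ t ∈ l, P t) ∧
      (l.map (Quotient.mk RTree.isoSetoid) : Multiset UTree) = M := by
  induction M using Multiset.induction with
  | empty => exact ⟨[], by simp⟩
  | cons a M ih =>
    obtain ⟨l, hl, rfl⟩ := ih fun c hc => h c (by simp [hc])
    obtain ⟨t, ht, rfl⟩ := h a (by simp)
    refine ⟨t :: l, ?_, by simp⟩
    simp only [List.mem_cons]
    rintro s (rfl | hs)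
    exacts [ht, hl s hs]

theorem exists_node {M : Multiset UTree} (h : ∀ c ∈ M, c ∈ HH) (h1 : M.card ≠ 1) :
    ∃ q ∈ HH, ch q = M := by
  obtain ⟨l, hl, rfl⟩ := exists_list _ M h
  exact ⟨Quotient.mk RTree.isoSetoid (.node l), ⟨_, .node (by simpa using h1) hl, rfl⟩, rfl⟩

/-- A finite-ness statement. -/
theorem finite_le (n : ℕ) : {q | q ∈ HH ∧ size q ≤ n}.Finite := by
  induction n with
  | zero =>
    convert Set.finite_empty
    ext q
    have := size_pos q
    simp; omega
  | succ n ih =>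
    refine Set.Finite.of_finite_image (f := ch) ?_ (fun a _ b _ h => ch_inj h)
    refine (Multiset.finite_toSet (Multiset.powerset ((n + 1) • ih.toFinset.val))).subset ?_
    rintro _ ⟨q, ⟨hq, hs⟩, rfl⟩
    have h := HH_ch hq
    simp only [Set.mem_ofPred_eq, Multiset.mem_powerset]
    classical
    rw [Multiset.le_iff_count]
    intro a
    by_cases ha : a ∈ ch q
    · have h2 : 2 ≤ (ch q).card := by
        rcases h.1 with h | h
        · simp [h] at ha
        · exact h
      have h3 := size_lt_of_mem ha h2
      have h4 : a ∈ ih.toFinset := by simp; exact ⟨h.2 a ha, by omega⟩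
      rw [Multiset.count_nsmul, Multiset.count_eq_one_of_mem ih.toFinset.nodup h4]
      have := Multiset.count_le_card a (ch q)
      have := card_ch_lt (q := q)
      omega
    · rw [Multiset.count_eq_zero_of_notMem ha]; simp

end UTree

namespace UTree

open Classical in
theorem hasSum_multiset {α : Type} (w : α → ℝ) (F : Finset α) (h0 : ∀ a ∈ F, 0 ≤ w a)
    (h1 : ∀ a ∈ F, w a < 1) :
    HasSum (fun M : {M : Multiset α // ∀ a ∈ M, a ∈ F} => (M.1.map w).prod)
      (∏ a ∈ F, (1 - w a)⁻¹) := by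
  induction F using Finset.induction with
  | empty =>
    have : Unique {M : Multiset α // ∀ a ∈ M, a ∈ (∅ : Finset α)} :=
      { default := ⟨0, by simp⟩
        uniq := by
          rintro ⟨M, hM⟩
          apply Subtype.ext
          exact Multiset.eq_zero_of_forall_notMem fun a ha => by simpa using hM a ha }
    convert hasSum_unique _
    have : (default : {M : Multiset α // ∀ a ∈ M, a ∈ (∅ : Finset α)}) = ⟨0, by simp⟩ :=
      Subsingleton.elim _ _
    rw [this]; simp
  | insert a F ha ih =>
    have ih := ih (fun b hb => h0 b (by simp [hb])) (fun b hb => h1 b (by simp [hb]))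
    have hg := hasSum_geometric_of_lt_one (h0 a (by simp)) (h1 a (by simp))
    have hp := hg.mul ih (hg.summable.mul_of_nonneg ih.summable (fun n => pow_nonneg (h0 a (by simp)) n) (by
      rintro ⟨M, hM⟩
      apply Multiset.prod_nonneg
      intro r hr
      obtain ⟨b, hb, rfl⟩ := Multiset.mem_map.1 hr
      exact h0 b (by simp [hM b hb])))
    rw [Finset.prod_insert ha]
    let e : ℕ × {M : Multiset α // ∀ b ∈ M, b ∈ F} ≃
        {M : Multiset α // ∀ b ∈ M, b ∈ insert a F} :=
      { toFun := fun p => ⟨Multiset.replicate p.1 a + p.2.1, by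
          intro b hb
          rcases Multiset.mem_add.1 hb with hb | hb
          · simp [Multiset.eq_of_mem_replicate hb]
          · simp [p.2.2 b hb]⟩
        invFun := fun M => (M.1.count a, ⟨M.1.filter (fun b => a ≠ b), by
          intro b hb
          rw [Multiset.mem_filter] at hb
          have := M.2 b hb.1
          rw [Finset.mem_insert] at this
          rcases this with h | h
          · exact absurd h.symm hb.2
          · exact h⟩)
        left_inv := by
          rintro ⟨n, M, hM⟩
          have h3 : a ∉ M := fun h => ha (hM a h)
          refine Prod.ext ?_ (Subtype.ext ?_)
          · simp [Multiset.count_eq_zero_of_notMem h3]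
          · simp only [Multiset.filter_add]
            rw [Multiset.filter_eq_nil.2, Multiset.filter_eq_self.2]
            · simp
            · rintro b hb rfl; exact h3 hb
            · intro b hb; simp [Multiset.eq_of_mem_replicate hb]
        right_inv := by
          rintro ⟨M, hM⟩
          apply Subtype.ext
          simp only
          rw [← Multiset.filter_eq]
          exact Multiset.filter_add_not _ _ }
    rw [← e.hasSum_iff]
    have hf : ((fun M : {M : Multiset α // ∀ b ∈ M, b ∈ insert a F} => (M.1.map w).prod) ∘ e)
        = fun p => w a ^ p.1 * (p.2.1.map w).prod := by
      funext p
      simp [e]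
    rw [hf]
    exact hp

/-- Weight. -/
noncomputable def wt (x : ℝ) (q : UTree) : ℝ := x ^ size q

theorem wt_ch {x : ℝ} {q : UTree} (h : ch q ≠ 0) : ((ch q).map (wt x)).prod = wt x q := by
  unfold wt
  rw [size_of_ne h]
  generalize ch q = M
  induction M using Multiset.induction with
  | empty => simp
  | cons a M ih => simp [pow_add, ih]

theorem wt_lt_one {x : ℝ} (hx : 0 ≤ x) (hx1 : x < 1) (q : UTree) : wt x q < 1 :=
  pow_lt_one₀ hx hx1 (by have := size_pos q; omega)

open Classical in
theorem upper {x : ℝ} (hx : 0 ≤ x) (hx1 : x < 1) (F B E : Finset UTree)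
    (hB : ∀ q ∈ B, ch q = 0 ∨ (2 ≤ (ch q).card ∧ ∀ c ∈ ch q, c ∈ F))
    (hE : ∀ q ∈ E, (2 ≤ (ch q).card ∧ ∀ c ∈ ch q, c ∈ F)) (hBE : Disjoint B E) :
    ∑ q ∈ B, wt x q + ∑ q ∈ E, wt x q + 1 + ∑ q ∈ F, wt x q
      ≤ x + ∏ q ∈ F, (1 - wt x q)⁻¹ := by
  have hs := hasSum_multiset (wt x) F (fun a _ => pow_nonneg hx _)
    (fun a _ => wt_lt_one hx hx1 a)
  set B' := B.filter (fun q => ch q ≠ 0) with hB'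
  have h1 : ∑ q ∈ B, wt x q ≤ x + ∑ q ∈ B', wt x q := by
    rw [← Finset.sum_filter_add_sum_filter_not B (fun q => ch q ≠ 0), add_comm]
    gcongr
    have hc : (B.filter (fun q => ¬ ch q ≠ 0)).card ≤ 1 := by
      rw [Finset.card_le_one]
      intro a ha b hb
      simp only [Finset.mem_filter, not_not] at ha hb
      exact ch_inj (ha.2.trans hb.2.symm)
    calc _ ≤ ∑ q ∈ B.filter (fun q => ¬ ch q ≠ 0), x := by
            apply Finset.sum_le_sum
            intro q hq
            simp only [Finset.mem_filter, not_not] at hq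
            unfold wt
            rw [size_eq, if_pos hq.2, pow_one]
      _ = (B.filter (fun q => ¬ ch q ≠ 0)).card * x := by simp
      _ ≤ 1 * x := by gcongr; exact_mod_cast hc
      _ = x := one_mul x
  have key : ∀ q ∈ B' ∪ E, 2 ≤ (ch q).card ∧ ∀ c ∈ ch q, c ∈ F := by
    intro q hq
    rcases Finset.mem_union.1 hq with hq | hq
    · simp only [hB', Finset.mem_filter] at hq
      rcases hB q hq.1 with h | h
      · exact absurd h hq.2
      · exact h
    · exact hE q hq
  have hd : Disjoint B' E := hBE.mono_left (Finset.filter_subset _ _)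
  set M1 : Finset (Multiset UTree) := (B' ∪ E).image ch with hM1
  set M2 : Finset (Multiset UTree) := F.image (fun q => {q}) with hM2
  set M3 : Finset (Multiset UTree) := {0} with hM3
  have hc1 : ∀ M ∈ M1, 2 ≤ M.card ∧ ∀ c ∈ M, c ∈ F := by
    intro M hM
    obtain ⟨q, hq, rfl⟩ := Finset.mem_image.1 hM
    exact key q hq
  have hc2 : ∀ M ∈ M2, M.card = 1 ∧ ∀ c ∈ M, c ∈ F := by
    intro M hM
    obtain ⟨q, hq, rfl⟩ := Finset.mem_image.1 hM
    simp [hq]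
  have hc3 : ∀ M ∈ M3, M.card = 0 ∧ ∀ c ∈ M, c ∈ F := by
    simp [hM3]
  have hd12 : Disjoint M1 M2 := by
    rw [Finset.disjoint_left]
    intro M h h'
    have := hc1 M h; have := hc2 M h'; omega
  have hd123 : Disjoint (M1 ∪ M2) M3 := by
    rw [Finset.disjoint_left]
    intro M h h'
    have := hc3 M h'
    rcases Finset.mem_union.1 h with h | h
    · have := hc1 M h; omega
    · have := hc2 M h; omega
  have hall : ∀ M ∈ M1 ∪ M2 ∪ M3, ∀ c ∈ M, c ∈ F := by
    intro M hM
    simp only [Finset.mem_union] at hM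
    rcases hM with (h | h) | h
    exacts [(hc1 M h).2, (hc2 M h).2, (hc3 M h).2]
  have hle := sum_le_hasSum ((M1 ∪ M2 ∪ M3).subtype (fun M => ∀ a ∈ M, a ∈ F)) (by
      rintro ⟨M, hM⟩ _
      apply Multiset.prod_nonneg
      intro r hr
      obtain ⟨b, hb, rfl⟩ := Multiset.mem_map.1 hr
      exact pow_nonneg hx _) hs
  rw [Finset.sum_subtype_eq_sum_filter (f := fun M : Multiset UTree => (M.map (wt x)).prod),
    Finset.filter_true_of_mem hall,
    Finset.sum_union hd123, Finset.sum_union hd12, hM1, hM2, hM3,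
    Finset.sum_image (fun a _ b _ h => ch_inj h),
    Finset.sum_image (fun a _ b _ h => Multiset.singleton_inj.1 h), Finset.sum_union hd] at hle
  have e1 : ∀ G : Finset UTree, G ⊆ B' ∪ E →
      ∑ q ∈ G, ((ch q).map (wt x)).prod = ∑ q ∈ G, wt x q := by
    intro G hG
    apply Finset.sum_congr rfl
    intro q hq
    apply wt_ch
    intro h
    have := (key q (hG hq)).1
    simp [h] at this
  rw [e1 _ Finset.subset_union_left, e1 _ Finset.subset_union_right] at hle
  simp only [Multiset.map_singleton, Multiset.prod_singleton, Finset.sum_singleton,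
    Multiset.map_zero, Multiset.prod_zero] at hle
  linarith

open Classical in
theorem lower {x T : ℝ} (hx : 0 ≤ x) (hx1 : x < 1) (F : Finset UTree)
    (hF : ∀ q ∈ F, q ∈ HH) (hT : ∀ G : Finset UTree, (∀ q ∈ G, q ∈ HH) → ∑ q ∈ G, wt x q ≤ T) :
    ∏ q ∈ F, (1 - wt x q)⁻¹ ≤ 1 - x + 2 * T := by
  have hs := hasSum_multiset (wt x) F (fun a _ => pow_nonneg hx _)
    (fun a _ => wt_lt_one hx hx1 a)
  refine hasSum_le_of_sum_le hs ?_
  intro s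
  have hsum : ∑ M ∈ s, (M.1.map (wt x)).prod
      = ∑ M ∈ s.image Subtype.val, (M.map (wt x)).prod := by
    rw [Finset.sum_image (fun a _ b _ h => Subtype.ext h)]
  rw [hsum]
  set t := s.image Subtype.val with ht
  have htF : ∀ M ∈ t, ∀ c ∈ M, c ∈ HH := by
    intro M hM c hc
    obtain ⟨M', hM', rfl⟩ := Finset.mem_image.1 hM
    exact hF c (M'.2 c hc)
  rw [← Finset.sum_filter_add_sum_filter_not t (fun M => M.card = 1)]
  obtain ⟨leaf, hleaf, hleafch⟩ := exists_node (M := 0) (by simp) (by simp)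
  have hwl : wt x leaf = x := by
    unfold wt; rw [size_eq, if_pos hleafch, pow_one]
  have hex : ∀ M : Multiset UTree, ∃ q : UTree, M ∈ t → M.card ≠ 1 → q ∈ HH ∧ ch q = M := by
    intro M
    by_cases h : M ∈ t ∧ M.card ≠ 1
    · obtain ⟨q, h1, h2⟩ := exists_node (htF M h.1) h.2
      exact ⟨q, fun _ _ => ⟨h1, h2⟩⟩
    · exact ⟨leaf, fun h1 h2 => absurd ⟨h1, h2⟩ h⟩
  choose nd hnd using hex
  have hS1 : ∑ M ∈ t.filter (fun M => M.card = 1), (M.map (wt x)).prod ≤ T := by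
    have hex1 : ∀ M : Multiset UTree, ∃ q : UTree, M.card = 1 → M = {q} := by
      intro M
      by_cases h : M.card = 1
      · obtain ⟨q, h⟩ := Multiset.card_eq_one.1 h
        exact ⟨q, fun _ => h⟩
      · exact ⟨leaf, fun h' => absurd h' h⟩
    choose g hg using hex1
    have hi : ∀ a ∈ t.filter (fun M => M.card = 1), ∀ b ∈ t.filter (fun M => M.card = 1),
        g a = g b → a = b := by
      intro a ha b hb h
      rw [hg a (Finset.mem_filter.1 ha).2, hg b (Finset.mem_filter.1 hb).2, h]
    calc _ = ∑ M ∈ t.filter (fun M => M.card = 1), wt x (g M) := by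
          apply Finset.sum_congr rfl
          intro M hM
          conv_lhs => rw [hg M (Finset.mem_filter.1 hM).2]
          simp
      _ = ∑ q ∈ (t.filter (fun M => M.card = 1)).image g, wt x q := by
          rw [Finset.sum_image hi]
      _ ≤ T := by
          apply hT
          intro q hq
          obtain ⟨M, hM, rfl⟩ := Finset.mem_image.1 hq
          rw [Finset.mem_filter] at hM
          apply htF M hM.1
          have h := Multiset.mem_singleton_self (g M)
          rwa [← hg M hM.2] at h
  have hS2 : ∑ M ∈ t.filter (fun M => ¬ M.card = 1), (M.map (wt x)).prod ≤ 1 - x + T := by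
    set u := (t.filter (fun M => ¬ M.card = 1)).erase 0 with hu
    have hu' : ∀ M ∈ u, nd M ∈ HH ∧ ch (nd M) = M ∧ M ≠ 0 := by
      intro M hM
      simp only [hu, Finset.mem_erase, Finset.mem_filter] at hM
      have := hnd M hM.2.1 hM.2.2
      exact ⟨this.1, this.2, hM.1⟩
    have hle : ∑ M ∈ t.filter (fun M => ¬ M.card = 1), (M.map (wt x)).prod
        ≤ 1 + ∑ M ∈ u, (M.map (wt x)).prod := by
      by_cases h0 : (0 : Multiset UTree) ∈ t.filter (fun M => ¬ M.card = 1)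
      · rw [← Finset.add_sum_erase _ _ h0]; simp [hu]
      · rw [hu, Finset.erase_eq_of_notMem h0]; linarith
    have hi : ∀ a ∈ u, ∀ b ∈ u, nd a = nd b → a = b := by
      intro a ha b hb h
      rw [← (hu' a ha).2.1, ← (hu' b hb).2.1, h]
    have he : ∑ M ∈ u, (M.map (wt x)).prod = ∑ q ∈ u.image nd, wt x q := by
      rw [Finset.sum_image hi]
      apply Finset.sum_congr rfl
      intro M hM
      have := hu' M hM
      rw [← wt_ch (by rw [this.2.1]; exact this.2.2), this.2.1]
    have hnl : leaf ∉ u.image nd := by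
      intro h
      obtain ⟨M, hM, h⟩ := Finset.mem_image.1 h
      have := hu' M hM
      rw [h, hleafch] at this
      exact this.2.2 this.2.1.symm
    have := hT (insert leaf (u.image nd)) (by
      intro q hq
      rcases Finset.mem_insert.1 hq with rfl | hq
      · exact hleaf
      · obtain ⟨M, hM, rfl⟩ := Finset.mem_image.1 hq
        exact (hu' M hM).1)
    rw [Finset.sum_insert hnl, hwl] at this
    linarith
  linarith

open Classical in
/-- Members of `D` (inside `HH`) of size at most `n`. -/
noncomputable def upto (D : Set UTree) (n : ℕ) : Finset UTree :=
  (finite_le n).toFinset.filter (fun q => q ∈ D)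

open Classical in
/-- Number of members of `D` (inside `HH`) of size `n`. -/
noncomputable def count (D : Set UTree) (n : ℕ) : ℕ :=
  ((upto D n).filter (fun q => size q = n)).card

theorem mem_upto {D : Set UTree} {n : ℕ} {q : UTree} :
    q ∈ upto D n ↔ (q ∈ HH ∧ size q ≤ n) ∧ q ∈ D := by
  simp [upto]

open Classical in
theorem filter_upto {D : Set UTree} {n N : ℕ} (h : n ≤ N) :
    (upto D N).filter (fun q => size q = n) = (upto D n).filter (fun q => size q = n) := by
  ext q
  simp only [Finset.mem_filter, mem_upto]
  constructor
  · rintro ⟨⟨⟨a, b⟩, c⟩, d⟩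
    exact ⟨⟨⟨a, d.le⟩, c⟩, d⟩
  · rintro ⟨⟨⟨a, b⟩, c⟩, d⟩
    exact ⟨⟨⟨a, b.trans h⟩, c⟩, d⟩

theorem sum_upto (D : Set UTree) (N : ℕ) (f : ℕ → ℝ) :
    ∑ q ∈ upto D N, f (size q) = ∑ n ∈ Finset.range (N + 1), count D n * f n := by
  classical
  rw [← Finset.sum_fiberwise_of_maps_to (t := Finset.range (N + 1)) (g := size)]
  · apply Finset.sum_congr rfl
    intro n hn
    rw [filter_upto (by simp at hn; omega), count, ← nsmul_eq_mul]
    apply Finset.sum_eq_card_nsmul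
    intro q hq
    rw [(Finset.mem_filter.1 hq).2]
  · intro q hq
    have := (mem_upto.1 hq).1.2
    simp; omega

theorem prod_upto (D : Set UTree) (N : ℕ) (f : ℕ → ℝ) :
    ∏ q ∈ upto D N, f (size q) = ∏ n ∈ Finset.range (N + 1), f n ^ count D n := by
  classical
  rw [← Finset.prod_fiberwise_of_maps_to (t := Finset.range (N + 1)) (g := size)]
  · apply Finset.prod_congr rfl
    intro n hn
    rw [filter_upto (by simp at hn; omega), count]
    apply Finset.prod_eq_pow_card
    intro q hq
    rw [(Finset.mem_filter.1 hq).2]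
  · intro q hq
    have := (mem_upto.1 hq).1.2
    simp; omega

theorem count_le (D : Set UTree) (n : ℕ) : count D n ≤ count HH n := by
  classical
  apply Finset.card_le_card
  intro q
  simp only [Finset.mem_filter, mem_upto]
  tauto

theorem count_zero (D : Set UTree) : count D 0 = 0 := by
  classical
  rw [count, Finset.card_eq_zero]
  apply Finset.filter_false_of_mem
  intro q _
  have := size_pos q
  omega

/-- Avoiding hierarchies. -/
def AV (S : RTree) : Set UTree := cls (fun t => t.IsHierarchy ∧ t.Avoids S)

theorem AV_sub (S : RTree) {q : UTree} (h : q ∈ AV S) : q ∈ HH := by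
  obtain ⟨t, ht, rfl⟩ := h
  exact ⟨t, ht.1, rfl⟩

theorem AV_ch {S : RTree} {q : UTree} (h : q ∈ AV S) : ∀ c ∈ ch q, c ∈ AV S := by
  obtain ⟨⟨l⟩, ⟨ht, ha⟩, rfl⟩ := h
  intro c hc
  change c ∈ preCh (.node l) at hc
  simp only [preCh, Multiset.mem_coe, List.mem_map] at hc
  obtain ⟨a, hal, rfl⟩ := hc
  cases ht with
  | node h1 h2 => exact ⟨a, ⟨h2 a hal, fun s hs => ha s (.child hal hs)⟩, rfl⟩

theorem S_notMem {S : RTree} : (Quotient.mk RTree.isoSetoid S) ∉ AV S := by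
  rintro ⟨t, ⟨ht, ha⟩, h⟩
  exact ha t (.refl t) (Quotient.exact h)

theorem leaves_le_of_subtree {s t : RTree} (h : s.SubtreeOf t) : s.leaves ≤ t.leaves := by
  induction h with
  | refl => exact le_rfl
  | @child c l hc _ ih =>
    rw [RTree.leaves_node, if_neg (by rintro rfl; simp at hc)]
    exact ih.trans (List.single_le_sum (by simp) _ (List.mem_map.2 ⟨c, hc, rfl⟩))

theorem mem_AV_of_size {S : RTree} {q : UTree} (hq : q ∈ HH) (h : size q < S.leaves) :
    q ∈ AV S := by
  obtain ⟨t, ht, rfl⟩ := hq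
  refine ⟨t, ⟨ht, fun s hs hi => ?_⟩, rfl⟩
  have h1 := leaves_le_of_subtree hs
  have h2 := RTree.leaves_iso _ _ hi
  change t.leaves < _ at h
  omega

theorem hierarchyCount_eq (n : ℕ) : hierarchyCount n = count HH n := by
  classical
  rw [hierarchyCount, card_quot (fun t => t.IsHierarchy ∧ t.leaves = n), count,
    ← Set.ncard_coe_finset]
  congr 1
  ext q
  simp only [Finset.coe_filter, mem_upto]
  constructor
  · rintro ⟨t, ⟨h1, h2⟩, rfl⟩
    have : Quotient.mk RTree.isoSetoid t ∈ HH := ⟨t, h1, rfl⟩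
    exact ⟨⟨⟨this, h2.le⟩, this⟩, h2⟩
  · rintro ⟨⟨_, t, h1, rfl⟩, h2⟩
    exact ⟨t, ⟨h1, h2⟩, rfl⟩

theorem avoidCount_eq (S : RTree) (n : ℕ) : avoidCount S n = count (AV S) n := by
  classical
  rw [avoidCount, card_quot (fun t => t.IsHierarchy ∧ t.leaves = n ∧ t.Avoids S), count,
    ← Set.ncard_coe_finset]
  congr 1
  ext q
  simp only [Finset.coe_filter, mem_upto]
  constructor
  · rintro ⟨t, ⟨h1, h2, h3⟩, rfl⟩
    have : Quotient.mk RTree.isoSetoid t ∈ AV S := ⟨t, ⟨h1, h3⟩, rfl⟩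
    exact ⟨⟨⟨AV_sub S this, h2.le⟩, this⟩, h2⟩
  · rintro ⟨⟨_, t, h1, rfl⟩, h2⟩
    exact ⟨t, ⟨h1.1, h2, h1.2⟩, rfl⟩

theorem count_HH_pos {n : ℕ} (hn : 1 ≤ n) : 1 ≤ count HH n := by
  classical
  obtain ⟨leaf, hleaf, hleafch⟩ := exists_node (M := 0) (by simp) (by simp)
  have hl : size leaf = 1 := by rw [size_eq, if_pos hleafch]
  have : ∃ q ∈ HH, size q = n := by
    by_cases h1 : n = 1
    · exact ⟨leaf, hleaf, by rw [hl, h1]⟩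
    · obtain ⟨q, hq, hc⟩ := exists_node (M := Multiset.replicate n leaf)
        (fun c hc => by rw [Multiset.eq_of_mem_replicate hc]; exact hleaf) (by simpa using h1)
      refine ⟨q, hq, ?_⟩
      rw [size_of_ne (by rw [hc]; intro h; have := congrArg Multiset.card h; simp at this; omega),
        hc]
      simp [hl]
  obtain ⟨q, hq, hs⟩ := this
  exact Finset.card_pos.2 ⟨q, by simp [mem_upto, hq, hs]⟩

theorem count_AV_lt {S : RTree} (hS : S.IsHierarchy) :
    count (AV S) S.leaves + 1 ≤ count HH S.leaves := by
  classical
  apply Finset.card_lt_card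
  rw [Finset.ssubset_iff_of_subset]
  · refine ⟨Quotient.mk RTree.isoSetoid S, ?_, ?_⟩
    · have : Quotient.mk RTree.isoSetoid S ∈ HH := ⟨S, hS, rfl⟩
      have h2 : size (Quotient.mk RTree.isoSetoid S) = S.leaves := rfl
      simp [mem_upto, this, h2]
    · simp [mem_upto, S_notMem]
  · intro q
    simp only [Finset.mem_filter, mem_upto]
    tauto

theorem count_mul (a b : ℕ) : count HH a * count HH b ≤ 2 * count HH (a + b) := by
  classical
  have hex : ∀ p : UTree × UTree, ∃ q, p.1 ∈ HH → p.2 ∈ HH → q ∈ HH ∧ ch q = {p.1, p.2} := by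
    intro p
    by_cases h : p.1 ∈ HH ∧ p.2 ∈ HH
    · obtain ⟨q, h1, h2⟩ := exists_node (M := {p.1, p.2}) (by simp [h]) (by simp)
      exact ⟨q, fun _ _ => ⟨h1, h2⟩⟩
    · exact ⟨p.1, fun h1 h2 => absurd ⟨h1, h2⟩ h⟩
  choose g hg using hex
  have hmem : ∀ (n : ℕ) (q : UTree), q ∈ (upto HH n).filter (fun q => size q = n) ↔
      q ∈ HH ∧ size q = n := by
    intro n q
    simp only [Finset.mem_filter, mem_upto]
    constructor
    · tauto
    · rintro ⟨h, h'⟩; exact ⟨⟨⟨h, h'.le⟩, h⟩, h'⟩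
  unfold count
  rw [← Finset.card_product]
  refine Finset.card_le_mul_card_image_of_maps_to (f := g) ?_ 2 ?_
  · rintro p hp
    rw [Finset.mem_product, hmem, hmem] at hp
    have := hg p hp.1.1 hp.2.1
    rw [hmem]
    refine ⟨this.1, ?_⟩
    rw [size_of_ne (by rw [this.2]; simp), this.2]
    simp [hp.1.2, hp.2.2]
  · intro q hq
    by_cases hne : ((((upto HH a).filter (fun q => size q = a)) ×ˢ
        ((upto HH b).filter (fun q => size q = b))).filter (fun p => g p = q)).Nonempty
    · obtain ⟨p, hp⟩ := hne
      refine (Finset.card_le_card (t := {p, p.swap}) ?_).trans Finset.card_le_two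
      intro p' hp'
      rw [Finset.mem_filter, Finset.mem_product, hmem, hmem] at hp hp'
      have h1 := hg p hp.1.1.1 hp.1.2.1
      have h2 := hg p' hp'.1.1.1 hp'.1.2.1
      rw [hp.2] at h1
      rw [hp'.2] at h2
      have h3 := h2.2.symm.trans h1.2
      obtain ⟨u, v⟩ := p
      obtain ⟨u', v'⟩ := p'
      simp only [Multiset.insert_eq_cons] at h3
      rw [Multiset.cons_eq_cons] at h3
      simp only [Finset.mem_insert, Finset.mem_singleton, Prod.swap, Prod.mk.injEq]
      rcases h3 with ⟨h, h'⟩ | ⟨h, cs, h', h''⟩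
      · left; exact ⟨h, by simpa using h'⟩
      · right
        rw [Multiset.singleton_eq_cons_iff] at h' h''
        exact ⟨h''.1.symm, h'.1⟩
    · rw [Finset.not_nonempty_iff_eq_empty] at hne
      rw [hne]; simp

theorem upper_H {x : ℝ} (hx : 0 ≤ x) (hx1 : x < 1) (N : ℕ) :
    ∑ n ∈ Finset.range (N + 2), count HH n * x ^ n + 1 +
      ∑ n ∈ Finset.range (N + 1), count HH n * x ^ n
      ≤ x + ∏ n ∈ Finset.range (N + 1), ((1 - x ^ n)⁻¹) ^ count HH n := by
  have := upper hx hx1 (upto HH N) (upto HH (N + 1)) ∅ (by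
    intro q hq
    rw [mem_upto] at hq
    have h := HH_ch hq.2
    rcases h.1 with h1 | h1
    · exact Or.inl h1
    · refine Or.inr ⟨h1, fun c hc => ?_⟩
      have := size_lt_of_mem hc h1
      rw [mem_upto]
      exact ⟨⟨h.2 c hc, by omega⟩, h.2 c hc⟩) (by simp) (by simp)
  unfold wt at this
  rw [sum_upto HH N (fun n => x ^ n), sum_upto HH (N + 1) (fun n => x ^ n),
    prod_upto HH N (fun n => (1 - x ^ n)⁻¹)] at this
  simpa using this

theorem upper_A {x : ℝ} (hx : 0 ≤ x) (hx1 : x < 1) (N : ℕ) (S : RTree) (hS : S.IsHierarchy)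
    (h2 : 2 ≤ S.leaves) (hN : S.leaves ≤ N + 1) :
    ∑ n ∈ Finset.range (N + 2), count (AV S) n * x ^ n + x ^ S.leaves + 1 +
      ∑ n ∈ Finset.range (N + 1), count (AV S) n * x ^ n
      ≤ x + ∏ n ∈ Finset.range (N + 1), ((1 - x ^ n)⁻¹) ^ count (AV S) n := by
  have hSH : Quotient.mk RTree.isoSetoid S ∈ HH := ⟨S, hS, rfl⟩
  have hSs : size (Quotient.mk RTree.isoSetoid S) = S.leaves := rfl
  have := upper hx hx1 (upto (AV S) N) (upto (AV S) (N + 1)) {Quotient.mk RTree.isoSetoid S} (by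
    intro q hq
    rw [mem_upto] at hq
    have h := HH_ch hq.1.1
    rcases h.1 with h1 | h1
    · exact Or.inl h1
    · refine Or.inr ⟨h1, fun c hc => ?_⟩
      have := size_lt_of_mem hc h1
      rw [mem_upto]
      exact ⟨⟨h.2 c hc, by omega⟩, AV_ch hq.2 c hc⟩) (by
    intro q hq
    rw [Finset.mem_singleton] at hq
    subst hq
    have h := HH_ch hSH
    rcases h.1 with h1 | h1
    · rw [size_eq, if_pos h1] at hSs; omega
    · refine ⟨h1, fun c hc => ?_⟩
      have := size_lt_of_mem hc h1
      rw [mem_upto]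
      exact ⟨⟨h.2 c hc, by omega⟩, mem_AV_of_size (h.2 c hc) (by omega)⟩) (by
    rw [Finset.disjoint_singleton_right, mem_upto]
    exact fun h => S_notMem h.2)
  unfold wt at this
  rw [sum_upto (AV S) N (fun n => x ^ n), sum_upto (AV S) (N + 1) (fun n => x ^ n),
    prod_upto (AV S) N (fun n => (1 - x ^ n)⁻¹), Finset.sum_singleton, hSs] at this
  exact this

theorem lower_H {x T : ℝ} (hx : 0 ≤ x) (hx1 : x < 1)
    (hT : ∀ N, ∑ n ∈ Finset.range (N + 1), count HH n * x ^ n ≤ T) (N : ℕ) :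
    ∏ n ∈ Finset.range (N + 1), ((1 - x ^ n)⁻¹) ^ count HH n ≤ 1 - x + 2 * T := by
  rw [← prod_upto HH N (fun n => (1 - x ^ n)⁻¹)]
  refine lower hx hx1 _ (fun q hq => (mem_upto.1 hq).2) ?_
  intro G hG
  refine le_trans ?_ (hT (G.sup size))
  rw [← sum_upto HH _ (fun n => x ^ n)]
  refine Finset.sum_le_sum_of_subset_of_nonneg ?_ (fun _ _ _ => pow_nonneg hx _)
  intro q hq
  rw [mem_upto]
  exact ⟨⟨hG q hq, Finset.le_sup hq⟩, hG q hq⟩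

end UTree

namespace HSeq

open Filter Topology

/-- `-log (1-u) - u`. -/
noncomputable def g (u : ℝ) : ℝ := -Real.log (1 - u) - u

theorem g_nonneg {u : ℝ} (h1 : u < 1) : 0 ≤ g u := by
  have := Real.log_le_sub_one_of_pos (show 0 < 1 - u by linarith)
  unfold g; linarith

theorem g_le {u : ℝ} (h1 : u < 1) : g u ≤ u ^ 2 / (1 - u) := by
  have hp : 0 < 1 - u := by linarith
  have h := Real.one_sub_inv_le_log_of_pos hp
  have e : u ^ 2 / (1 - u) = (1 - u)⁻¹ - 1 - u := by field_simp; ring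
  unfold g; rw [e]; linarith

theorem g_le' {x u : ℝ} (h0 : 0 ≤ u) (hux : u ≤ x) (h1 : x < 1) : g u ≤ u ^ 2 / (1 - x) := by
  refine (g_le (hux.trans_lt h1)).trans ?_
  gcongr

theorem exp_g {u : ℝ} (h1 : u < 1) : Real.exp (u + g u) = (1 - u)⁻¹ := by
  have hp : 0 < 1 - u := by linarith
  unfold g
  rw [show u + (-Real.log (1 - u) - u) = -Real.log (1 - u) by ring, Real.exp_neg, Real.exp_log hp]

theorem prod_eq (c : ℕ → ℕ) (c0 : c 0 = 0) {x : ℝ} (hx : 0 ≤ x) (hx1 : x < 1) (N : ℕ) :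
    ∏ n ∈ Finset.range N, ((1 - x ^ n)⁻¹) ^ c n =
      Real.exp (∑ n ∈ Finset.range N, c n * x ^ n + ∑ n ∈ Finset.range N, c n * g (x ^ n)) := by
  rw [← Finset.sum_add_distrib, Real.exp_sum]
  apply Finset.prod_congr rfl
  intro n _
  by_cases hn : n = 0
  · subst hn; simp [c0]
  · rw [← exp_g (pow_lt_one₀ hx hx1 hn), ← Real.exp_nat_mul]
    congr 1; ring

theorem pow_le_self' {x : ℝ} (hx : 0 ≤ x) (hx1 : x < 1) {n : ℕ} (hn : n ≠ 0) : x ^ n ≤ x :=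
  pow_le_of_le_one hx hx1.le hn

theorem bound (h : ℕ → ℕ) (h0 : h 0 = 0)
    (uH : ∀ x : ℝ, 0 ≤ x → x < 1 → ∀ N : ℕ, ∑ n ∈ Finset.range (N + 2), h n * x ^ n + 1 +
      ∑ n ∈ Finset.range (N + 1), h n * x ^ n
      ≤ x + ∏ n ∈ Finset.range (N + 1), ((1 - x ^ n)⁻¹) ^ h n) (N : ℕ) :
    ∑ n ∈ Finset.range (N + 1), h n * (1 / 20 : ℝ) ^ n ≤ 1 / 10 := by
  induction N with
  | zero => simp [h0]
  | succ N ih =>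
    have h1 := uH (1 / 20) (by norm_num) (by norm_num) N
    rw [prod_eq h h0 (by norm_num) (by norm_num)] at h1
    have h2 : ∑ n ∈ Finset.range (N + 1), h n * g ((1 / 20 : ℝ) ^ n) ≤
        1 / 19 * ∑ n ∈ Finset.range (N + 1), h n * (1 / 20 : ℝ) ^ n := by
      rw [Finset.mul_sum]
      apply Finset.sum_le_sum
      intro n _
      by_cases hn : n = 0
      · subst hn; simp [h0]
      · have hu : (1 / 20 : ℝ) ^ n ≤ 1 / 20 := pow_le_self' (by norm_num) (by norm_num) hn
        have hu0 : (0 : ℝ) ≤ (1 / 20 : ℝ) ^ n := by positivity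
        have h3 := g_le' hu0 hu (by norm_num)
        have h4 : ((1 / 20 : ℝ) ^ n) ^ 2 / (1 - 1 / 20) ≤ 1 / 19 * (1 / 20 : ℝ) ^ n := by
          rw [div_le_iff₀ (by norm_num)]
          nlinarith
        have h5 : (0 : ℝ) ≤ h n := by positivity
        nlinarith
    have ht : 0 ≤ ∑ n ∈ Finset.range (N + 1), h n * (1 / 20 : ℝ) ^ n :=
      Finset.sum_nonneg fun n _ => by positivity
    set t := ∑ n ∈ Finset.range (N + 1), h n * (1 / 20 : ℝ) ^ n
    have h3 : Real.exp (t + ∑ n ∈ Finset.range (N + 1), h n * g ((1 / 20 : ℝ) ^ n)) ≤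
        Real.exp (20 / 19 * t) := by
      apply Real.exp_le_exp.2; linarith
    have h4 := (abs_le.1 (Real.abs_exp_sub_one_sub_id_le
      (show |20 / 19 * t| ≤ 1 by rw [abs_of_nonneg (by positivity)]; linarith))).2
    change ∑ n ∈ Finset.range (N + 2), h n * (1 / 20 : ℝ) ^ n ≤ 1 / 10
    nlinarith

theorem main_seq (h a : ℕ → ℕ) (m : ℕ) (hm : 2 ≤ m)
    (h0 : h 0 = 0) (hpos : ∀ n, 1 ≤ n → 1 ≤ h n) (hmul : ∀ i j, h i * h j ≤ 2 * h (i + j))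
    (hle : ∀ n, a n ≤ h n) (ham : a m + 1 ≤ h m)
    (uH : ∀ x : ℝ, 0 ≤ x → x < 1 → ∀ N : ℕ, ∑ n ∈ Finset.range (N + 2), h n * x ^ n + 1 +
      ∑ n ∈ Finset.range (N + 1), h n * x ^ n
      ≤ x + ∏ n ∈ Finset.range (N + 1), ((1 - x ^ n)⁻¹) ^ h n)
    (uA : ∀ x : ℝ, 0 ≤ x → x < 1 → ∀ N : ℕ, m ≤ N + 1 →
      ∑ n ∈ Finset.range (N + 2), a n * x ^ n + x ^ m + 1 +
      ∑ n ∈ Finset.range (N + 1), a n * x ^ n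
      ≤ x + ∏ n ∈ Finset.range (N + 1), ((1 - x ^ n)⁻¹) ^ a n)
    (lH : ∀ x T : ℝ, 0 ≤ x → x < 1 → (∀ N, ∑ n ∈ Finset.range (N + 1), h n * x ^ n ≤ T) →
      ∀ N : ℕ, ∏ n ∈ Finset.range (N + 1), ((1 - x ^ n)⁻¹) ^ h n ≤ 1 - x + 2 * T) :
    Tendsto (fun n : ℕ => (a n : ℝ) / (h n : ℝ)) atTop (𝓝 0) := by
  have a0 : a 0 = 0 := by have := hle 0; omega
  have hposR : ∀ n, n ≠ 0 → (0 : ℝ) < h n := fun n hn => by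
    have := hpos n (by omega); exact_mod_cast this
  have hexp : ∀ n, (h n : ℝ) ≤ 20 ^ n := by
    intro n
    have h1 := bound h h0 uH n
    have h2 : h n * (1 / 20 : ℝ) ^ n ≤ 1 / 10 := le_trans
      (Finset.single_le_sum (f := fun n => h n * (1 / 20 : ℝ) ^ n)
        (fun n _ => by positivity) (by simp)) h1
    rw [one_div, inv_pow, ← div_eq_mul_inv, div_le_iff₀ (by positivity)] at h2
    have : (0 : ℝ) < 20 ^ n := by positivity
    linarith
  let u : ℕ → ℝ := fun n => -Real.log (h n / 2)
  have u0 : u 0 = 0 := by simp [u, h0]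
  have hsub : Subadditive u := by
    intro i j
    by_cases hi : i = 0
    · subst hi; simp [u0]
    by_cases hj : j = 0
    · subst hj; simp [u0]
    have h1 := hposR i hi
    have h2 := hposR j hj
    have h3 : (h i : ℝ) * h j ≤ 2 * h (i + j) := by exact_mod_cast hmul i j
    have h4 : Real.log (h i / 2) + Real.log (h j / 2) ≤ Real.log (h (i + j) / 2) := by
      rw [← Real.log_mul (by positivity) (by positivity)]
      apply Real.log_le_log (by positivity)
      linarith
    simp only [u]; linarith
  have hbdd : BddBelow (Set.range fun n => u n / n) := by
    refine ⟨-Real.log 20, ?_⟩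
    rintro _ ⟨n, rfl⟩
    by_cases hn : n = 0
    · subst hn
      simp [u0]
      exact Real.log_nonneg (by norm_num)
    · have hn' : (0 : ℝ) < n := by positivity
      simp only
      rw [le_div_iff₀ hn']
      have h1 := hposR n hn
      have h2 : Real.log (h n / 2) ≤ Real.log (20 ^ n) := by
        apply Real.log_le_log (by positivity)
        have := hexp n; linarith
      rw [Real.log_pow] at h2
      simp only [u]; linarith
  set ρ := Real.exp hsub.lim with hρ
  have ρpos : 0 < ρ := Real.exp_pos _
  have hup : ∀ n, h n * ρ ^ n ≤ 2 := by
    intro n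
    by_cases hn : n = 0
    · subst hn; simp [h0]
    · have h1 := hposR n hn
      have h2 := hsub.lim_le_div hbdd hn
      rw [le_div_iff₀ (by positivity)] at h2
      have h3 : ρ ^ n ≤ (h n / 2 : ℝ)⁻¹ := by
        rw [hρ, ← Real.exp_nat_mul, ← Real.exp_log (show 0 < (h n / 2 : ℝ)⁻¹ by positivity),
          Real.log_inv]
        apply Real.exp_le_exp.2
        simp only [u] at h2; linarith
      calc h n * ρ ^ n ≤ h n * (h n / 2 : ℝ)⁻¹ := by gcongr
        _ = 2 := by field_simp
  have hlow : ∀ r, ρ < r → ∀ᶠ n in atTop, 2 ≤ h n * r ^ n := by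
    intro r hr
    have hr0 : 0 < r := ρpos.trans hr
    have h1 : hsub.lim < Real.log r := by
      rw [Real.lt_log_iff_exp_lt hr0]; exact hr
    filter_upwards [(hsub.tendsto_lim hbdd).eventually_lt_const h1, eventually_ne_atTop 0]
      with n hn hn0
    have h2 := hposR n hn0
    rw [div_lt_iff₀ (by positivity)] at hn
    have h3 : (h n / 2 : ℝ)⁻¹ ≤ r ^ n := by
      rw [← Real.exp_log (show 0 < (h n / 2 : ℝ)⁻¹ by positivity), Real.log_inv,
        ← Real.exp_log (show 0 < r ^ n by positivity), Real.log_pow]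
      apply Real.exp_le_exp.2
      simp only [u] at hn; linarith
    calc 2 = h n * (h n / 2 : ℝ)⁻¹ := by field_simp
      _ ≤ _ := by gcongr
  have hsum : ∀ z, 0 ≤ z → z < ρ → Summable fun n => h n * z ^ n := by
    intro z hz hzρ
    refine Summable.of_nonneg_of_le (fun n => by positivity) (fun n => ?_)
      ((summable_geometric_of_lt_one (r := z / ρ) (by positivity)
        ((div_lt_one ρpos).2 hzρ)).mul_left 2)
    calc h n * z ^ n = (h n * ρ ^ n) * (z / ρ) ^ n := by rw [div_pow]; field_simp
      _ ≤ 2 * (z / ρ) ^ n := by gcongr; exact hup n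
  have hgle : ∀ x r : ℝ, 0 ≤ x → x ≤ r → r < 1 → ∀ n,
      h n * g (x ^ n) ≤ (h n * (r ^ 2) ^ n) / (1 - r) := by
    intro x r hx hxr hr n
    by_cases hn : n = 0
    · subst hn; simp [h0]
    · have hr0 : 0 ≤ r := hx.trans hxr
      have h1 : x ^ n ≤ r ^ n := by gcongr
      have h2 := g_le' (by positivity) (h1.trans (pow_le_self' hr0 hr hn)) hr
      rw [mul_div_assoc]
      gcongr
      refine h2.trans ?_
      have : 0 < 1 - r := by linarith
      rw [pow_right_comm r 2 n]
      gcongr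
  have hgnn : ∀ x : ℝ, 0 ≤ x → x < 1 → ∀ n, 0 ≤ h n * g (x ^ n) := by
    intro x hx hx1 n
    by_cases hn : n = 0
    · subst hn; simp [h0]
    · have := g_nonneg (pow_lt_one₀ hx hx1 hn)
      positivity
  have hgsum : ∀ x : ℝ, 0 ≤ x → x < 1 → x ^ 2 < ρ → Summable fun n => h n * g (x ^ n) := by
    intro x hx hx1 hx2
    exact Summable.of_nonneg_of_le (hgnn x hx hx1) (hgle x x hx le_rfl hx1)
      ((hsum (x ^ 2) (by positivity) hx2).div_const _)
  let φ : ℝ → ℝ := fun x => ∑' n, h n * g (x ^ n)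
  have φnn : ∀ x : ℝ, 0 ≤ x → x < 1 → 0 ≤ φ x := fun x hx hx1 => tsum_nonneg (hgnn x hx hx1)
  let H : ℝ → ℝ := fun x => ∑' n, h n * x ^ n
  have hHpart : ∀ x, 0 ≤ x → x < ρ → ∀ N, ∑ n ∈ Finset.range N, h n * x ^ n ≤ H x := by
    intro x hx hxρ N
    exact (hsum x hx hxρ).sum_le_tsum _ (fun n _ => by positivity)
  have hfun : ∀ x, 0 ≤ x → x < ρ → x < 1 → Real.exp (H x + φ x) ≤ 1 - x + 2 * H x := by
    intro x hx hxρ hx1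
    have h1 := fun N => lH x (H x) hx hx1 (fun N => hHpart x hx hxρ _) N
    have hs2 : Summable fun n => h n * g (x ^ n) := hgsum x hx hx1 (by nlinarith)
    have t1 := ((hsum x hx hxρ).hasSum.tendsto_sum_nat.add hs2.hasSum.tendsto_sum_nat)
    have t2 := (Real.continuous_exp.tendsto _).comp ((tendsto_add_atTop_iff_nat 1).2 t1)
    refine le_of_tendsto t2 (Eventually.of_forall fun N => ?_)
    have := h1 N
    rw [prod_eq h h0 hx hx1] at this
    exact this
  have hHnn : ∀ x, 0 ≤ x → 0 ≤ H x := fun x hx => tsum_nonneg fun n => by positivity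
  have hH2 : ∀ x, 0 ≤ x → x < ρ → x < 1 → H x ≤ 2 ∧ Real.exp (H x) ≤ 5 := by
    intro x hx hxρ hx1
    have h1 := hfun x hx hxρ hx1
    have h2 : Real.exp (H x) ≤ Real.exp (H x + φ x) :=
      Real.exp_le_exp.2 (by linarith [φnn x hx hx1])
    have h3 := Real.quadratic_le_exp_of_nonneg (hHnn x hx)
    have h4 : H x ≤ 2 := by
      by_contra hc
      push Not at hc
      nlinarith
    exact ⟨h4, by linarith⟩
  have ρlt : ρ < 1 := by
    by_contra hc
    push Not at hc
    have h1 := (hH2 (9 / 10) (by norm_num) (by linarith) (by norm_num)).1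
    have h2 := hHpart (9 / 10) (by norm_num) (by linarith) 4
    simp only [Finset.sum_range_succ, Finset.sum_range_zero] at h2
    have e1 : (1 : ℝ) ≤ h 1 := by exact_mod_cast hpos 1 (by norm_num)
    have e2 : (1 : ℝ) ≤ h 2 := by exact_mod_cast hpos 2 (by norm_num)
    have e3 : (1 : ℝ) ≤ h 3 := by exact_mod_cast hpos 3 (by norm_num)
    rw [h0] at h2
    norm_num at h2
    linarith
  obtain ⟨r, hr1, hr2⟩ := exists_between (show ρ < Real.sqrt ρ from
    Real.lt_sqrt_of_sq_lt (by nlinarith))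
  have r0 : 0 < r := ρpos.trans hr1
  have rsq : r ^ 2 < ρ := (Real.lt_sqrt r0.le).1 hr2
  have r1 : r < 1 := by
    by_contra hc
    push Not at hc
    nlinarith
  have φcont : ContinuousOn φ (Set.Icc 0 r) := by
    refine continuousOn_tsum (u := fun n => (h n * (r ^ 2) ^ n) / (1 - r)) (fun n => ?_)
      ((hsum (r ^ 2) (by positivity) rsq).div_const _) (fun n x hx => ?_)
    · by_cases hn : n = 0
      · subst hn; simp [h0]; exact continuousOn_const
      · unfold g
        refine continuousOn_const.mul (ContinuousOn.sub (ContinuousOn.neg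
          (ContinuousOn.log (by fun_prop) ?_)) (by fun_prop))
        intro x hx
        have := pow_lt_one₀ hx.1 (hx.2.trans_lt r1) hn
        linarith
    · rw [Real.norm_of_nonneg (hgnn x hx.1 (hx.2.trans_lt r1) n)]
      exact hgle x r hx.1 hx.2 r1 n
  have φat : ContinuousAt φ ρ := φcont.continuousAt (Icc_mem_nhds ρpos hr1)
  let p : ℝ → ℝ := fun x => ∑ n ∈ Finset.range (m + 1), h n * x ^ n
  have pcont : Continuous p := by fun_prop
  have tf : Tendsto (Prod.fst : ℝ × ℝ → ℝ) (𝓝[<] ρ ×ˢ 𝓝[>] ρ) (𝓝 ρ) :=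
    tendsto_fst.mono_right nhdsWithin_le_nhds
  have ts : Tendsto (Prod.snd : ℝ × ℝ → ℝ) (𝓝[<] ρ ×ˢ 𝓝[>] ρ) (𝓝 ρ) :=
    tendsto_snd.mono_right nhdsWithin_le_nhds
  have Eat : ContinuousAt (fun x => Real.exp (φ x)) ρ := φat.rexp
  have lim1 : Tendsto (fun q : ℝ × ℝ => 5 * |Real.exp (φ q.2) - Real.exp (φ q.1)| -
      (q.2 ^ m - (q.2 - q.1))) (𝓝[<] ρ ×ˢ 𝓝[>] ρ)
      (𝓝 (5 * |Real.exp (φ ρ) - Real.exp (φ ρ)| - (ρ ^ m - (ρ - ρ)))) :=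
    ((((Eat.tendsto.comp ts).sub (Eat.tendsto.comp tf)).abs).const_mul 5).sub
      ((ts.pow m).sub (ts.sub tf))
  have lim2 : Tendsto (fun q : ℝ × ℝ => p q.2 - p q.1 - q.2 ^ m) (𝓝[<] ρ ×ˢ 𝓝[>] ρ)
      (𝓝 (p ρ - p ρ - ρ ^ m)) :=
    (((pcont.tendsto ρ).comp ts).sub ((pcont.tendsto ρ).comp tf)).sub (ts.pow m)
  have ρm : 0 < ρ ^ m := by positivity
  have ev1 := lim1.eventually_lt_const (show _ < (0 : ℝ) by simp [ρpos])
  have ev2 := lim2.eventually_lt_const (show _ < (0 : ℝ) by simp [ρpos])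
  have ev3 : ∀ᶠ q : ℝ × ℝ in 𝓝[<] ρ ×ˢ 𝓝[>] ρ, q.1 ∈ Set.Ioo 0 ρ :=
    tendsto_fst.eventually (Ioo_mem_nhdsLT ρpos)
  have ev4 : ∀ᶠ q : ℝ × ℝ in 𝓝[<] ρ ×ˢ 𝓝[>] ρ, q.2 ∈ Set.Ioo ρ r :=
    tendsto_snd.eventually (Ioo_mem_nhdsGT hr1)
  obtain ⟨⟨x, z⟩, q1, q2, ⟨x0, xρ⟩, ⟨ρz, zr⟩⟩ := (ev1.and (ev2.and (ev3.and ev4))).exists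
  simp only at q1 q2 x0 xρ ρz zr
  have z0 : 0 < z := ρpos.trans ρz
  have z1 : z < 1 := zr.trans r1
  have x1 : x < 1 := xρ.trans ρlt
  set y := H x with hy
  have hy5 := (hH2 x x0.le xρ x1).2
  have hE1 : 1 ≤ Real.exp (φ z) := Real.one_le_exp (φnn z z0.le z1)
  have keyz : Real.exp y * Real.exp (φ z) ≤ 2 * y + 1 - z + z ^ m := by
    have h1 := hfun x x0.le xρ x1
    rw [Real.exp_add] at h1
    have h2 : Real.exp y * (Real.exp (φ z) - Real.exp (φ x)) ≤
        5 * |Real.exp (φ z) - Real.exp (φ x)| := by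
      calc _ ≤ Real.exp y * |Real.exp (φ z) - Real.exp (φ x)| := by
            gcongr; exact le_abs_self _
        _ ≤ _ := by gcongr
    linarith
  have hAg : ∀ N, ∑ n ∈ Finset.range N, a n * g (z ^ n) ≤ φ z := by
    intro N
    refine le_trans (Finset.sum_le_sum (g := fun n => h n * g (z ^ n)) fun n _ => ?_)
      ((hgsum z z0.le z1 (by nlinarith)).sum_le_tsum _ (fun n _ => hgnn z z0.le z1 n))
    by_cases hn : n = 0
    · subst hn; simp [h0, a0]
    · have := g_nonneg (pow_lt_one₀ z0.le z1 hn)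
      have h2 : (a n : ℝ) ≤ h n := by exact_mod_cast hle n
      exact mul_le_mul_of_nonneg_right h2 this
  have hA : ∀ N, m ≤ N → ∑ n ∈ Finset.range (N + 1), a n * z ^ n ≤ y := by
    intro N hN
    induction N, hN using Nat.le_induction with
    | base =>
      have h1 : ∑ n ∈ Finset.range (m + 1), a n * z ^ n ≤ p z - z ^ m := by
        simp only [p, Finset.sum_range_succ]
        have h2 : ∑ n ∈ Finset.range m, a n * z ^ n ≤ ∑ n ∈ Finset.range m, h n * z ^ n := by
          gcongr with n _
          exact_mod_cast hle n
        have h3 : (a m : ℝ) + 1 ≤ h m := by exact_mod_cast ham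
        have h4 : 0 < z ^ m := by positivity
        nlinarith
      have h5 : p x ≤ y := hHpart x x0.le xρ _
      linarith
    | succ N hN ih =>
      have h1 := uA z z0.le z1 N (by omega)
      rw [prod_eq a a0 z0.le z1] at h1
      have ht : 0 ≤ ∑ n ∈ Finset.range (N + 1), a n * z ^ n :=
        Finset.sum_nonneg fun n _ => by positivity
      set t := ∑ n ∈ Finset.range (N + 1), a n * z ^ n
      have h2 : Real.exp (t + ∑ n ∈ Finset.range (N + 1), a n * g (z ^ n)) ≤
          Real.exp t * Real.exp (φ z) := by
        rw [← Real.exp_add]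
        exact Real.exp_le_exp.2 (by linarith [hAg (N + 1)])
      have h3 : y - t ≤ Real.exp y - Real.exp t := by
        have e1 : Real.exp y = Real.exp t * Real.exp (y - t) := by
          rw [← Real.exp_add]; congr 1; ring
        have e2 := Real.add_one_le_exp (y - t)
        have e3 := Real.one_le_exp ht
        rw [e1]
        nlinarith
      have h4 : y - t ≤ (Real.exp y - Real.exp t) * Real.exp (φ z) := by nlinarith
      change ∑ n ∈ Finset.range (N + 2), a n * z ^ n ≤ y
      linarith
  have hAn : ∀ n, m ≤ n → a n * z ^ n ≤ y := fun n hn => le_trans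
    (Finset.single_le_sum (f := fun n => a n * z ^ n)
      (fun n _ => by positivity) (by simp)) (hA n hn)
  obtain ⟨s, hs1, hs2⟩ := exists_between ρz
  have s0 : 0 < s := ρpos.trans hs1
  have hgeo : Tendsto (fun n : ℕ => y / 2 * (s / z) ^ n) atTop (𝓝 0) := by
    have := (tendsto_pow_atTop_nhds_zero_of_lt_one (r := s / z) (by positivity)
      ((div_lt_one z0).2 hs2)).const_mul (y / 2)
    simpa using this
  refine tendsto_of_tendsto_of_tendsto_of_le_of_le' tendsto_const_nhds hgeo
    (Eventually.of_forall fun n => by positivity) ?_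
  filter_upwards [hlow s hs1, eventually_ge_atTop m] with n hn hnm
  have hh := hposR n (by omega)
  have ha := hAn n hnm
  have yn : 0 ≤ y := hHnn x x0.le
  rw [div_le_iff₀ hh, div_pow]
  have hz : 0 < z ^ n := by positivity
  rw [← mul_le_mul_iff_left₀ hz]
  calc a n * z ^ n ≤ y := ha
    _ = y / 2 * 2 := by ring
    _ ≤ y / 2 * (h n * s ^ n) := by gcongr
    _ = _ := by field_simp

end HSeq

/-- For every hierarchy `S` of size `m ≥ 2`, the proportion of (isomorphism classes of)
hierarchies of size `n` avoiding `S` tends to `0` as `n → ∞`. -/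
theorem avoidCount_div_hierarchyCount_tendsto_zero {m : ℕ} (hm : 2 ≤ m) (S : RTree)
    (hS : S.IsHierarchy) (hSm : S.leaves = m) :
    Filter.Tendsto (fun n : ℕ => (avoidCount S n : ℝ) / (hierarchyCount n : ℝ))
      Filter.atTop (nhds 0) := by
  subst hSm
  simp only [UTree.hierarchyCount_eq, UTree.avoidCount_eq]
  exact HSeq.main_seq (UTree.count UTree.HH) (UTree.count (UTree.AV S)) S.leaves hm
    (UTree.count_zero _) (fun n hn => UTree.count_HH_pos hn) UTree.count_mul
    (UTree.count_le _) (UTree.count_AV_lt hS)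
    (fun x hx hx1 N => UTree.upper_H hx hx1 N)
    (fun x hx hx1 N hN => UTree.upper_A hx hx1 N S hS hm hN)
    (fun x T hx hx1 hT N => UTree.lower_H hx hx1 hT N)
end

section
/- (Moon) Let H_n denote the number of isomorphism classes of hierarchies of size n, and let H^{(2)}_n denote the number of isomorphism classes of hierarchies of size n containing no subhierarchy of size 2. Then there exist constants C₀ > 0, ρ₀ ∈ (0,1), C₂ > 0, ρ₂ ∈ (0,1) such that H_n ∼ C₀ ρ₀^{-n} n^{-3/2} and H^{(2)}_n ∼ C₂ ρ₂^{-n} n^{-3/2} as n → ∞ (i.e., the ratio of each side tends to 1). -/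
/-- The number of isomorphism classes of hierarchies of size `n` containing no subhierarchy
of size `2` (OEIS A058385). -/
noncomputable def hierarchyCountNoSize2 (n : ℕ) : ℕ :=
  Nat.card (Quot fun a b : {t : RTree // t.IsHierarchy ∧ t.leaves = n ∧
      ∀ s : RTree, s.SubtreeOf t → s.leaves ≠ 2} => RTree.Iso a.1 b.1)

section

/-! ### Part A: isomorphism classes of trees -/

namespace MoonAux

theorem tree_ind {P : RTree → Prop} (h : ∀ l, (∀ t ∈ l, P t) → P (.node l)) : ∀ t, P t := by
  have key : ∀ n : ℕ, ∀ t : RTree, sizeOf t < n → P t := by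
    intro n
    induction n with
    | zero => intro t ht; omega
    | succ n ih =>
      intro t ht
      obtain ⟨l⟩ := t
      apply h
      intro t ht'
      apply ih
      have := List.sizeOf_lt_of_mem ht'
      simp only [RTree.node.sizeOf_spec] at ht
      omega
  intro t
  exact key _ t (Nat.lt_succ_self _)

theorem leaves_node (l : List RTree) :
    (RTree.node l).leaves = if l = [] then 1 else (l.map RTree.leaves).sum := by
  cases l with
  | nil => simp [RTree.leaves]
  | cons a l =>
    rw [RTree.leaves]
    simp [List.map_attach_eq_pmap]

theorem iso_node_iff {l₁ l₂ : List RTree} :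
    RTree.Iso (.node l₁) (.node l₂) ↔ ∃ l, List.Forall₂ RTree.Iso l₁ l ∧ l.Perm l₂ := by
  constructor
  · intro h
    cases h with
    | node h₁ h₂ => exact ⟨_, h₁, h₂⟩
  · rintro ⟨l, h₁, h₂⟩
    exact .node h₁ h₂

theorem iso_refl (t : RTree) : RTree.Iso t t := by
  induction t using tree_ind with
  | h l ih =>
    refine .node (l := l) ?_ (List.Perm.refl _)
    exact List.forall₂_same.2 ih

theorem forall₂_mem_imp {α β : Type*} {R S : α → β → Prop} {l₁ : List α} {l₂ : List β}
    (h : List.Forall₂ R l₁ l₂) (hi : ∀ a ∈ l₁, ∀ b, R a b → S a b) : List.Forall₂ S l₁ l₂ := by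
  induction h with
  | nil => exact .nil
  | cons hab _ ih =>
    exact .cons (hi _ (by simp) _ hab) (ih (fun a ha b => hi a (by simp [ha]) b))

theorem iso_symm {t s : RTree} (h : RTree.Iso t s) : RTree.Iso s t := by
  induction t using tree_ind generalizing s with
  | h l ih =>
    obtain ⟨l₂⟩ := s
    obtain ⟨l', h1, h2⟩ := iso_node_iff.1 h
    have h3 : List.Forall₂ RTree.Iso l' l :=
      List.Forall₂.flip (forall₂_mem_imp (S := fun a b => RTree.Iso b a) h1
        (fun a ha b hab => ih a ha hab))
    have h4 : (Relation.Comp List.Perm (List.Forall₂ RTree.Iso)) l₂ l := ⟨l', h2.symm, h3⟩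
    rw [← List.forall₂_comp_perm_eq_perm_comp_forall₂] at h4
    obtain ⟨k, h5, h6⟩ := h4
    exact iso_node_iff.2 ⟨k, h5, h6⟩

theorem forall₂_trans {l₁ l₂ l₃ : List RTree}
    (h : List.Forall₂ RTree.Iso l₁ l₂) (h' : List.Forall₂ RTree.Iso l₂ l₃)
    (hi : ∀ a ∈ l₁, ∀ b c, RTree.Iso a b → RTree.Iso b c → RTree.Iso a c) :
    List.Forall₂ RTree.Iso l₁ l₃ := by
  induction h generalizing l₃ with
  | nil => exact h'
  | cons hab _ ih =>
    cases h' with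
    | cons hbc h' =>
      exact .cons (hi _ (by simp) _ _ hab hbc) (ih h' (fun a ha => hi a (by simp [ha])))

theorem iso_trans {t s r : RTree} (h : RTree.Iso t s) (h' : RTree.Iso s r) : RTree.Iso t r := by
  induction t using tree_ind generalizing s r with
  | h l ih =>
    obtain ⟨l₂⟩ := s
    obtain ⟨l₃⟩ := r
    obtain ⟨k, h1, h2⟩ := iso_node_iff.1 h
    obtain ⟨k', h3, h4⟩ := iso_node_iff.1 h'
    have h5 : (Relation.Comp List.Perm (List.Forall₂ RTree.Iso)) k k' := ⟨l₂, h2, h3⟩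
    rw [← List.forall₂_comp_perm_eq_perm_comp_forall₂] at h5
    obtain ⟨j, h6, h7⟩ := h5
    refine iso_node_iff.2 ⟨j, forall₂_trans h1 h6 (fun a ha b c => ih a ha), h7.trans h4⟩

instance isoSetoid : Setoid RTree := ⟨RTree.Iso, iso_refl, iso_symm, iso_trans⟩

abbrev TQ := Quotient isoSetoid

theorem mk_eq {a b : RTree} : (⟦a⟧ : TQ) = ⟦b⟧ ↔ RTree.Iso a b := Quotient.eq

theorem iso_node_iff' {l₁ l₂ : List RTree} :
    RTree.Iso (.node l₁) (.node l₂) ↔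
      ((l₁.map (fun t => (⟦t⟧ : TQ)) : List TQ) : Multiset TQ) = (l₂.map (fun t => (⟦t⟧ : TQ)) : List TQ) := by
  rw [iso_node_iff, Multiset.coe_eq_coe]
  constructor
  · rintro ⟨l, h1, h2⟩
    have : l₁.map (fun t => (⟦t⟧ : TQ)) = l.map (fun t => (⟦t⟧ : TQ)) := by
      rw [← List.forall₂_eq_eq_eq, List.forall₂_map_left_iff, List.forall₂_map_right_iff]
      exact h1.imp (fun a b hab => mk_eq.2 hab)
    rw [this]
    exact h2.map _
  · intro h
    have h5 : (Relation.Comp List.Perm (List.Forall₂ (fun (a : RTree) (b : TQ) => ⟦a⟧ = b))) l₂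
        (l₁.map (fun t => (⟦t⟧ : TQ))) := by
      rw [← List.forall₂_comp_perm_eq_perm_comp_forall₂]
      refine ⟨l₂.map (fun t => (⟦t⟧ : TQ)), ?_, h.symm⟩
      rw [List.forall₂_map_right_iff]
      exact List.forall₂_same.2 (fun _ _ => rfl)
    obtain ⟨k, h6, h7⟩ := h5
    rw [List.forall₂_map_right_iff] at h7
    exact ⟨k, (h7.imp (fun a b hab => mk_eq.1 hab)).flip.imp (fun a b hab => iso_symm hab), h6.symm⟩

/-- The multiset of (classes of) children. -/
def chFun : RTree → Multiset TQ
  | .node l => ((l.map (fun t => (⟦t⟧ : TQ)) : List TQ) : Multiset TQ)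

def ch : TQ → Multiset TQ := Quotient.lift chFun (by
  rintro ⟨l₁⟩ ⟨l₂⟩ h
  exact iso_node_iff'.1 h)

theorem ch_bijective : Function.Bijective ch := by
  constructor
  · intro a b
    induction a using Quotient.inductionOn with | h a => ?_
    induction b using Quotient.inductionOn with | h b => ?_
    obtain ⟨l₁⟩ := a
    obtain ⟨l₂⟩ := b
    intro h
    exact mk_eq.2 (iso_node_iff'.2 h)
  · intro M
    refine ⟨⟦.node (M.toList.map Quotient.out)⟧, ?_⟩
    change (((M.toList.map Quotient.out).map (fun t => (⟦t⟧ : TQ)) : List TQ) : Multiset TQ) = M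
    rw [List.map_map]
    have : ((fun t => (⟦t⟧ : TQ)) ∘ Quotient.out) = id := by
      funext x; simp
    rw [this]; simp

theorem leaves_iso {t s : RTree} (h : RTree.Iso t s) : t.leaves = s.leaves := by
  induction t using tree_ind generalizing s with
  | h l ih =>
    obtain ⟨l₂⟩ := s
    obtain ⟨k, h1, h2⟩ := iso_node_iff.1 h
    rw [leaves_node, leaves_node]
    have e1 : l.map RTree.leaves = k.map RTree.leaves := by
      rw [← List.forall₂_eq_eq_eq, List.forall₂_map_left_iff, List.forall₂_map_right_iff]
      exact forall₂_mem_imp h1 (fun a ha b hab => ih a ha hab)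
    have e2 : (k.map RTree.leaves).sum = (l₂.map RTree.leaves).sum := (h2.map _).sum_eq
    have e3 : l = [] ↔ l₂ = [] := by
      rw [← List.length_eq_zero_iff, ← List.length_eq_zero_iff, h1.length_eq, h2.length_eq]
    simp only [e1, e2, e3]

def lv : TQ → ℕ := Quotient.lift RTree.leaves (fun _ _ h => leaves_iso h)

/-- Hierarchies with no subhierarchy of size in `E`. -/
def Good (E : Set ℕ) (t : RTree) : Prop := t.IsHierarchy ∧ ∀ s : RTree, s.SubtreeOf t → s.leaves ∉ E

theorem good_node (E : Set ℕ) (l : List RTree) :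
    Good E (.node l) ↔ l.length ≠ 1 ∧ (RTree.node l).leaves ∉ E ∧ ∀ c ∈ l, Good E c := by
  constructor
  · rintro ⟨h1, h2⟩
    cases h1 with
    | node h3 h4 =>
      refine ⟨h3, h2 _ (.refl _), fun c hc => ⟨h4 c hc, fun s hs => h2 s (.child hc hs)⟩⟩
  · rintro ⟨h1, h2, h3⟩
    refine ⟨.node h1 (fun t ht => (h3 t ht).1), ?_⟩
    intro s hs
    cases hs with
    | refl => exact h2
    | child hc hs => exact (h3 _ hc).2 _ hs

theorem good_iso {E : Set ℕ} {t s : RTree} (h : RTree.Iso t s) (hg : Good E t) : Good E s := by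
  induction t using tree_ind generalizing s with
  | h l ih =>
    obtain ⟨l₂⟩ := s
    obtain ⟨k, h1, h2⟩ := iso_node_iff.1 h
    have hl := leaves_iso h
    rw [good_node] at hg ⊢
    refine ⟨?_, hl ▸ hg.2.1, ?_⟩
    · rw [← h2.length_eq, ← h1.length_eq]; exact hg.1
    · intro c hc
      have hc' := h2.mem_iff.2 hc
      have h4 : List.Forall₂ (fun b a => a ∈ l ∧ RTree.Iso a b) k l :=
        (forall₂_mem_imp h1 (S := fun a b => a ∈ l ∧ RTree.Iso a b) (fun a ha b hab => ⟨ha, hab⟩)).flip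
      have : ∃ a ∈ l, RTree.Iso a c := by
        clear h1 h2 hc
        have gen : ∀ (k l' : List RTree), List.Forall₂ (fun b a => a ∈ l ∧ RTree.Iso a b) k l' →
            c ∈ k → ∃ a ∈ l, RTree.Iso a c := by
          intro k l' hh
          induction hh with
          | nil => simp
          | cons hab _ ih' =>
            intro hc
            rcases List.mem_cons.1 hc with rfl | hc
            · exact ⟨_, hab.1, hab.2⟩
            · exact ih' hc
        exact gen _ _ h4 hc'
      obtain ⟨a, ha, hac⟩ := this
      exact ih a ha hac (hg.2.2 a ha)

def gd (E : Set ℕ) : TQ → Prop := Quotient.lift (Good E)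
  (fun _ _ h => propext ⟨good_iso h, good_iso (iso_symm h)⟩)

open Classical in
theorem lv_eq (q : TQ) : lv q = if ch q = 0 then 1 else ((ch q).map lv).sum := by
  induction q using Quotient.inductionOn with | h a => ?_
  obtain ⟨l⟩ := a
  change (RTree.node l).leaves = _
  rw [leaves_node]
  have : ch (Quotient.mk _ (.node l)) = ((l.map (fun t => (⟦t⟧ : TQ)) : List TQ) : Multiset TQ) := rfl
  rw [this]
  simp only [Multiset.coe_eq_zero, List.map_eq_nil_iff, Multiset.map_coe, Multiset.sum_coe,
    List.map_map]
  rfl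

theorem gd_iff (E : Set ℕ) (q : TQ) :
    gd E q ↔ (ch q).card ≠ 1 ∧ lv q ∉ E ∧ ∀ c ∈ ch q, gd E c := by
  induction q using Quotient.inductionOn with | h a => ?_
  obtain ⟨l⟩ := a
  change Good E (.node l) ↔ _
  rw [good_node]
  have : ch (Quotient.mk _ (.node l)) = ((l.map (fun t => (⟦t⟧ : TQ)) : List TQ) : Multiset TQ) := rfl
  rw [this]
  simp
  intro _
  refine and_congr Iff.rfl ?_
  rfl

theorem tq_ind {P : TQ → Prop} (h : ∀ q, (∀ c ∈ ch q, P c) → P q) : ∀ q, P q := by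
  intro q
  induction q using Quotient.inductionOn with | h a => ?_
  induction a using tree_ind with
  | h l ih =>
    apply h
    intro c hc
    have : ch (Quotient.mk _ (.node l)) = ((l.map (fun t => (⟦t⟧ : TQ)) : List TQ) : Multiset TQ) := rfl
    rw [this] at hc
    simp only [Multiset.mem_coe, List.mem_map] at hc
    obtain ⟨a, ha, rfl⟩ := hc
    exact ih a ha

theorem lv_pos (q : TQ) : 0 < lv q := by
  induction q using tq_ind with
  | h q ih =>
    rw [lv_eq]
    split_ifs with h0
    · simp
    · obtain ⟨c, hc⟩ := Multiset.exists_mem_of_ne_zero h0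
      exact lt_of_lt_of_le (ih c hc) (Multiset.single_le_sum (by simp) _ (Multiset.mem_map_of_mem _ hc))

/-- good classes of size `n` -/
def AS (E : Set ℕ) (n : ℕ) : Set TQ := {q | gd E q ∧ lv q = n}

theorem card_quot (E : Set ℕ) (n : ℕ) (P : RTree → Prop) (hP : ∀ t, P t ↔ Good E t ∧ t.leaves = n) :
    Nat.card (Quot fun a b : {t : RTree // P t} => RTree.Iso a.1 b.1) = (AS E n).ncard := by
  rw [← Nat.card_coe_set_eq]
  refine Nat.card_eq_of_bijective
    (Quot.lift (fun a : {t : RTree // P t} => (⟨⟦a.1⟧, (hP a.1).1 a.2⟩ : AS E n)) ?_) ⟨?_, ?_⟩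
  · intro a b hab
    exact Subtype.ext (mk_eq.2 hab)
  · rintro ⟨a⟩ ⟨b⟩ h
    apply Quot.sound
    exact mk_eq.1 (congrArg Subtype.val h)
  · rintro ⟨q, hq⟩
    induction q using Quotient.inductionOn with | h a => ?_
    exact ⟨Quot.mk _ ⟨a, (hP a).2 hq⟩, rfl⟩

theorem hierarchyCount_eq (n : ℕ) : hierarchyCount n = (AS ∅ n).ncard := by
  apply card_quot
  intro t
  simp [Good]

theorem hierarchyCountNoSize2_eq (n : ℕ) : hierarchyCountNoSize2 n = (AS {2} n).ncard := by
  apply card_quot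
  intro t
  simp only [Good, Set.mem_singleton_iff]
  tauto

end MoonAux

end

section

namespace MoonAux

open Classical in
theorem finite_bounded_multisets {α : Type*} {S : Set α} (hS : S.Finite) (n : ℕ) :
    {M : Multiset α | (∀ c ∈ M, c ∈ S) ∧ M.card ≤ n}.Finite := by
  refine (Set.finite_Iic (n • hS.toFinset.val)).subset ?_
  rintro M ⟨h1, h2⟩
  rw [Set.mem_Iic, Multiset.le_iff_count]
  intro a
  rw [Multiset.count_nsmul]
  by_cases ha : a ∈ M
  · have : Multiset.count a hS.toFinset.val = 1 :=
      Multiset.count_eq_one_of_mem hS.toFinset.nodup (by simpa using h1 a ha)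
    rw [this, mul_one]
    exact (Multiset.count_le_card a M).trans h2
  · rw [Multiset.count_eq_zero_of_notMem ha]; exact Nat.zero_le _

theorem card_le_sum (M : Multiset TQ) : M.card ≤ (M.map lv).sum := by
  have := Multiset.card_nsmul_le_sum (s := M.map lv) (a := 1) (by
    intro x hx
    obtain ⟨c, -, rfl⟩ := Multiset.mem_map.1 hx
    exact lv_pos c)
  simpa using this

theorem lv_le_sum {M : Multiset TQ} {c : TQ} (hc : c ∈ M) : lv c ≤ (M.map lv).sum :=
  Multiset.single_le_sum (by simp) _ (Multiset.mem_map_of_mem _ hc)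

theorem lv_lt_sum {M : Multiset TQ} {c : TQ} (hc : c ∈ M) (h2 : 2 ≤ M.card) :
    lv c < (M.map lv).sum := by
  obtain ⟨M', rfl⟩ := Multiset.exists_cons_of_mem hc
  have := card_le_sum M'
  simp only [Multiset.card_cons, Multiset.map_cons, Multiset.sum_cons] at *
  omega

/-- multisets of good classes of total size `n` -/
def MS (E : Set ℕ) (n : ℕ) : Set (Multiset TQ) := {M | (∀ c ∈ M, gd E c) ∧ (M.map lv).sum = n}

theorem ne_one_cases {M : Multiset TQ} (h : M.card ≠ 1) : M = 0 ∨ 2 ≤ M.card := by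
  rcases Nat.eq_zero_or_pos M.card with h0 | h0
  · left; exact Multiset.card_eq_zero.1 h0
  · right; omega

theorem ch_mem_MS {E : Set ℕ} {n : ℕ} (hn : 2 ≤ n) {q : TQ} (hq : q ∈ AS E n) :
    2 ≤ (ch q).card ∧ ch q ∈ MS E n := by
  obtain ⟨h1, h2⟩ := hq
  rw [gd_iff] at h1
  rw [lv_eq] at h2
  split_ifs at h2 with h0
  · omega
  · rcases ne_one_cases h1.1 with h | h
    · exact absurd h h0
    · exact ⟨h, h1.2.2, h2⟩

theorem AS_small {E : Set ℕ} {n : ℕ} (hn : n < 2) {q : TQ} (hq : q ∈ AS E n) : ch q = 0 ∧ n = 1 := by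
  obtain ⟨h1, h2⟩ := hq
  rw [gd_iff] at h1
  rw [lv_eq] at h2
  split_ifs at h2 with h0
  · exact ⟨h0, h2.symm⟩
  · rcases ne_one_cases h1.1 with h | h
    · exact absurd h h0
    · have := card_le_sum (ch q)
      omega

theorem AS_finite (E : Set ℕ) (n : ℕ) : (AS E n).Finite := by
  induction n using Nat.strong_induction_on with
  | _ n ih =>
    rcases lt_or_ge n 2 with hn | hn
    · refine Set.Finite.of_finite_image (f := ch) ?_ ch_bijective.1.injOn
      refine (Set.finite_singleton (0 : Multiset TQ)).subset ?_
      rintro _ ⟨q, hq, rfl⟩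
      exact (AS_small hn hq).1
    · refine Set.Finite.of_finite_image (f := ch) ?_ ch_bijective.1.injOn
      have hS : (⋃ k ∈ Set.Iio n, AS E k).Finite := (Set.finite_Iio n).biUnion (fun k hk => ih k hk)
      refine (finite_bounded_multisets hS n).subset ?_
      rintro _ ⟨q, hq, rfl⟩
      obtain ⟨h1, h2, h3⟩ := ch_mem_MS hn hq
      refine ⟨fun c hc => ?_, h3 ▸ card_le_sum _⟩
      simp only [Set.mem_iUnion]
      refine ⟨lv c, ?_, h2 c hc, rfl⟩
      have := lv_lt_sum hc h1
      simpa [h3] using this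

theorem MS_finite (E : Set ℕ) (n : ℕ) : (MS E n).Finite := by
  have hS : (⋃ k ∈ Set.Iic n, AS E k).Finite :=
    (Set.finite_Iic n).biUnion (fun k hk => AS_finite E k)
  refine (finite_bounded_multisets hS n).subset ?_
  rintro M ⟨h2, h3⟩
  refine ⟨fun c hc => ?_, h3 ▸ card_le_sum _⟩
  simp only [Set.mem_iUnion]
  refine ⟨lv c, ?_, h2 c hc, rfl⟩
  have := lv_le_sum hc
  simpa [h3] using this

noncomputable def aN (E : Set ℕ) (n : ℕ) : ℕ := (AS E n).ncard
noncomputable def mN (E : Set ℕ) (n : ℕ) : ℕ := (MS E n).ncard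
noncomputable def bN (E : Set ℕ) (n : ℕ) : ℕ := {M ∈ MS E n | M.card ≠ 1}.ncard

theorem aN_zero (E : Set ℕ) : aN E 0 = 0 := by
  unfold aN
  rw [Set.ncard_eq_zero (AS_finite E 0), Set.eq_empty_iff_forall_notMem]
  intro q hq
  have := (AS_small (by norm_num) hq).2
  omega

theorem aN_one {E : Set ℕ} (hE : 1 ∉ E) : aN E 1 = 1 := by
  unfold aN
  obtain ⟨q, hq⟩ := ch_bijective.2 0
  rw [Set.ncard_eq_one]
  refine ⟨q, ?_⟩
  have hl : lv q = 1 := by rw [lv_eq, hq]; simp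
  ext q'
  constructor
  · intro h
    exact ch_bijective.1 ((AS_small (by norm_num) h).1.trans hq.symm)
  · rintro rfl
    refine ⟨?_, hl⟩
    rw [gd_iff, hq, hl]
    simp [hE]

theorem mN_split (E : Set ℕ) (n : ℕ) : mN E n = aN E n + bN E n := by
  unfold mN
  have h1 : MS E n = {M ∈ MS E n | M.card = 1} ∪ {M ∈ MS E n | M.card ≠ 1} := by
    ext M; simp only [Set.mem_union, Set.mem_ofPred_eq]; tauto
  have h2 : Disjoint {M ∈ MS E n | M.card = 1} {M ∈ MS E n | M.card ≠ 1} := by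
    rw [Set.disjoint_left]; rintro M ⟨-, h⟩ ⟨-, h'⟩; exact h' h
  rw [h1, Set.ncard_union_eq h2 ((MS_finite E n).subset (fun M h => h.1))
    ((MS_finite E n).subset (fun M h => h.1))]
  congr 1
  unfold aN
  have : {M ∈ MS E n | M.card = 1} = (fun q : TQ => ({q} : Multiset TQ)) '' AS E n := by
    ext M
    simp only [Set.mem_ofPred_eq, Set.mem_image]
    constructor
    · rintro ⟨⟨h1, h2⟩, h3⟩
      obtain ⟨q, rfl⟩ := Multiset.card_eq_one.1 h3
      exact ⟨q, ⟨h1 q (by simp), by simpa using h2⟩, rfl⟩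
    · rintro ⟨q, hq, rfl⟩
      exact ⟨⟨by simpa using hq.1, by simpa using hq.2⟩, by simp⟩
  rw [this, Set.ncard_image_of_injective _ (fun a b h => Multiset.singleton_inj.1 h)]

theorem aN_eq_bN {E : Set ℕ} {n : ℕ} (hn : 2 ≤ n) (hE : n ∉ E) : aN E n = bN E n := by
  unfold aN bN
  rw [← Set.ncard_image_of_injective _ ch_bijective.1]
  congr 1
  ext M
  constructor
  · rintro ⟨q, hq, rfl⟩
    obtain ⟨h1, h2⟩ := ch_mem_MS hn hq
    exact ⟨h2, by omega⟩
  · rintro ⟨⟨h1, h2⟩, h3⟩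
    obtain ⟨q, rfl⟩ := ch_bijective.2 M
    have hlv : lv q = n := by
      rw [lv_eq, if_neg, h2]
      intro h0
      rw [h0] at h2
      simp at h2; omega
    exact ⟨q, ⟨(gd_iff E q).2 ⟨h3, hlv ▸ hE, h1⟩, hlv⟩, rfl⟩

theorem aN_of_mem {E : Set ℕ} {n : ℕ} (hE : n ∈ E) : aN E n = 0 := by
  unfold aN
  rw [Set.ncard_eq_zero (AS_finite E n), Set.eq_empty_iff_forall_notMem]
  rintro q ⟨h1, h2⟩
  rw [gd_iff, h2] at h1
  exact h1.2.1 hE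

theorem bN_zero (E : Set ℕ) : bN E 0 = 1 := by
  unfold bN
  rw [Set.ncard_eq_one]
  refine ⟨0, ?_⟩
  ext M
  constructor
  · rintro ⟨⟨h1, h2⟩, h3⟩
    have := card_le_sum M
    exact Multiset.card_eq_zero.1 (by omega)
  · rintro rfl
    simp [MS]

theorem bN_one (E : Set ℕ) : bN E 1 = 0 := by
  unfold bN
  rw [Set.ncard_eq_zero ((MS_finite E 1).subset (fun M h => h.1)), Set.eq_empty_iff_forall_notMem]
  rintro M ⟨⟨h1, h2⟩, h3⟩
  have := card_le_sum M
  rcases ne_one_cases h3 with h | h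
  · simp [h] at h2
  · omega

theorem lv_one_iff (q : TQ) (hg : (ch q).card ≠ 1) (h : lv q = 1) : ch q = 0 := by
  by_contra h0
  rw [lv_eq, if_neg h0] at h
  have := card_le_sum (ch q)
  rcases ne_one_cases hg with h | h
  · exact h0 h
  · omega

theorem bN_two {E : Set ℕ} (hE : 1 ∉ E) : bN E 2 = 1 := by
  unfold bN
  obtain ⟨q, hq⟩ := ch_bijective.2 0
  have hl : lv q = 1 := by rw [lv_eq, hq]; simp
  have hg : gd E q := by rw [gd_iff, hq, hl]; simp [hE]
  rw [Set.ncard_eq_one]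
  refine ⟨{q, q}, ?_⟩
  ext M
  constructor
  · rintro ⟨⟨h1, h2⟩, h3⟩
    have := card_le_sum M
    rcases ne_one_cases h3 with h | h
    · simp [h] at h2
    · have h2' : M.card = 2 := by omega
      obtain ⟨x, y, rfl⟩ := Multiset.card_eq_two.1 h2'
      have hx := lv_pos x
      have hy := lv_pos y
      simp at h2
      have ex : x = q := ch_bijective.1 ((lv_one_iff x ((gd_iff E x).1 (h1 x (by simp))).1 (by omega)).trans hq.symm)
      have ey : y = q := ch_bijective.1 ((lv_one_iff y ((gd_iff E y).1 (h1 y (by simp))).1 (by omega)).trans hq.symm)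
      rw [ex, ey]; rfl
  · intro h
    rw [Set.mem_singleton_iff] at h
    subst h
    refine ⟨⟨?_, ?_⟩, ?_⟩
    · intro c hc
      simp at hc
      rw [hc]; exact hg
    · simp [hl]
    · simp

theorem bN_le (E : Set ℕ) {n : ℕ} (hn : 2 ≤ n) :
    bN E n ≤ ∑ j ∈ Finset.Ico 1 n, aN E j * mN E (n - j) := by
  unfold bN aN mN
  have hsub : {M ∈ MS E n | M.card ≠ 1} ⊆
      ⋃ j ∈ Finset.Ico 1 n, (fun p : TQ × Multiset TQ => p.1 ::ₘ p.2) '' (AS E j ×ˢ MS E (n - j)) := by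
    rintro M ⟨⟨h1, h2⟩, h3⟩
    have h4 : 2 ≤ M.card := by
      rcases ne_one_cases h3 with h | h
      · simp [h] at h2; omega
      · exact h
    obtain ⟨c, hc⟩ := Multiset.card_pos_iff_exists_mem.1 (by omega : 0 < M.card)
    have hlt := lv_lt_sum hc h4
    have hp := lv_pos c
    obtain ⟨M', rfl⟩ := Multiset.exists_cons_of_mem hc
    simp only [Set.mem_iUnion]
    refine ⟨lv c, by simp only [Finset.mem_Ico]; omega, (c, M'), ⟨⟨h1 c hc, rfl⟩, ?_, ?_⟩, rfl⟩
    · intro c' hc'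
      exact h1 c' (by simp [hc'])
    · simp only [Multiset.map_cons, Multiset.sum_cons] at h2 ⊢
      omega
  have hfin : ∀ j, ((fun p : TQ × Multiset TQ => p.1 ::ₘ p.2) '' (AS E j ×ˢ MS E (n - j))).Finite :=
    fun j => ((AS_finite E j).prod (MS_finite E (n - j))).image _
  refine (Set.ncard_le_ncard hsub ((Finset.Ico 1 n).finite_toSet.biUnion (fun j _ => hfin j))).trans ?_
  refine (Finset.set_ncard_biUnion_le _ _).trans ?_
  refine Finset.sum_le_sum (fun j _ => ?_)
  refine (Set.ncard_image_le ((AS_finite E j).prod (MS_finite E (n - j)))).trans ?_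
  rw [Set.ncard_prod]

theorem ncard_count_ge (E : Set ℕ) [DecidableEq TQ] (n i : ℕ) {c : TQ} (hc : gd E c) :
    {M ∈ MS E n | i ≤ M.count c}.ncard = if i * lv c ≤ n then mN E (n - i * lv c) else 0 := by
  split_ifs with h
  · unfold mN
    rw [← Set.ncard_image_of_injective (MS E (n - i * lv c))
      (f := fun M => M + Multiset.replicate i c) (fun a b hab => by simpa using hab)]
    congr 1
    ext M
    constructor
    · rintro ⟨⟨h1, h2⟩, h3⟩
      rw [Multiset.le_count_iff_replicate_le] at h3
      obtain ⟨M', rfl⟩ := Multiset.le_iff_exists_add.1 h3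
      refine ⟨M', ⟨fun c' hc' => h1 c' (by simp [hc']), ?_⟩, by simp [add_comm]⟩
      simp at h2
      omega
    · rintro ⟨M', ⟨h1, h2⟩, rfl⟩
      refine ⟨⟨?_, ?_⟩, ?_⟩
      · intro c' hc'
        rcases Multiset.mem_add.1 hc' with h' | h'
        · exact h1 c' h'
        · rw [Multiset.eq_of_mem_replicate h']; exact hc
      · simp [h2]; omega
      · simp
  · rw [Set.ncard_eq_zero ((MS_finite E n).subset (fun M h => h.1)), Set.eq_empty_iff_forall_notMem]
    rintro M ⟨⟨h1, h2⟩, h3⟩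
    rw [Multiset.le_count_iff_replicate_le] at h3
    obtain ⟨M', rfl⟩ := Multiset.le_iff_exists_add.1 h3
    simp at h2
    omega

open Classical in
theorem double_count (E : Set ℕ) (n : ℕ) :
    n * mN E n = ∑ j ∈ Finset.Icc 1 n, (∑ d ∈ j.divisors, d * aN E d) * mN E (n - j) := by
  set F : Finset (Multiset TQ) := (MS_finite E n).toFinset with hF
  have hmF : mN E n = F.card := Set.ncard_eq_toFinset_card _ _
  set A : ℕ → Finset TQ := fun k => (AS_finite E k).toFinset with hA
  have haA : ∀ k, aN E k = (A k).card := fun k => Set.ncard_eq_toFinset_card _ _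
  have hmemA : ∀ k c, c ∈ A k ↔ gd E c ∧ lv c = k := by
    intro k c; simp [hA, AS]
  have hmemF : ∀ M, M ∈ F ↔ (∀ c ∈ M, gd E c) ∧ (M.map lv).sum = n := by
    intro M; simp [hF, MS]
  have hdisj : ∀ s : Finset ℕ, (s : Set ℕ).PairwiseDisjoint A := by
    intro s i _ j _ hij
    rw [Function.onFun, Finset.disjoint_left]
    intro c h1 h2
    rw [hmemA] at h1 h2
    exact hij (h1.2.symm.trans h2.2)
  have step1 : ∀ M ∈ F, n = ∑ d ∈ Finset.Icc 1 n, ∑ c ∈ A d, ∑ i ∈ Finset.Icc 1 n,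
      if i ≤ M.count c then d else 0 := by
    intro M hM
    have hM' := (hmemF M).1 hM
    have e1 : ∀ d ∈ Finset.Icc 1 n, ∑ c ∈ A d, ∑ i ∈ Finset.Icc 1 n,
        (if i ≤ M.count c then d else 0) = ∑ c ∈ A d, M.count c * lv c := by
      intro d hd
      refine Finset.sum_congr rfl (fun c hc => ?_)
      rw [hmemA] at hc
      rw [← Finset.sum_filter, Finset.sum_const, hc.2, smul_eq_mul]
      congr 1
      have : M.count c ≤ n := (Multiset.count_le_card c M).trans (hM'.2 ▸ card_le_sum M)
      have : Finset.filter (fun i => i ≤ M.count c) (Finset.Icc 1 n) = Finset.Icc 1 (M.count c) := by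
        ext i; simp only [Finset.mem_filter, Finset.mem_Icc]; omega
      rw [this]; simp
    rw [Finset.sum_congr rfl e1, ← Finset.sum_biUnion (hdisj _)]
    refine (hM'.2.symm.trans (Finset.sum_multiset_map_count _ _)).trans ?_
    simp only [smul_eq_mul]
    refine Finset.sum_subset ?_ ?_
    · intro c hc
      rw [Multiset.mem_toFinset] at hc
      rw [Finset.mem_biUnion]
      refine ⟨lv c, ?_, (hmemA _ _).2 ⟨hM'.1 c hc, rfl⟩⟩
      rw [Finset.mem_Icc]
      exact ⟨lv_pos c, hM'.2 ▸ lv_le_sum hc⟩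
    · intro c _ hc
      rw [Multiset.mem_toFinset] at hc
      rw [Multiset.count_eq_zero_of_notMem hc, zero_mul]
  have step2 : n * mN E n = ∑ d ∈ Finset.Icc 1 n, ∑ c ∈ A d, ∑ i ∈ Finset.Icc 1 n,
      d * (if i * d ≤ n then mN E (n - i * d) else 0) := by
    calc n * mN E n = ∑ M ∈ F, n := by rw [hmF, Finset.sum_const, smul_eq_mul, mul_comm]
      _ = ∑ M ∈ F, ∑ d ∈ Finset.Icc 1 n, ∑ c ∈ A d, ∑ i ∈ Finset.Icc 1 n,
          (if i ≤ M.count c then d else 0) := Finset.sum_congr rfl step1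
      _ = _ := by
        rw [Finset.sum_comm]
        refine Finset.sum_congr rfl (fun d _ => ?_)
        rw [Finset.sum_comm]
        refine Finset.sum_congr rfl (fun c hc => ?_)
        rw [Finset.sum_comm]
        refine Finset.sum_congr rfl (fun i _ => ?_)
        rw [hmemA] at hc
        rw [← Finset.sum_filter, Finset.sum_const, smul_eq_mul, mul_comm]
        congr 1
        have := ncard_count_ge E n i hc.1
        rw [hc.2] at this
        rw [← this, ← Set.ncard_coe_finset]
        congr 1
        ext M
        simp [hF]
  rw [step2]
  have step3 : ∀ d ∈ Finset.Icc 1 n, ∑ c ∈ A d, ∑ i ∈ Finset.Icc 1 n,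
      d * (if i * d ≤ n then mN E (n - i * d) else 0)
      = ∑ j ∈ Finset.Icc 1 n, if d ∣ j then d * aN E d * mN E (n - j) else 0 := by
    intro d hd
    rw [Finset.mem_Icc] at hd
    rw [Finset.sum_const, smul_eq_mul, ← haA, ← Finset.mul_sum, ← Finset.sum_filter, ← Finset.sum_filter,
      ← Finset.mul_sum, ← mul_assoc, mul_comm (aN E d) d]
    congr 1
    refine Finset.sum_nbij (fun i => i * d) ?_ ?_ ?_ ?_
    · intro i hi
      simp only [Finset.mem_filter, Finset.mem_Icc] at hi ⊢
      refine ⟨⟨?_, hi.2⟩, Dvd.intro_left i rfl⟩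
      exact Nat.mul_pos hi.1.1 hd.1
    · intro i _ j _ hij
      exact Nat.eq_of_mul_eq_mul_right hd.1 hij
    · intro j hj
      simp only [Finset.coe_filter, Finset.mem_Icc, Set.mem_ofPred_eq] at hj
      obtain ⟨⟨h1, h2⟩, ⟨i, rfl⟩⟩ := hj
      refine ⟨i, ?_, mul_comm _ _⟩
      simp only [Finset.coe_filter, Finset.mem_Icc, Set.mem_ofPred_eq]
      have hi : 1 ≤ i := by
        rcases Nat.eq_zero_or_pos i with h | h
        · simp [h] at h1
        · exact h
      refine ⟨⟨hi, ?_⟩, by rw [mul_comm]; exact h2⟩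
      exact (Nat.le_mul_of_pos_left i hd.1).trans h2
    · intro i _; rfl
  rw [Finset.sum_congr rfl step3, Finset.sum_comm]
  refine Finset.sum_congr rfl (fun j hj => ?_)
  rw [Finset.mem_Icc] at hj
  rw [← Finset.sum_filter, Finset.sum_mul]
  refine Finset.sum_congr ?_ (fun _ _ => rfl)
  ext d
  simp only [Finset.mem_filter, Finset.mem_Icc, Nat.mem_divisors]
  constructor
  · rintro ⟨_, h⟩; exact ⟨h, by omega⟩
  · rintro ⟨h, _⟩
    have := Nat.le_of_dvd (by omega) h
    have := Nat.pos_of_dvd_of_pos h (by omega)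
    exact ⟨⟨by omega, by omega⟩, h⟩

end MoonAux

end

section

namespace MoonAux

theorem mN_one {E : Set ℕ} (hE : 1 ∉ E) : mN E 1 = 1 := by
  rw [mN_split, aN_one hE, bN_one]

theorem mN_zero (E : Set ℕ) : mN E 0 = 1 := by
  rw [mN_split, aN_zero, bN_zero]

theorem aN_le_bN {E : Set ℕ} {n : ℕ} (hn : 2 ≤ n) : aN E n ≤ bN E n := by
  by_cases h : n ∈ E
  · rw [aN_of_mem h]; exact Nat.zero_le _
  · exact (aN_eq_bN hn h).le

theorem mN_rec_le (E : Set ℕ) {n : ℕ} (hn : 2 ≤ n) :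
    mN E n ≤ 2 * ∑ j ∈ Finset.Ico 1 n, mN E j * mN E (n - j) := by
  have h1 := bN_le E hn
  have h2 := aN_le_bN (E := E) hn
  have h3 : ∑ j ∈ Finset.Ico 1 n, aN E j * mN E (n - j) ≤ ∑ j ∈ Finset.Ico 1 n, mN E j * mN E (n - j) := by
    refine Finset.sum_le_sum (fun j _ => Nat.mul_le_mul_right _ ?_)
    rw [mN_split]; omega
  rw [mN_split]
  omega

theorem mN_le_catalan {E : Set ℕ} (hE : 1 ∉ E) (n : ℕ) : mN E (n + 1) ≤ 2 ^ n * catalan n := by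
  induction n using Nat.strong_induction_on with
  | _ n ih =>
    rcases n with _ | n
    · simp [mN_one hE]
    · refine (mN_rec_le E (by omega)).trans ?_
      rw [catalan_succ, Finset.sum_Ico_eq_sum_range, ← Fin.sum_univ_eq_sum_range
        (fun i => mN E (1 + i) * mN E (n + 1 + 1 - (1 + i)))]
      rw [pow_succ', mul_assoc]
      refine Nat.mul_le_mul_left 2 ?_
      rw [Finset.mul_sum]
      refine Finset.sum_le_sum (fun i _ => ?_)
      have hi : (i : ℕ) < n + 1 := i.2
      have e1 := ih i hi
      have e2 := ih (n - i) (by omega)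
      have h1 : 1 + (i : ℕ) = i + 1 := by omega
      have h2 : n + 1 + 1 - (1 + (i : ℕ)) = (n - i) + 1 := by omega
      rw [h2, h1]
      calc _ ≤ (2 ^ (i : ℕ) * catalan i) * (2 ^ (n - i) * catalan (n - i)) := Nat.mul_le_mul e1 e2
        _ = 2 ^ ((i : ℕ) + (n - i)) * (catalan i * catalan (n - i)) := by rw [pow_add]; ring
        _ = _ := by congr 2; omega

theorem mN_le {E : Set ℕ} (hE : 1 ∉ E) (n : ℕ) : mN E n ≤ 8 ^ n := by
  rcases n with _ | n
  · simp [mN_zero]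
  · refine (mN_le_catalan hE n).trans ?_
    have h1 : catalan n ≤ 4 ^ n := by
      rw [catalan_eq_centralBinom_div]
      refine (Nat.div_le_self _ _).trans ?_
      rw [Nat.centralBinom_eq_two_mul_choose]
      refine (Nat.choose_le_two_pow _ _).trans ?_
      rw [pow_mul]; norm_num
    calc _ ≤ 2 ^ n * 4 ^ n := Nat.mul_le_mul_left _ h1
      _ = 8 ^ n := by rw [← mul_pow]; norm_num
      _ ≤ _ := Nat.pow_le_pow_right (by norm_num) (by omega)

end MoonAux

end

section

namespace MoonAux
open Filter Topology

theorem ps_hasFP {𝕜 : Type*} [RCLike 𝕜] (a : ℕ → 𝕜) {r : ℝ} (hr : 0 < r)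
    (h : ∀ x : ℝ, 0 ≤ x → x < r → Summable (fun n => ‖a n‖ * x ^ n)) :
    HasFPowerSeriesOnBall (fun z => ∑' n, a n * z ^ n) (FormalMultilinearSeries.ofScalars 𝕜 a) 0
      (ENNReal.ofReal r) := by
  have hrad : ENNReal.ofReal r ≤ (FormalMultilinearSeries.ofScalars 𝕜 a).radius := by
    refine ENNReal.le_of_forall_nnreal_lt (fun s hs => ?_)
    refine FormalMultilinearSeries.le_radius_of_summable _ ?_
    simp only [FormalMultilinearSeries.ofScalars_norm]
    refine h s s.2 ?_
    rw [ENNReal.lt_ofReal_iff_toReal_lt (by simp)] at hs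
    simpa using hs
  have h0 : 0 < ENNReal.ofReal r := by simpa using hr
  have := ((FormalMultilinearSeries.ofScalars 𝕜 a).hasFPowerSeriesOnBall (h0.trans_le hrad)).mono h0 hrad
  convert! this using 1
  funext z
  rw [FormalMultilinearSeries.sum]
  refine tsum_congr (fun n => ?_)
  simp [FormalMultilinearSeries.ofScalars]

theorem ps_unique (a b : ℕ → ℂ) {r : ℝ} (hr : 0 < r)
    (h : ∀ x : ℝ, 0 < x → x < r → ∃ s, HasSum (fun n => a n * (x : ℂ) ^ n) s ∧
      HasSum (fun n => b n * (x : ℂ) ^ n) s) : a = b := by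
  set d : ℕ → ℂ := fun n => a n - b n with hd
  have hs : ∀ x : ℝ, 0 < x → x < r → HasSum (fun n => d n * (x : ℂ) ^ n) 0 := by
    intro x h1 h2
    obtain ⟨s, ha, hb⟩ := h x h1 h2
    have := ha.sub hb
    simpa [hd, sub_mul] using this
  have hsum : ∀ x : ℝ, 0 ≤ x → x < r / 2 → Summable (fun n => ‖d n‖ * x ^ n) := by
    intro x h1 h2
    have := (hs (r / 2) (by linarith) (by linarith)).summable.norm
    refine Summable.of_nonneg_of_le (fun n => by positivity) (fun n => ?_) this
    rw [norm_mul, norm_pow, Complex.norm_real, Real.norm_of_nonneg (by linarith : 0 ≤ r/2)]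
    gcongr
  have hfp := ps_hasFP d (by linarith : 0 < r / 2) hsum
  have hev : ∀ᶠ z in 𝓝 (0 : ℂ), (∑' n, d n * z ^ n) = (fun _ : ℂ => (0 : ℂ)) z := by
    rw [← AnalyticAt.frequently_eq_iff_eventually_eq hfp.analyticAt analyticAt_const]
    have ht : Tendsto (fun x : ℝ => (x : ℂ)) (𝓝[>] 0) (𝓝[≠] 0) := by
      refine tendsto_nhdsWithin_iff.2 ⟨?_, ?_⟩
      · have : Tendsto (fun x : ℝ => (x : ℂ)) (𝓝 0) (𝓝 ((0 : ℝ) : ℂ)) :=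
          Complex.continuous_ofReal.tendsto 0
        simpa using this.mono_left nhdsWithin_le_nhds
      · filter_upwards [self_mem_nhdsWithin] with x hx
        simpa using (ne_of_gt hx)
    refine ht.frequently ?_
    refine Eventually.frequently ?_
    filter_upwards [Ioo_mem_nhdsGT hr] with x hx
    exact (hs x hx.1 hx.2).tsum_eq
  have h1 := hfp.hasFPowerSeriesAt.congr hev
  have h2 : HasFPowerSeriesAt (fun _ : ℂ => (0 : ℂ)) (0 : FormalMultilinearSeries ℂ ℂ ℂ) 0 := by
    have := hasFPowerSeriesAt_const (𝕜 := ℂ) (c := (0 : ℂ)) (e := (0 : ℂ))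
    simpa using this
  have h3 := h1.eq_formalMultilinearSeries h2
  funext n
  have h4 : (FormalMultilinearSeries.ofScalars ℂ d).coeff n = 0 := by rw [h3]; rfl
  rw [FormalMultilinearSeries.coeff_ofScalars] at h4
  exact sub_eq_zero.1 h4

theorem ps_unique_real (a b : ℕ → ℝ) {r : ℝ} (hr : 0 < r)
    (h : ∀ x : ℝ, 0 < x → x < r → ∃ s, HasSum (fun n => a n * x ^ n) s ∧
      HasSum (fun n => b n * x ^ n) s) : a = b := by
  have := ps_unique (fun n => (a n : ℂ)) (fun n => (b n : ℂ)) hr (by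
    intro x h1 h2
    obtain ⟨s, ha, hb⟩ := h x h1 h2
    refine ⟨s, ?_, ?_⟩
    · have := Complex.hasSum_ofReal.2 ha
      simpa using this
    · have := Complex.hasSum_ofReal.2 hb
      simpa using this)
  funext n
  have h := congrFun this n
  simpa using h

theorem ps_iteratedDeriv (a : ℕ → ℂ) {r : ℝ} (hr : 0 < r)
    (h : ∀ x : ℝ, 0 ≤ x → x < r → Summable (fun n => ‖a n‖ * x ^ n)) (n : ℕ) :
    iteratedDeriv n (fun z => ∑' n, a n * z ^ n) 0 = n.factorial * a n := by
  have := (ps_hasFP a hr h).factorial_smul 1 n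
  rw [iteratedDeriv_eq_iteratedFDeriv, ← this]
  simp [FormalMultilinearSeries.ofScalars]

theorem ps_differentiableOn (a : ℕ → ℂ) {r : ℝ} (hr : 0 < r)
    (h : ∀ x : ℝ, 0 ≤ x → x < r → Summable (fun n => ‖a n‖ * x ^ n)) :
    DifferentiableOn ℂ (fun z => ∑' n, a n * z ^ n) (Metric.ball 0 r) := by
  have := (ps_hasFP a hr h).differentiableOn
  rwa [Metric.eball_ofReal] at this

/-- The exponential of a power series, with coefficients given by the usual recursion. -/
theorem exp_series (q e : ℕ → ℂ) {r : ℝ} (hr : 0 < r) (hq0 : q 0 = 0)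
    (hq : ∀ x : ℝ, 0 ≤ x → x < r → Summable (fun n => ‖q n‖ * x ^ n)) (he0 : e 0 = 1)
    (he : ∀ n : ℕ, ((n : ℂ) + 1) * e (n + 1) =
      ∑ i ∈ Finset.range (n + 1), ((i : ℂ) + 1) * q (i + 1) * e (n - i))
    {z : ℂ} (hz : ‖z‖ < r) :
    HasSum (fun n => e n * z ^ n) (Complex.exp (∑' n, q n * z ^ n)) := by
  set Q : ℂ → ℂ := fun z => ∑' n, q n * z ^ n with hQ
  have hQd : DifferentiableOn ℂ Q (Metric.ball 0 r) := ps_differentiableOn q hr hq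
  have hφd : DifferentiableOn ℂ (fun z => Complex.exp (Q z)) (Metric.ball 0 r) := hQd.cexp
  have h0mem : (0 : ℂ) ∈ Metric.ball (0 : ℂ) r := Metric.mem_ball_self hr
  have hnhds : Metric.ball (0 : ℂ) r ∈ 𝓝 (0 : ℂ) := Metric.isOpen_ball.mem_nhds h0mem
  have hQa : AnalyticAt ℂ Q 0 := hQd.analyticAt hnhds
  have hφa : AnalyticAt ℂ (fun z => Complex.exp (Q z)) 0 := hφd.analyticAt hnhds
  have hQ0 : Q 0 = 0 := by
    simp only [hQ]
    rw [tsum_eq_single 0]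
    · simp [hq0]
    · intro n hn; simp [hn]
  have hrec : ∀ n, iteratedDeriv (n + 1) (fun z => Complex.exp (Q z)) 0 =
      ∑ i ∈ Finset.range (n + 1), (n.choose i : ℂ) * iteratedDeriv (i + 1) Q 0 *
        iteratedDeriv (n - i) (fun z => Complex.exp (Q z)) 0 := by
    intro n
    have hev : deriv (fun z => Complex.exp (Q z)) =ᶠ[𝓝 0] (deriv Q) * (fun z => Complex.exp (Q z)) := by
      filter_upwards [hnhds] with w hw
      have hd : HasDerivAt Q (deriv Q w) w :=
        ((hQd w hw).differentiableAt (Metric.isOpen_ball.mem_nhds hw)).hasDerivAt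
      rw [hd.cexp.deriv]
      simp [mul_comm]
    rw [iteratedDeriv_succ', hev.iteratedDeriv_eq n, iteratedDeriv_mul hQa.deriv.contDiffAt hφa.contDiffAt]
    refine Finset.sum_congr rfl (fun i _ => ?_)
    rw [iteratedDeriv_succ']
  have hcoef : ∀ n, iteratedDeriv n (fun z => Complex.exp (Q z)) 0 = n.factorial * e n := by
    intro n
    induction n using Nat.strong_induction_on with
    | _ n ih =>
      rcases n with _ | n
      · simp [hQ0, he0]
      · rw [hrec, Nat.factorial_succ]
        push_cast
        rw [mul_comm ((n : ℂ) + 1), mul_assoc, he, Finset.mul_sum]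
        refine Finset.sum_congr rfl (fun i hi => ?_)
        have hi' : i ≤ n := by simpa [Nat.lt_succ_iff] using hi
        rw [ih (n - i) (by omega), ps_iteratedDeriv q hr hq, Nat.factorial_succ,
          ← Nat.choose_mul_factorial_mul_factorial hi']
        push_cast
        ring
  have hsum := Complex.hasSum_taylorSeries_on_ball hφd (z := z) (by simpa using hz)
  convert! hsum using 1
  funext n
  rw [hcoef]
  have : (n.factorial : ℂ) ≠ 0 := by exact_mod_cast Nat.factorial_ne_zero n
  simp only [smul_eq_mul, sub_zero]
  field_simp

end MoonAux

end

section

namespace MoonAux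
open Filter Topology

theorem double_sum {h : ℕ → ℕ → ℝ} (h0 : ∀ k n, 0 ≤ h k n) {s : ℕ → ℝ} {S : ℝ}
    (h1 : ∀ k, HasSum (h k) (s k)) (h2 : HasSum s S) :
    (∀ n, Summable (fun k => h k n)) ∧ HasSum (fun n => ∑' k, h k n) S := by
  have hs : Summable (fun p : ℕ × ℕ => h p.1 p.2) := by
    rw [summable_prod_of_nonneg (fun p => h0 p.1 p.2)]
    refine ⟨fun k => (h1 k).summable, ?_⟩
    simp only [(h1 _).tsum_eq]
    exact h2.summable
  have hS : HasSum (fun p : ℕ × ℕ => h p.1 p.2) S := by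
    have := hs.hasSum.prod_fiberwise (g := s) (fun k => h1 k)
    rw [h2.unique this]
    exact hs.hasSum
  have hs' : Summable (fun p : ℕ × ℕ => h p.2 p.1) := hs.prod_symm
  have hS' : HasSum (fun p : ℕ × ℕ => h p.2 p.1) S := (Equiv.prodComm ℕ ℕ).hasSum_iff.2 hS
  refine ⟨fun n => hs'.prod_factor n, ?_⟩
  exact hS'.prod_fiberwise (fun n => (hs'.prod_factor n).hasSum)

theorem mul_hasSum {P R : PowerSeries ℝ} (hP : ∀ n, 0 ≤ P.coeff n) (hR : ∀ n, 0 ≤ R.coeff n)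
    {x s t : ℝ} (hx : 0 ≤ x) (h1 : HasSum (fun n => P.coeff n * x ^ n) s)
    (h2 : HasSum (fun n => R.coeff n * x ^ n) t) :
    HasSum (fun n => (P * R).coeff n * x ^ n) (s * t) := by
  have n1 : Summable (fun n => ‖P.coeff n * x ^ n‖) := h1.summable.norm
  have n2 : Summable (fun n => ‖R.coeff n * x ^ n‖) := h2.summable.norm
  have e := tsum_mul_tsum_eq_tsum_sum_antidiagonal_of_summable_norm n1 n2
  have s3 := (summable_norm_sum_mul_antidiagonal_of_summable_norm n1 n2).of_norm
  rw [h1.tsum_eq, h2.tsum_eq] at e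
  rw [e]
  convert! s3.hasSum using 1
  funext n
  rw [PowerSeries.coeff_mul, Finset.sum_mul]
  refine Finset.sum_congr rfl (fun p hp => ?_)
  rw [← Finset.HasAntidiagonal.mem_antidiagonal.1 hp, pow_add]
  ring

theorem pow_coeff_nonneg {P : PowerSeries ℝ} (hP : ∀ n, 0 ≤ P.coeff n) (k n : ℕ) :
    0 ≤ (P ^ k).coeff n := by
  induction k generalizing n with
  | zero => rw [pow_zero, PowerSeries.coeff_one]; split_ifs <;> norm_num
  | succ k ih =>
    rw [pow_succ, PowerSeries.coeff_mul]
    exact Finset.sum_nonneg (fun p _ => mul_nonneg (ih _) (hP _))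

theorem pow_hasSum {P : PowerSeries ℝ} (hP : ∀ n, 0 ≤ P.coeff n) {x s : ℝ} (hx : 0 ≤ x)
    (h1 : HasSum (fun n => P.coeff n * x ^ n) s) (k : ℕ) :
    HasSum (fun n => (P ^ k).coeff n * x ^ n) (s ^ k) := by
  induction k with
  | zero =>
    simp only [pow_zero, PowerSeries.coeff_one]
    have := hasSum_ite_eq (0 : ℕ) (1 : ℝ)
    convert! this using 1
    funext n
    split_ifs with h <;> simp [h]
  | succ k ih =>
    rw [pow_succ, pow_succ]
    exact mul_hasSum (pow_coeff_nonneg hP k) hP hx ih h1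

/-- A nonnegative sequence with mass one and exponential moments. -/
structure Law (f : ℕ → ℝ) (r : ℝ) : Prop where
  nonneg : ∀ n, 0 ≤ f n
  one_pos : 0 < f 1
  sum : HasSum f 1
  hr : 1 < r
  moments : ∀ x : ℝ, 0 ≤ x → x < r → Summable (fun n => f n * x ^ n)

noncomputable def conv (f : ℕ → ℝ) (k n : ℕ) : ℝ := ((PowerSeries.mk f) ^ k).coeff n

noncomputable def Fr (f : ℕ → ℝ) (x : ℝ) : ℝ := ∑' n, f n * x ^ n

variable {f : ℕ → ℝ} {r : ℝ}

theorem Law.conv_nonneg (L : Law f r) (k n : ℕ) : 0 ≤ conv f k n :=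
  pow_coeff_nonneg (by simpa using L.nonneg) k n

theorem Law.conv_hasSum (L : Law f r) {x : ℝ} (hx : 0 ≤ x) (hxr : x < r) (k : ℕ) :
    HasSum (fun n => conv f k n * x ^ n) (Fr f x ^ k) := by
  refine pow_hasSum (by simpa using L.nonneg) hx ?_ k
  simpa [Fr] using (L.moments x hx hxr).hasSum

theorem Law.Fr_one (L : Law f r) : Fr f 1 = 1 := by
  simp [Fr, L.sum.tsum_eq]

theorem Law.Fr_le (L : Law f r) {x : ℝ} (hx : 0 ≤ x) (hx1 : x ≤ 1) : f 1 * (1 - x) ≤ 1 - Fr f x := by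
  have h1 : HasSum (fun n => f n * (1 - x ^ n)) (1 - Fr f x) := by
    have := L.sum.sub (L.moments x hx (lt_of_le_of_lt hx1 L.hr)).hasSum
    simpa [mul_sub, Fr] using this
  have := le_hasSum h1 1 (fun n _ => mul_nonneg (L.nonneg n) (by
    have := pow_le_one₀ (n := n) hx hx1
    linarith))
  simpa using this

theorem Law.Fr_nonneg (L : Law f r) {x : ℝ} (hx : 0 ≤ x) : 0 ≤ Fr f x :=
  tsum_nonneg (fun n => mul_nonneg (L.nonneg n) (pow_nonneg hx n))

theorem Law.Fr_pos (L : Law f r) {x : ℝ} (hx : 0 < x) (hxr : x < r) : 0 < Fr f x := by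
  have := (L.moments x hx.le hxr).le_tsum 1 (fun n _ => mul_nonneg (L.nonneg n) (pow_nonneg hx.le n))
  have h2 : 0 < f 1 * x ^ 1 := mul_pos L.one_pos (by simpa using hx)
  exact h2.trans_le this

theorem Law.Fr_ge_one (L : Law f r) {x : ℝ} (hx : 1 ≤ x) (hxr : x < r) : 1 ≤ Fr f x := by
  refine hasSum_le (fun n => ?_) L.sum (L.moments x (by linarith) hxr).hasSum
  exact le_mul_of_one_le_right (L.nonneg n) (one_le_pow₀ hx)

theorem Law.Fr_lt_one (L : Law f r) {x : ℝ} (hx : 0 ≤ x) (hx1 : x < 1) : Fr f x < 1 := by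
  have := L.Fr_le hx hx1.le
  have h2 : 0 < f 1 * (1 - x) := mul_pos L.one_pos (by linarith)
  linarith

/-- renewal sequence -/
noncomputable def Ren (f : ℕ → ℝ) (n : ℕ) : ℝ := ∑' k, conv f k n

theorem Law.ren (L : Law f r) {x : ℝ} (hx : 0 < x) (hx1 : x < 1) :
    (∀ n, Summable (fun k => conv f k n)) ∧ HasSum (fun n => Ren f n * x ^ n) (1 - Fr f x)⁻¹ := by
  have h := double_sum (h := fun k n => conv f k n * x ^ n)
    (fun k n => mul_nonneg (L.conv_nonneg k n) (pow_nonneg hx.le n))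
    (fun k => L.conv_hasSum hx.le (hx1.trans L.hr) k)
    (hasSum_geometric_of_lt_one (L.Fr_nonneg hx.le) (L.Fr_lt_one hx.le hx1))
  constructor
  · intro n
    exact (summable_mul_right_iff (pow_ne_zero n hx.ne')).1 (h.1 n)
  · convert! h.2 using 1
    funext n
    rw [Ren, tsum_mul_right]

theorem Law.conv_summable (L : Law f r) (n : ℕ) : Summable (fun k => conv f k n) :=
  (L.ren (x := 1/2) (by norm_num) (by norm_num)).1 n

noncomputable def Fc (f : ℕ → ℝ) (z : ℂ) : ℂ := ∑' n, (f n : ℂ) * z ^ n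

theorem Fc_ofReal (x : ℝ) : Fc f x = (Fr f x : ℂ) := by
  unfold Fc Fr
  push_cast
  rfl

theorem Law.Fr_deriv (L : Law f r) : ∃ μ : ℝ, 0 < μ ∧ HasDerivAt (Fr f) μ 1 := by
  have hfp := ps_hasFP (𝕜 := ℝ) f (by linarith [L.hr] : 0 < r) (by
    intro x h1 h2
    simpa [Real.norm_of_nonneg (L.nonneg _)] using L.moments x h1 h2)
  have hd : DifferentiableAt ℝ (Fr f) 1 := by
    have := hfp.differentiableOn
    rw [Metric.eball_ofReal] at this
    refine (this 1 ?_).differentiableAt (Metric.isOpen_ball.mem_nhds ?_) <;> simpa using L.hr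
  refine ⟨deriv (Fr f) 1, ?_, hd.hasDerivAt⟩
  refine lt_of_lt_of_le L.one_pos ?_
  have ht := hasDerivAt_iff_tendsto_slope.1 hd.hasDerivAt
  have ht' : Tendsto (slope (Fr f) 1) (𝓝[<] 1) (𝓝 (deriv (Fr f) 1)) :=
    ht.mono_left (nhdsWithin_mono _ (fun x hx => ne_of_lt hx))
  refine ge_of_tendsto ht' ?_
  filter_upwards [Ioo_mem_nhdsLT (zero_lt_one (α := ℝ))] with x hx
  have := L.Fr_le hx.1.le hx.2.le
  rw [slope_def_field, L.Fr_one, le_div_iff_of_neg (by linarith [hx.2])]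
  linarith

theorem Law.Fc_ne_one (L : Law f r) {z : ℂ} (hz : ‖z‖ ≤ 1) (hz1 : z ≠ 1) : Fc f z ≠ 1 := by
  intro h
  have hs : Summable (fun n => (f n : ℂ) * z ^ n) := by
    refine Summable.of_norm_bounded L.sum.summable (fun n => ?_)
    rw [norm_mul, norm_pow, Complex.norm_real, Real.norm_of_nonneg (L.nonneg n)]
    exact mul_le_of_le_one_right (L.nonneg n) (pow_le_one₀ (norm_nonneg _) hz)
  have h1 : HasSum (fun n => f n * (z ^ n).re) 1 := by
    have := Complex.hasSum_re hs.hasSum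
    rw [show (∑' n, (f n : ℂ) * z ^ n) = 1 from h] at this
    simpa using this
  have h2 : HasSum (fun n => f n * (1 - (z ^ n).re)) 0 := by
    have := L.sum.sub h1
    simpa [mul_sub] using this
  have h3 : ∀ n, 0 ≤ f n * (1 - (z ^ n).re) := by
    intro n
    refine mul_nonneg (L.nonneg n) ?_
    have h4 := (Complex.re_le_norm (z ^ n))
    rw [norm_pow] at h4
    have := pow_le_one₀ (n := n) (norm_nonneg _) hz
    linarith
  have h5 := le_hasSum h2 1 (fun n _ => h3 n)
  rw [pow_one] at h5
  have h6 : 1 ≤ z.re := by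
    by_contra hc
    push Not at hc
    have := mul_pos L.one_pos (by linarith : 0 < 1 - z.re)
    linarith
  have h7 : z.re = 1 := le_antisymm ((Complex.re_le_norm z).trans hz) h6
  apply hz1
  have h8 : z.im = 0 := by
    have h9 := Complex.sq_norm z
    rw [Complex.normSq_apply, h7] at h9
    have h10 : ‖z‖ ^ 2 ≤ 1 := pow_le_one₀ (norm_nonneg _) hz
    nlinarith [mul_self_nonneg z.im]
  exact Complex.ext (by simpa using h7) (by simpa using h8)

theorem Law.renewal (L : Law f r) {μ : ℝ} (hμ : 0 < μ) (hd : HasDerivAt (Fr f) μ 1) :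
    Tendsto (Ren f) atTop (𝓝 μ⁻¹) := by
  have hr0 : 0 < r := by linarith [L.hr]
  have hFd : DifferentiableOn ℂ (Fc f) (Metric.ball 0 r) := by
    refine ps_differentiableOn (fun n => (f n : ℂ)) hr0 ?_
    intro x h1 h2
    simpa [abs_of_nonneg (L.nonneg _)] using L.moments x h1 h2
  have hball1 : Metric.ball (0 : ℂ) r ∈ 𝓝 (1 : ℂ) :=
    Metric.isOpen_ball.mem_nhds (by simpa using L.hr)
  have hFc1 : Fc f 1 = 1 := by
    have := Fc_ofReal (f := f) 1
    rw [L.Fr_one] at this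
    simpa using this
  have hderiv : deriv (Fc f) 1 = μ := by
    have h1 : HasDerivAt (Fc f) (deriv (Fc f) 1) ((1 : ℝ) : ℂ) := by
      simpa using (hFd.differentiableAt hball1).hasDerivAt
    have h2 := h1.comp_ofReal
    have h3 := hd.ofReal_comp
    have h4 : (fun x : ℝ => Fc f x) = fun x : ℝ => ((Fr f x : ℝ) : ℂ) := by
      funext x; exact Fc_ofReal x
    rw [h4] at h2
    exact h2.unique h3
  set D := dslope (Fc f) 1 with hD
  have hDd : DifferentiableOn ℂ D (Metric.ball 0 r) := (Complex.differentiableOn_dslope hball1).2 hFd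
  have hDne : ∀ z : ℂ, ‖z‖ ≤ 1 → D z ≠ 0 := by
    intro z hz
    by_cases h1 : z = 1
    · rw [h1, hD, dslope_same, hderiv]
      exact_mod_cast hμ.ne'
    · rw [hD, dslope_of_ne _ h1, slope_def_field, hFc1]
      exact div_ne_zero (sub_ne_zero.2 (L.Fc_ne_one hz h1)) (sub_ne_zero.2 h1)
  obtain ⟨r', hr', hne⟩ : ∃ r' : ℝ, 1 < r' ∧ Metric.ball (0 : ℂ) r' ⊆ Metric.ball 0 r ∩ D ⁻¹' {0}ᶜ := by
    have hopen : IsOpen (Metric.ball (0 : ℂ) r ∩ D ⁻¹' {0}ᶜ) :=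
      hDd.continuousOn.isOpen_inter_preimage Metric.isOpen_ball isOpen_compl_singleton
    have hsub : Metric.closedBall (0 : ℂ) 1 ⊆ Metric.ball (0 : ℂ) r ∩ D ⁻¹' {0}ᶜ := by
      intro z hz
      have hz' : ‖z‖ ≤ 1 := by simpa using hz
      exact ⟨by simpa using lt_of_le_of_lt hz' L.hr, hDne z hz'⟩
    obtain ⟨δ, hδ, h⟩ := (isCompact_closedBall (0 : ℂ) 1).exists_thickening_subset_open hopen hsub
    rw [thickening_closedBall hδ zero_le_one] at h
    exact ⟨δ + 1, by linarith, h⟩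
  have hHd : DifferentiableOn ℂ (fun z => (D z)⁻¹) (Metric.ball 0 r') :=
    (hDd.mono (fun z hz => (hne hz).1)).fun_inv (fun z hz => (hne hz).2)
  set v : ℕ → ℂ := fun n => (n.factorial : ℂ)⁻¹ * iteratedDeriv n (fun z => (D z)⁻¹) 0 with hv
  have hvs : ∀ z : ℂ, ‖z‖ < r' → HasSum (fun n => v n * z ^ n) (D z)⁻¹ := by
    intro z hz
    have := Complex.hasSum_taylorSeries_on_ball hHd (z := z) (by simpa using hz)
    convert! this using 1
    funext n
    simp only [hv, smul_eq_mul, sub_zero]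
    ring
  set w : ℕ → ℂ := fun n => (Ren f n : ℂ) - (if n = 0 then 0 else (Ren f (n - 1) : ℂ)) with hw
  have hvw : v = w := by
    refine ps_unique v w zero_lt_one (fun x hx hx1 => ⟨(D x)⁻¹, hvs x ?_, ?_⟩)
    · rw [Complex.norm_real, Real.norm_of_nonneg hx.le]; linarith
    · have h1 : HasSum (fun n => (Ren f n : ℂ) * (x : ℂ) ^ n) ((1 - Fr f x : ℝ) : ℂ)⁻¹ := by
        have := Complex.hasSum_ofReal.2 (L.ren hx hx1).2
        simpa using this
      have h2 : HasSum (fun n => (if n = 0 then 0 else (Ren f (n - 1) : ℂ)) * (x : ℂ) ^ n)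
          ((x : ℂ) * ((1 - Fr f x : ℝ) : ℂ)⁻¹) := by
        rw [← hasSum_nat_add_iff' 1]
        have := h1.mul_left (x : ℂ)
        simp
        convert! this using 1
        · funext n
          ring
        · simp
      have h3 := h1.sub h2
      have h4 : (D x)⁻¹ = ((1 - Fr f x : ℝ) : ℂ)⁻¹ - (x : ℂ) * ((1 - Fr f x : ℝ) : ℂ)⁻¹ := by
        have hx1' : (x : ℂ) ≠ 1 := by exact_mod_cast hx1.ne
        rw [hD, dslope_of_ne _ hx1', slope_def_field, hFc1, Fc_ofReal, inv_div]
        have : ((Fr f x : ℝ) : ℂ) - 1 ≠ 0 := by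
          rw [sub_ne_zero]; exact_mod_cast (L.Fr_lt_one hx.le hx1).ne
        have h' : (1 : ℂ) - ((Fr f x : ℝ) : ℂ) ≠ 0 := by
          intro h; apply this; linear_combination -h
        push_cast
        field_simp
        ring
      rw [h4]
      convert! h3 using 1
      funext n
      simp only [hw]
      ring
  have hpart : ∀ n, ∑ j ∈ Finset.range (n + 1), v j = (Ren f n : ℂ) := by
    intro n
    induction n with
    | zero => simp [hvw, hw]
    | succ n ih => rw [Finset.sum_range_succ, ih, hvw]; simp [hw]
  have hlim : Tendsto (fun n => (Ren f n : ℂ)) atTop (𝓝 ((μ⁻¹ : ℝ) : ℂ)) := by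
    have h1 := hvs 1 (by simpa using hr')
    simp only [one_pow, mul_one] at h1
    have h2 : (D 1)⁻¹ = ((μ⁻¹ : ℝ) : ℂ) := by
      rw [hD, dslope_same, hderiv]; simp
    rw [h2] at h1
    have h3 := (h1.tendsto_sum_nat).comp (tendsto_add_atTop_nat 1)
    refine h3.congr (fun n => ?_)
    exact hpart n
  have := (Complex.continuous_re.tendsto _).comp hlim
  simpa [Function.comp_def] using this

end MoonAux

end

section

namespace MoonAux
open Filter Topology

section
variable {f : ℕ → ℝ} {r : ℝ}

theorem Law.chernoff (L : Law f r) {x c δ : ℝ} (hx : 0 < x) (hxr : x < r)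
    (h1 : Fr f x * Real.exp (-δ) < 1) (n : ℕ) :
    ∑' k : ℕ, (if δ * (k - c * n) ≤ 0 then conv f k n else 0) ≤
      (1 - Fr f x * Real.exp (-δ))⁻¹ * (Real.exp (δ * c) / x) ^ n := by
  set φ := Fr f x * Real.exp (-δ) with hφ
  have hφ0 : 0 ≤ φ := mul_nonneg (L.Fr_nonneg hx.le) (Real.exp_pos _).le
  have hg := (hasSum_geometric_of_lt_one hφ0 h1).mul_right ((Real.exp (δ * c) / x) ^ n)
  have hle : ∀ k : ℕ, (if δ * (k - c * n) ≤ 0 then conv f k n else 0) ≤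
      φ ^ k * (Real.exp (δ * c) / x) ^ n := by
    intro k
    split_ifs with h
    · have h2 : conv f k n * x ^ n ≤ Fr f x ^ k :=
        le_hasSum (L.conv_hasSum hx.le hxr k) n
          (fun j _ => mul_nonneg (L.conv_nonneg k j) (pow_nonneg hx.le j))
      have h3 : conv f k n ≤ Fr f x ^ k / x ^ n := by
        rw [le_div_iff₀ (pow_pos hx n)]; exact h2
      have h4 : (1:ℝ) ≤ Real.exp (-δ) ^ k * Real.exp (δ * c) ^ n := by
        rw [← Real.exp_nat_mul, ← Real.exp_nat_mul, ← Real.exp_add]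
        apply Real.one_le_exp
        nlinarith
      have h5 : 0 ≤ Fr f x ^ k / x ^ n := div_nonneg (pow_nonneg (L.Fr_nonneg hx.le) k) (pow_pos hx n).le
      calc conv f k n ≤ Fr f x ^ k / x ^ n * 1 := by rw [mul_one]; exact h3
        _ ≤ Fr f x ^ k / x ^ n * (Real.exp (-δ) ^ k * Real.exp (δ * c) ^ n) :=
          mul_le_mul_of_nonneg_left h4 h5
        _ = _ := by rw [hφ, mul_pow, div_pow]; ring
    · positivity
  have hs : Summable (fun k : ℕ => (if δ * (k - c * n) ≤ 0 then conv f k n else 0)) := by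
    refine Summable.of_nonneg_of_le (fun k => ?_) hle hg.summable
    split_ifs
    · exact L.conv_nonneg k n
    · exact le_rfl
  exact hasSum_le hle hs.hasSum hg

theorem Law.exists_low (L : Law f r) {μ c : ℝ} (hd : HasDerivAt (Fr f) μ 1) (hc : 0 < c)
    (h : c * μ < 1) : ∃ x δ : ℝ, 0 < x ∧ x < r ∧ 0 < δ ∧ Fr f x * Real.exp (-δ) < 1 ∧
      Real.exp (δ * c) < x := by
  have h1 : HasDerivAt (fun x => Real.log x - c * Real.log (Fr f x)) (1 - c * μ) 1 := by
    have a := Real.hasDerivAt_log (one_ne_zero (α := ℝ))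
    have b := (hd.log (by rw [L.Fr_one]; norm_num)).const_mul c
    have e : (1:ℝ)⁻¹ - c * (μ / Fr f 1) = 1 - c * μ := by rw [L.Fr_one]; simp
    rw [← e]
    exact a.sub b
  rw [hasDerivAt_iff_tendsto_slope] at h1
  have h2 := h1.eventually (lt_mem_nhds (a := 0) (by linarith))
  have h3 : ∀ᶠ x in 𝓝[>] (1:ℝ), 0 < slope (fun x => Real.log x - c * Real.log (Fr f x)) 1 x :=
    h2.filter_mono (nhdsWithin_mono _ (fun y hy => ne_of_gt hy))
  have h4 : ∀ᶠ x in 𝓝[>] (1:ℝ), x < r :=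
    Filter.Eventually.filter_mono nhdsWithin_le_nhds (gt_mem_nhds L.hr)
  obtain ⟨x, ⟨hx1, hx2⟩, hx3⟩ := ((h3.and h4).and self_mem_nhdsWithin).exists
  have hx3 : 1 < x := hx3
  have hx0 : 0 < x := by linarith
  rw [slope_def_field, L.Fr_one] at hx1
  simp only [Real.log_one, mul_zero, sub_zero] at hx1
  have hx5 : 0 < x - 1 := by linarith
  have hx4 : 0 < Real.log x - c * Real.log (Fr f x) := by
    by_contra hcon
    push Not at hcon
    exact absurd hx1 (not_lt.2 (div_nonpos_of_nonpos_of_nonneg hcon hx5.le))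
  have hF := L.Fr_pos hx0 hx2
  have hl : Real.log (Fr f x) < Real.log x / c := by
    rw [lt_div_iff₀ hc]; linarith
  obtain ⟨δ, hδ1, hδ2⟩ := exists_between hl
  have : 0 ≤ Real.log (Fr f x) := Real.log_nonneg (L.Fr_ge_one hx3.le hx2)
  refine ⟨x, δ, hx0, hx2, by linarith, ?_, ?_⟩
  · rw [Real.exp_neg, ← div_eq_mul_inv, div_lt_one (Real.exp_pos _)]
    exact (Real.log_lt_iff_lt_exp hF).1 hδ1
  · rw [lt_div_iff₀ hc] at hδ2
    exact (Real.lt_log_iff_exp_lt hx0).1 hδ2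

theorem Law.exists_high (L : Law f r) {μ c : ℝ} (hd : HasDerivAt (Fr f) μ 1) (hc : 0 < c)
    (h : 1 < c * μ) : ∃ x δ : ℝ, 0 < x ∧ x < r ∧ δ < 0 ∧ Fr f x * Real.exp (-δ) < 1 ∧
      Real.exp (δ * c) < x := by
  have h1 : HasDerivAt (fun x => Real.log x - c * Real.log (Fr f x)) (1 - c * μ) 1 := by
    have a := Real.hasDerivAt_log (one_ne_zero (α := ℝ))
    have b := (hd.log (by rw [L.Fr_one]; norm_num)).const_mul c
    have e : (1:ℝ)⁻¹ - c * (μ / Fr f 1) = 1 - c * μ := by rw [L.Fr_one]; simp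
    rw [← e]
    exact a.sub b
  rw [hasDerivAt_iff_tendsto_slope] at h1
  have h2 := h1.eventually (gt_mem_nhds (by linarith : 1 - c * μ < 0))
  have h3 : ∀ᶠ x in 𝓝[<] (1:ℝ), slope (fun x => Real.log x - c * Real.log (Fr f x)) 1 x < 0 :=
    h2.filter_mono (nhdsWithin_mono _ (fun y hy => ne_of_lt hy))
  have h4 : ∀ᶠ x in 𝓝[<] (1:ℝ), 0 < x :=
    Filter.Eventually.filter_mono nhdsWithin_le_nhds (lt_mem_nhds zero_lt_one)
  obtain ⟨x, ⟨hx1, hx0⟩, hx3⟩ := ((h3.and h4).and self_mem_nhdsWithin).exists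
  have hx3 : x < 1 := hx3
  have hx2 : x < r := hx3.trans L.hr
  rw [slope_def_field, L.Fr_one] at hx1
  simp only [Real.log_one, mul_zero, sub_zero] at hx1
  have hx5 : x - 1 < 0 := by linarith
  have hx4 : 0 < Real.log x - c * Real.log (Fr f x) := by
    by_contra hcon
    push Not at hcon
    exact absurd hx1 (not_lt.2 (div_nonneg_of_nonpos hcon hx5.le))
  have hF := L.Fr_pos hx0 hx2
  have hl : Real.log (Fr f x) < Real.log x / c := by
    rw [lt_div_iff₀ hc]; linarith
  obtain ⟨δ, hδ1, hδ2⟩ := exists_between hl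
  have : Real.log x / c < 0 := div_neg_of_neg_of_pos (Real.log_neg hx0 hx3) hc
  refine ⟨x, δ, hx0, hx2, by linarith, ?_, ?_⟩
  · rw [Real.exp_neg, ← div_eq_mul_inv, div_lt_one (Real.exp_pos _)]
    exact (Real.log_lt_iff_lt_exp hF).1 hδ1
  · rw [lt_div_iff₀ hc] at hδ2
    exact (Real.lt_log_iff_exp_lt hx0).1 hδ2

theorem Law.tail_summable (L : Law f r) (P : ℕ → Prop) [DecidablePred P] (n : ℕ) :
    Summable (fun k : ℕ => if P k then conv f k n else 0) := by
  refine Summable.of_nonneg_of_le (fun k => ?_) (fun k => ?_) (L.conv_summable n)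
  · split_ifs
    · exact L.conv_nonneg k n
    · exact le_rfl
  · split_ifs
    · exact le_rfl
    · exact L.conv_nonneg k n

/-- The contribution of indices outside the window. -/
noncomputable def tail (f : ℕ → ℝ) (ν ε : ℝ) (n : ℕ) : ℝ :=
  ∑' k : ℕ, if ε * n < |k - ν * n| then conv f k n else 0

theorem Law.tail_nonneg (L : Law f r) (ν ε : ℝ) (n : ℕ) : 0 ≤ tail f ν ε n :=
  tsum_nonneg (fun k => by
    split_ifs
    · exact L.conv_nonneg k n
    · exact le_rfl)

theorem Law.tail_le (L : Law f r) {μ ε : ℝ} (hμ : 0 < μ) (hd : HasDerivAt (Fr f) μ 1)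
    (hε : 0 < ε) (hε' : ε < μ⁻¹) :
    ∃ C θ C' θ' : ℝ, 0 ≤ θ ∧ θ < 1 ∧ 0 ≤ θ' ∧ θ' < 1 ∧
      ∀ n : ℕ, tail f μ⁻¹ ε n ≤ C * θ ^ n + C' * θ' ^ n := by
  have hν : μ⁻¹ * μ = 1 := inv_mul_cancel₀ hμ.ne'
  obtain ⟨x, δ, hx, hxr, hδ, h1, h2⟩ := L.exists_low hd (c := μ⁻¹ - ε) (by linarith) (by nlinarith)
  obtain ⟨x', δ', hx', hxr', hδ', h1', h2'⟩ := L.exists_high hd (c := μ⁻¹ + ε) (by positivity)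
    (by nlinarith)
  refine ⟨(1 - Fr f x * Real.exp (-δ))⁻¹, _, (1 - Fr f x' * Real.exp (-δ'))⁻¹, _, (div_pos (Real.exp_pos _) hx).le, (div_lt_one hx).2 h2,
    (div_pos (Real.exp_pos _) hx').le, (div_lt_one hx').2 h2', fun n => ?_⟩
  refine le_trans ?_ (add_le_add (L.chernoff hx hxr h1 n (c := μ⁻¹ - ε))
    (L.chernoff hx' hxr' h1' n (c := μ⁻¹ + ε)))
  rw [tail, ← (L.tail_summable _ n).tsum_add (L.tail_summable _ n)]
  refine (L.tail_summable _ n).tsum_le_tsum (fun k => ?_)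
    ((L.tail_summable _ n).add (L.tail_summable _ n))
  have hc := L.conv_nonneg k n
  by_cases h : ε * n < |k - μ⁻¹ * n|
  · rw [if_pos h]
    rcases lt_abs.1 h with h | h
    · have : δ' * (k - (μ⁻¹ + ε) * n) ≤ 0 := mul_nonpos_of_nonpos_of_nonneg hδ'.le (by linarith)
      rw [if_pos this]
      split_ifs <;> linarith
    · have : δ * (k - (μ⁻¹ - ε) * n) ≤ 0 := mul_nonpos_of_nonneg_of_nonpos hδ.le (by linarith)
      rw [if_pos this]
      split_ifs <;> linarith
  · rw [if_neg h]
    split_ifs <;> linarith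

theorem Law.tail_tendsto (L : Law f r) {μ ε : ℝ} (hμ : 0 < μ) (hd : HasDerivAt (Fr f) μ 1)
    (hε : 0 < ε) (hε' : ε < μ⁻¹) :
    Tendsto (fun n : ℕ => (n : ℝ) ^ 2 * tail f μ⁻¹ ε n) atTop (𝓝 0) := by
  obtain ⟨C, θ, C', θ', h1, h2, h3, h4, h5⟩ := L.tail_le hμ hd hε hε'
  have a := (tendsto_pow_const_mul_const_pow_of_lt_one 2 h1 h2).const_mul C
  have b := (tendsto_pow_const_mul_const_pow_of_lt_one 2 h3 h4).const_mul C'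
  have c := a.add b
  simp only [mul_zero, add_zero] at c
  refine squeeze_zero (fun n => mul_nonneg (by positivity) (L.tail_nonneg _ _ n)) (fun n => ?_) c
  have := mul_le_mul_of_nonneg_left (h5 n) (by positivity : (0:ℝ) ≤ (n:ℝ)^2)
  linarith

theorem Law.window {α : ℕ → ℝ} {K ν η : ℝ} (hν : 0 < ν)
    (hlim : Tendsto (fun k : ℕ => α k * (k : ℝ) ^ (3 / 2 : ℝ)) atTop (𝓝 K)) (hη : 0 < η) :
    ∃ ε, 0 < ε ∧ ε < ν ∧ ∀ᶠ n : ℕ in atTop, ∀ k : ℕ, |k - ν * n| ≤ ε * n →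
      |(n : ℝ) ^ (3 / 2 : ℝ) * α k - K * ν ^ (-(3 / 2) : ℝ)| ≤ η := by
  have hc : ContinuousAt (fun p : ℝ × ℝ => p.1 * p.2 ^ (-(3 / 2) : ℝ)) (K, ν) :=
    continuousAt_fst.mul (continuousAt_snd.rpow_const (Or.inl hν.ne'))
  rw [Metric.continuousAt_iff] at hc
  obtain ⟨ε1, hε1, hc⟩ := hc η hη
  rw [Metric.tendsto_atTop] at hlim
  obtain ⟨K0, hK0⟩ := hlim ε1 hε1
  refine ⟨min (ε1 / 2) (ν / 2), by positivity, (min_le_right _ _).trans_lt (by linarith), ?_⟩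
  have ht : Tendsto (fun n : ℕ => ν / 2 * (n : ℝ)) atTop atTop :=
    tendsto_natCast_atTop_atTop.const_mul_atTop (by positivity)
  filter_upwards [ht.eventually_ge_atTop ((K0 : ℝ) + 1), eventually_ge_atTop 1] with n hn hn1 k hk
  have hn0 : (0 : ℝ) < n := by exact_mod_cast hn1
  have h1 : |(k : ℝ) - ν * n| ≤ ε1 / 2 * n :=
    hk.trans (mul_le_mul_of_nonneg_right (min_le_left _ _) hn0.le)
  have h2 : |(k : ℝ) - ν * n| ≤ ν / 2 * n :=
    hk.trans (mul_le_mul_of_nonneg_right (min_le_right _ _) hn0.le)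
  have h3 : (K0 : ℝ) + 1 ≤ k := by
    have := (abs_le.1 h2).1
    linarith
  have hk0 : (0 : ℝ) < k := by
    have : (0 : ℝ) ≤ K0 := Nat.cast_nonneg _
    linarith
  have h4 : K0 ≤ k := by
    have : (K0 : ℝ) ≤ k := by linarith
    exact_mod_cast this
  have h5 := hK0 k h4
  have h6 : |(k : ℝ) / n - ν| < ε1 := by
    have : (k : ℝ) / n - ν = (k - ν * n) / n := by field_simp
    rw [this, abs_div, abs_of_pos hn0, div_lt_iff₀ hn0]
    nlinarith
  have h7 := hc (x := (α k * (k : ℝ) ^ (3 / 2 : ℝ), (k : ℝ) / n)) (by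
    rw [Prod.dist_eq]
    exact max_lt h5 (by rw [Real.dist_eq]; exact h6))
  rw [Real.dist_eq] at h7
  have h8 : (n : ℝ) ^ (3 / 2 : ℝ) * α k =
      α k * (k : ℝ) ^ (3 / 2 : ℝ) * ((k : ℝ) / n) ^ (-(3 / 2) : ℝ) := by
    rw [Real.div_rpow hk0.le hn0.le, Real.rpow_neg hk0.le, Real.rpow_neg hn0.le]
    have a : (k : ℝ) ^ (3 / 2 : ℝ) ≠ 0 := (Real.rpow_pos_of_pos hk0 _).ne'
    have b : (n : ℝ) ^ (3 / 2 : ℝ) ≠ 0 := (Real.rpow_pos_of_pos hn0 _).ne'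
    field_simp
  rw [h8]
  exact h7.le

theorem Law.local_lim (L : Law f r) {α : ℕ → ℝ} {A K : ℝ} (hα0 : ∀ k, 0 ≤ α k) (hαA : ∀ k, α k ≤ A)
    (hlim : Tendsto (fun k : ℕ => α k * (k : ℝ) ^ (3 / 2 : ℝ)) atTop (𝓝 K)) :
    ∃ ν : ℝ, 0 < ν ∧ Tendsto (fun n : ℕ => (n : ℝ) ^ (3 / 2 : ℝ) * ∑' k, α k * conv f k n) atTop
      (𝓝 (K * ν ^ (-(3 / 2) : ℝ) * ν)) := by
  obtain ⟨μ, hμ, hd⟩ := L.Fr_deriv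
  have hren := L.renewal hμ hd
  have hν : 0 < μ⁻¹ := inv_pos.2 hμ
  refine ⟨μ⁻¹, hν, ?_⟩
  set ν := μ⁻¹ with hνdef
  set κ := K * ν ^ (-(3 / 2) : ℝ) with hκ
  have hs : ∀ n, Summable (fun k => α k * conv f k n) := fun n =>
    Summable.of_nonneg_of_le (fun k => mul_nonneg (hα0 k) (L.conv_nonneg k n))
      (fun k => mul_le_mul_of_nonneg_right (hαA k) (L.conv_nonneg k n))
      ((L.conv_summable n).mul_left A)
  have hA : 0 ≤ A := (hα0 0).trans (hαA 0)
  have hsum : ∀ n : ℕ, HasSum (fun k => ((n : ℝ) ^ (3 / 2 : ℝ) * α k - κ) * conv f k n)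
      ((n : ℝ) ^ (3 / 2 : ℝ) * ∑' k, α k * conv f k n - κ * Ren f n) := by
    intro n
    have := ((hs n).hasSum.mul_left ((n : ℝ) ^ (3 / 2 : ℝ))).sub
      ((L.conv_summable n).hasSum.mul_left κ)
    convert! this using 1
    funext k
    ring
  have hD : Tendsto (fun n : ℕ => (n : ℝ) ^ (3 / 2 : ℝ) * ∑' k, α k * conv f k n - κ * Ren f n)
      atTop (𝓝 0) := by
    rw [Metric.tendsto_atTop']
    intro η0 hη0
    set η := η0 / (ν + 1) with hη
    have hη' : 0 < η := by positivity
    obtain ⟨ε, hε, hεν, hwin⟩ := Law.window hν hlim hη'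
    have htail := L.tail_tendsto hμ hd hε hεν
    have hlimit := (hren.const_mul η).add (htail.const_mul (A + |κ|))
    rw [mul_zero, add_zero] at hlimit
    have hlt : η * ν < η0 := by
      rw [hη, div_mul_eq_mul_div, div_lt_iff₀ (by positivity)]
      nlinarith
    have hev := hlimit.eventually (gt_mem_nhds hlt)
    obtain ⟨N, hN⟩ := eventually_atTop.1 ((hwin.and hev).and (eventually_ge_atTop 1))
    refine ⟨N, fun n hn => ?_⟩
    obtain ⟨⟨hw, he⟩, hn1⟩ := hN n hn.le
    rw [Real.dist_eq, sub_zero]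
    refine lt_of_le_of_lt ?_ he
    have hn1' : (1 : ℝ) ≤ n := by exact_mod_cast hn1
    have hpw : (n : ℝ) ^ (3 / 2 : ℝ) ≤ (n : ℝ) ^ 2 := by
      rw [← Real.rpow_natCast]
      exact Real.rpow_le_rpow_of_exponent_le hn1' (by norm_num)
    have hpw0 : 0 ≤ (n : ℝ) ^ (3 / 2 : ℝ) := by positivity
    have hbd : ∀ k : ℕ, |((n : ℝ) ^ (3 / 2 : ℝ) * α k - κ) * conv f k n| ≤
        η * conv f k n + (A + |κ|) * (n : ℝ) ^ 2 *
          (if ε * n < |k - ν * n| then conv f k n else 0) := by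
      intro k
      have hc := L.conv_nonneg k n
      rw [abs_mul, abs_of_nonneg hc]
      by_cases h : ε * n < |k - ν * n|
      · rw [if_pos h]
        have h1 : |(n : ℝ) ^ (3 / 2 : ℝ) * α k - κ| ≤ (A + |κ|) * (n : ℝ) ^ 2 := by
          refine (abs_sub _ _).trans ?_
          rw [abs_of_nonneg (mul_nonneg hpw0 (hα0 k))]
          have a1 : (n : ℝ) ^ (3 / 2 : ℝ) * α k ≤ (n : ℝ) ^ 2 * A :=
            mul_le_mul hpw (hαA k) (hα0 k) (by positivity)
          have a2 : |κ| ≤ |κ| * (n : ℝ) ^ 2 := le_mul_of_one_le_right (abs_nonneg _) (one_le_pow₀ hn1')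
          linarith
        have := mul_le_mul_of_nonneg_right h1 hc
        have := mul_nonneg hη'.le hc
        linarith
      · rw [if_neg h]
        have := mul_le_mul_of_nonneg_right (hw k (not_lt.1 h)) hc
        linarith
    have hbs := ((L.conv_summable n).hasSum.mul_left η).add
      ((L.tail_summable (fun k : ℕ => ε * n < |k - ν * n|) n).hasSum.mul_left ((A + |κ|) * (n : ℝ) ^ 2))
    have h1 := (hsum n).norm_le_of_bounded hbs hbd
    rw [Real.norm_eq_abs] at h1
    refine h1.trans (le_of_eq ?_)
    rw [Ren, tail]
    ring
  have := hD.add (hren.const_mul κ)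
  rw [zero_add] at this
  refine this.congr (fun n => ?_)
  ring

end

end MoonAux

end

section

namespace MoonAux
open Filter Topology

/-- Coefficients of the tree function. -/
noncomputable def tc (k : ℕ) : ℝ := (k : ℝ) ^ k / k.factorial / k

noncomputable def tal (k : ℕ) : ℝ := tc k * Real.exp (-1) ^ k

theorem tc_nonneg (k : ℕ) : 0 ≤ tc k := by unfold tc; positivity

theorem tal_nonneg (k : ℕ) : 0 ≤ tal k := mul_nonneg (tc_nonneg k) (by positivity)

theorem tal_le_one (k : ℕ) : tal k ≤ 1 := by
  unfold tal tc
  rcases Nat.eq_zero_or_pos k with h | h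
  · subst h; simp
  · have h1 := Real.pow_div_factorial_le_exp (k : ℝ) (by positivity) k
    have hk : (1 : ℝ) ≤ k := by exact_mod_cast h
    have h2 : (k : ℝ) ^ k / k.factorial / k ≤ Real.exp k := by
      refine le_trans (div_le_self (by positivity) hk) h1
    calc (k : ℝ) ^ k / k.factorial / k * Real.exp (-1) ^ k ≤ Real.exp k * Real.exp (-1) ^ k :=
          mul_le_mul_of_nonneg_right h2 (by positivity)
      _ = 1 := by rw [← Real.exp_nat_mul, ← Real.exp_add]; simp

theorem tal_lim : Tendsto (fun k : ℕ => tal k * (k : ℝ) ^ (3 / 2 : ℝ)) atTop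
    (𝓝 (√2 * √Real.pi)⁻¹) := by
  have h := (Stirling.tendsto_stirlingSeq_sqrt_pi.const_mul (√2)).inv₀
    (by have := Real.pi_pos; positivity)
  refine h.congr' ?_
  filter_upwards [eventually_ge_atTop 1] with k hk
  have hk0 : (0 : ℝ) < k := by exact_mod_cast hk
  unfold Stirling.stirlingSeq tal tc
  have e1 : (k : ℝ) ^ (3 / 2 : ℝ) = k * √k := by
    rw [Real.sqrt_eq_rpow, ← Real.rpow_one_add' hk0.le (by norm_num)]
    norm_num
  rw [e1, Real.sqrt_mul (by norm_num), div_pow, Real.exp_neg, inv_pow]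
  have a1 : √(k : ℝ) ≠ 0 := by positivity
  have a2 : (k.factorial : ℝ) ≠ 0 := by positivity
  have a3 : √(2:ℝ) ≠ 0 := by positivity
  have a4 : Real.exp 1 ^ k ≠ 0 := by positivity
  field_simp

theorem tal_summable : Summable tal := by
  have h1 : Summable (fun n : ℕ => (n : ℝ) ^ (-(3 / 2) : ℝ)) := Real.summable_nat_rpow.2 (by norm_num)
  refine summable_of_isBigO_nat h1 ?_
  have h2 := tal_lim.isBigO_one ℝ
  have h3 := h2.mul (Asymptotics.isBigO_refl (fun n : ℕ => (n : ℝ) ^ (-(3 / 2) : ℝ)) atTop)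
  refine (h3.congr' ?_ (by simp))
  filter_upwards [eventually_ge_atTop 1] with k hk
  have hk0 : (0 : ℝ) < k := by exact_mod_cast hk
  rw [mul_assoc, ← Real.rpow_add hk0]
  norm_num

noncomputable def Tr (y : ℝ) : ℝ := ∑' k, tc k * y ^ k

theorem tc_summable {y : ℝ} (h0 : 0 ≤ y) (h : y ≤ Real.exp (-1)) : Summable (fun k => tc k * y ^ k) := by
  refine Summable.of_nonneg_of_le (fun k => mul_nonneg (tc_nonneg k) (by positivity)) (fun k => ?_)
    tal_summable
  exact mul_le_mul_of_nonneg_left (pow_le_pow_left₀ h0 h k) (tc_nonneg k)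

theorem alt_sum (n : ℕ) (hn : 2 ≤ n) :
    ∑ k ∈ Finset.range (n + 1), ((-1 : ℝ) ^ (n - k) * (n.choose k : ℝ)) * (k : ℝ) ^ (n - 1) = 0 := by
  have h := fwdDiff_iter_pow_eq_zero_of_lt (R := ℝ) (show n - 1 < n by omega)
  have h2 := congrFun h 0
  rw [fwdDiff_iter_eq_sum_shift] at h2
  simp only [zero_add, nsmul_eq_mul, mul_one, zsmul_eq_mul, Pi.zero_apply] at h2
  push_cast at h2
  exact h2

/-- The double series behind the inversion. -/
noncomputable def dbl (v : ℝ) (p : ℕ × ℕ) : ℝ :=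
  tc p.1 * v ^ p.1 * ((-(p.1 * v)) ^ p.2 / p.2.factorial)

theorem exp_hasSum (x : ℝ) : HasSum (fun n : ℕ => x ^ n / (n.factorial : ℝ)) (Real.exp x) := by
  rw [Real.exp_eq_exp_ℝ]
  exact NormedSpace.expSeries_div_hasSum_exp x

theorem dbl_diag (v : ℝ) (n : ℕ) : ∑ p ∈ Finset.HasAntidiagonal.antidiagonal n, dbl v p = if n = 1 then v else 0 := by
  rcases Nat.lt_or_ge n 2 with h | h
  · interval_cases n
    · simp [dbl, tc]
    · simp [dbl, tc, Finset.Nat.antidiagonal_succ]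
  · rw [if_neg (by omega), Finset.Nat.sum_antidiagonal_eq_sum_range_succ_mk]
    have : ∀ k ∈ Finset.range n.succ, dbl v (k, n - k) =
        ((-1 : ℝ) ^ (n - k) * (n.choose k : ℝ)) * (k : ℝ) ^ (n - 1) * (v ^ n / n.factorial) := by
      intro k hk
      have hk : k ≤ n := by simpa [Nat.lt_succ_iff] using hk
      unfold dbl tc
      rcases Nat.eq_zero_or_pos k with h0 | h0
      · subst h0
        simp
        left; omega
      · have hk0 : (k : ℝ) ≠ 0 := by positivity
        rw [Nat.cast_choose ℝ hk]
        have e1 : v ^ n = v ^ k * v ^ (n - k) := by rw [← pow_add]; congr 1; omega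
        have e2 : (k : ℝ) ^ k * (k : ℝ) ^ (n - k) = k * (k : ℝ) ^ (n - 1) := by
          rw [← pow_add, ← pow_succ']; congr 1; omega
        have e3 : (-((k : ℝ) * v)) ^ (n - k) = (-1) ^ (n - k) * (k : ℝ) ^ (n - k) * v ^ (n - k) := by
          rw [← mul_pow, ← mul_pow]; congr 1; ring
        simp only
        rw [e3, e1]
        field_simp
        linear_combination (v ^ k * v ^ (n - k)) * e2
    rw [Finset.sum_congr rfl this, ← Finset.sum_mul, alt_sum n h, zero_mul]

theorem Tr_small {v : ℝ} (h0 : 0 ≤ v) (h1 : v ≤ 1 / 4) : Tr (v * Real.exp (-v)) = v := by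
  have hsmall : v * Real.exp v ≤ Real.exp (-1) := by
    have a : v * Real.exp v ≤ 1 / 4 * Real.exp (1 / 4) :=
      mul_le_mul h1 (Real.exp_le_exp.2 h1) (Real.exp_pos _).le (by norm_num)
    refine a.trans ?_
    have b : Real.exp (1 / 4) * Real.exp 1 ≤ 4 := by
      have c : Real.exp (1 / 4) ≤ 4 / 3 := by
        have := Real.add_one_le_exp (-(1 / 4) : ℝ)
        rw [Real.exp_neg] at this
        have d := Real.exp_pos (1 / 4 : ℝ)
        rw [le_inv_comm₀ (by norm_num) d] at this
        norm_num at this ⊢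
        exact this
      have d := Real.exp_one_lt_d9
      have e := Real.exp_pos (1 : ℝ)
      nlinarith
    rw [Real.exp_neg, le_inv_comm₀ (by positivity) (Real.exp_pos _), mul_inv, ← div_eq_mul_inv,
      le_div_iff₀ (Real.exp_pos _)]
    linarith
  have hs : Summable (dbl v) := by
    rw [← summable_norm_iff]
    rw [summable_prod_of_nonneg (fun p => norm_nonneg _)]
    have hf : ∀ k : ℕ, HasSum (fun j => ‖dbl v (k, j)‖) (tc k * (v * Real.exp v) ^ k) := by
      intro k
      have := (exp_hasSum (k * v)).mul_left (tc k * v ^ k)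
      convert! this using 1
      · funext j
        have := tc_nonneg k
        simp only [dbl, norm_mul, norm_div, norm_pow, norm_neg, Real.norm_eq_abs, abs_of_nonneg this,
          abs_of_nonneg h0, Nat.abs_cast]
      · rw [mul_pow, ← Real.exp_nat_mul, mul_assoc]
    refine ⟨fun k => (hf k).summable, ?_⟩
    simp only [(hf _).tsum_eq]
    exact tc_summable (by positivity) hsmall
  have hA : HasSum (fun k => tc k * (v * Real.exp (-v)) ^ k) (∑' p, dbl v p) := by
    refine hs.hasSum.prod_fiberwise (fun k => ?_)
    have := (exp_hasSum (-(k * v))).mul_left (tc k * v ^ k)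
    convert! this using 1
    rw [mul_pow, ← Real.exp_nat_mul, mul_assoc, mul_neg]
  have hB : HasSum (fun n : ℕ => if n = 1 then v else 0) (∑' p, dbl v p) := by
    have := ((Finset.HasAntidiagonal.sigmaAntidiagonalEquivProd (A := ℕ)).hasSum_iff.2 hs.hasSum).sigma
      (g := fun n => ∑ p ∈ Finset.HasAntidiagonal.antidiagonal n, dbl v p) (fun n => by
        have := hasSum_fintype (fun c : Finset.HasAntidiagonal.antidiagonal n => dbl v c)
        rw [Finset.sum_coe_sort (Finset.HasAntidiagonal.antidiagonal n) (dbl v)] at this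
        exact this)
    simpa only [dbl_diag] using this
  have hC := hB.unique (hasSum_ite_eq 1 v)
  rw [hC] at hA
  exact hA.tsum_eq

theorem Tr_inv {v : ℝ} (h0 : 0 < v) (h1 : v < 1) : Tr (v * Real.exp (-v)) = v := by
  have hfp := ps_hasFP (𝕜 := ℝ) tc (Real.exp_pos (-1)) (by
    intro x hx0 hx1
    simpa [Real.norm_of_nonneg (tc_nonneg _)] using tc_summable hx0 hx1.le)
  have hT : AnalyticOnNhd ℝ Tr (Metric.eball 0 (ENNReal.ofReal (Real.exp (-1)))) := hfp.analyticOnNhd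
  have hcomp : AnalyticOnNhd ℝ (fun v => Tr (v * Real.exp (-v))) (Set.Ioo 0 1) := by
    intro w hw
    have ha : AnalyticAt ℝ (fun v : ℝ => v * Real.exp (-v)) w := by fun_prop
    refine AnalyticAt.fun_comp (g := Tr) (hT _ ?_) ha
    rw [Metric.eball_ofReal]
    have hw1 := hw.1
    have := Real.add_one_lt_exp (x := w - 1) (by linarith [hw.2])
    rw [mem_ball_zero_iff, Real.norm_of_nonneg (by positivity)]
    calc w * Real.exp (-w) < Real.exp (w - 1) * Real.exp (-w) :=
          mul_lt_mul_of_pos_right (by linarith) (Real.exp_pos _)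
      _ = Real.exp (-1) := by rw [← Real.exp_add]; congr 1; ring
  refine hcomp.eqOn_of_preconnected_of_eventuallyEq (g := id) (fun w _ => analyticAt_id)
    isPreconnected_Ioo (z₀ := 1 / 8) (by constructor <;> norm_num) ?_ ⟨h0, h1⟩
  filter_upwards [Ioo_mem_nhds (show (0:ℝ) < 1 / 8 by norm_num) (show (1/8:ℝ) < 1 / 4 by norm_num)]
    with w hw
  exact Tr_small hw.1.le hw.2.le

end MoonAux

end

section

namespace MoonAux
open Filter Topology

theorem exp_series_real (q e : ℕ → ℝ) {r : ℝ} (hr : 0 < r) (hq0 : q 0 = 0)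
    (hqn : ∀ n, 0 ≤ q n)
    (hq : ∀ x : ℝ, 0 ≤ x → x < r → Summable (fun n => q n * x ^ n))
    (he0 : e 0 = 1)
    (he : ∀ n : ℕ, ((n : ℝ) + 1) * e (n + 1) =
      ∑ i ∈ Finset.range (n + 1), ((i : ℝ) + 1) * q (i + 1) * e (n - i))
    {x : ℝ} (hx : 0 ≤ x) (hxr : x < r) :
    HasSum (fun n => e n * x ^ n) (Real.exp (∑' n, q n * x ^ n)) := by
  have := exp_series (fun n => (q n : ℂ)) (fun n => (e n : ℂ)) hr (by simp [hq0])
    (by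
      intro y h1 h2
      simpa [abs_of_nonneg (hqn _)] using hq y h1 h2)
    (by simp [he0])
    (by
      intro n
      have := congrArg (fun t : ℝ => (t : ℂ)) (he n)
      push_cast at this
      exact this)
    (z := (x : ℂ)) (by simpa [abs_of_nonneg hx] using hxr)
  rw [← Complex.hasSum_ofReal]
  push_cast
  exact this

/-- Coefficients of the exponential of a power series. -/
noncomputable def ex (q : ℕ → ℝ) : ℕ → ℝ
  | 0 => 1
  | n + 1 => (∑ i : Fin (n + 1), ((i : ℝ) + 1) * q (i + 1) * ex q (n - i)) / ((n : ℝ) + 1)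
termination_by n => n
decreasing_by omega

theorem ex_zero (q : ℕ → ℝ) : ex q 0 = 1 := by rw [ex]

theorem ex_succ (q : ℕ → ℝ) (n : ℕ) : ((n : ℝ) + 1) * ex q (n + 1) =
    ∑ i ∈ Finset.range (n + 1), ((i : ℝ) + 1) * q (i + 1) * ex q (n - i) := by
  rw [ex, Finset.sum_range]
  field_simp

theorem ex_nonneg {q : ℕ → ℝ} (hq : ∀ n, 0 ≤ q n) (n : ℕ) : 0 ≤ ex q n := by
  induction n using Nat.strong_induction_on with
  | _ n ih =>
    rcases n with _ | n
    · rw [ex_zero]; norm_num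
    · rw [ex]
      refine div_nonneg (Finset.sum_nonneg (fun i _ => ?_)) (by positivity)
      exact mul_nonneg (mul_nonneg (by positivity) (hq _)) (ih _ (by omega))

/-- The abstract enumerative data. -/
structure Data (δ : ℝ) (a m : ℕ → ℝ) : Prop where
  hδ0 : 0 ≤ δ
  hδ1 : δ ≤ 1
  a0 : a 0 = 0
  an : ∀ n, 0 ≤ a n
  a1 : a 1 = 1
  m0 : m 0 = 1
  m1 : m 1 = 1
  m2 : m 2 = 2 * a 2 + δ
  mn : ∀ n, 3 ≤ n → m n = 2 * a n
  recur : ∀ n : ℕ, (n : ℝ) * m n = ∑ j ∈ Finset.Icc 1 n, (∑ d ∈ j.divisors, (d : ℝ) * a d) * m (n - j)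
  mle : ∀ n, m n ≤ 8 ^ n

noncomputable def lc (a : ℕ → ℝ) (j : ℕ) : ℝ := (∑ d ∈ j.divisors, (d : ℝ) * a d) / j

noncomputable def qc (a m : ℕ → ℝ) (j : ℕ) : ℝ := if j = 0 then 0 else lc a j - m j / 2

theorem lc_split (a : ℕ → ℝ) {j : ℕ} (hj : j ≠ 0) :
    lc a j = a j + (∑ d ∈ j.properDivisors, (d : ℝ) * a d) / j := by
  have hj' : (j : ℝ) ≠ 0 := by exact_mod_cast hj
  rw [lc, ← Nat.insert_self_properDivisors hj, Finset.sum_insert (by simp)]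
  field_simp

section
variable {δ : ℝ} {a m : ℕ → ℝ}

theorem Data.a_le_m (D : Data δ a m) (n : ℕ) : a n ≤ m n := by
  have := D.an n
  rcases n with _ | _ | _ | n
  · rw [D.a0, D.m0]; norm_num
  · rw [D.a1, D.m1]
  · rw [D.m2]; linarith [D.hδ0]
  · rw [D.mn _ (by omega)]; linarith

theorem Data.m_nonneg (D : Data δ a m) (n : ℕ) : 0 ≤ m n := (D.an n).trans (D.a_le_m n)

theorem Data.prop_nonneg (D : Data δ a m) (j : ℕ) :
    0 ≤ (∑ d ∈ j.properDivisors, (d : ℝ) * a d) / j :=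
  div_nonneg (Finset.sum_nonneg (fun d _ => mul_nonneg (by positivity) (D.an d))) (by positivity)

theorem Data.q_one (D : Data δ a m) : qc a m 1 = 1 / 2 := by
  simp [qc, lc, D.a1, D.m1]; norm_num

theorem Data.q_nonneg (D : Data δ a m) (j : ℕ) : 0 ≤ qc a m j := by
  have h := D.prop_nonneg j
  rcases j with _ | _ | _ | j
  · simp [qc]
  · rw [D.q_one]; norm_num
  · have h2 : Nat.properDivisors 2 = {1} := by decide
    rw [qc, if_neg (by norm_num), lc_split a (by norm_num), h2, D.m2]
    simp [D.a1]
    linarith [D.hδ1]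
  · rw [qc, if_neg (by omega), lc_split a (by omega), D.mn _ (by omega)]
    linarith

theorem Data.q_le (D : Data δ a m) (j : ℕ) :
    qc a m j ≤ 1 / 2 + (∑ d ∈ j.properDivisors, (d : ℝ) * a d) / j := by
  have h := D.prop_nonneg j
  have ha := D.an j
  rcases j with _ | _ | _ | j
  · simp [qc]
  · rw [D.q_one]; linarith
  · rw [qc, if_neg (by norm_num), lc_split a (by norm_num), D.m2]
    linarith [D.hδ0]
  · rw [qc, if_neg (by omega), lc_split a (by omega), D.mn _ (by omega)]
    linarith

theorem Data.q_summable (D : Data δ a m) {w x : ℝ} (hw : w < 1)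
    (hs : Summable (fun n => m n * (w ^ 2) ^ n)) (hx : 0 ≤ x) (hxw : x < w) :
    Summable (fun j => qc a m j * x ^ j) := by
  have hw0 : 0 < w := hx.trans_lt hxw
  set K := ∑' n, m n * (w ^ 2) ^ n with hK
  have hK0 : 0 ≤ K := tsum_nonneg (fun n => mul_nonneg (D.m_nonneg n) (by positivity))
  have hb : ∀ d, a d * (w ^ 2) ^ d ≤ K := fun d =>
    (mul_le_mul_of_nonneg_right (D.a_le_m d) (by positivity)).trans
      (hs.le_tsum d (fun n _ => mul_nonneg (D.m_nonneg n) (by positivity)))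
  have hprop : ∀ j : ℕ, (∑ d ∈ j.properDivisors, (d : ℝ) * a d) / j * w ^ j ≤ j * K := by
    intro j
    rcases Nat.eq_zero_or_pos j with h0 | h0
    · subst h0; simp
    have hj0 : (0 : ℝ) < j := by exact_mod_cast h0
    have h1 : ∀ d ∈ j.properDivisors, (d : ℝ) * a d * w ^ j ≤ j * K := by
      intro d hd
      rw [Nat.mem_properDivisors] at hd
      obtain ⟨⟨e, he⟩, hlt⟩ := hd
      have he2 : 2 ≤ e := by
        rcases e with _ | _ | e
        · omega
        · omega
        · omega
      have h2d : 2 * d ≤ j := by rw [he]; nlinarith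
      have hpw : w ^ j ≤ (w ^ 2) ^ d := by
        rw [← pow_mul]
        exact pow_le_pow_of_le_one hw0.le hw.le h2d
      have hdj : (d : ℝ) ≤ j := by exact_mod_cast hlt.le
      calc (d : ℝ) * a d * w ^ j = d * (a d * w ^ j) := by ring
        _ ≤ j * K := by
          refine mul_le_mul hdj ?_ (mul_nonneg (D.an d) (by positivity)) hj0.le
          exact (mul_le_mul_of_nonneg_left hpw (D.an d)).trans (hb d)
    rw [div_mul_eq_mul_div, div_le_iff₀ hj0, Finset.sum_mul]
    refine (Finset.sum_le_card_nsmul _ _ _ h1).trans ?_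
    rw [nsmul_eq_mul]
    have hcard : (j.properDivisors.card : ℝ) ≤ j := by
      have := Finset.card_le_card (Finset.filter_subset (fun d => d ∣ j) (Finset.Ico 1 j))
      have h3 : j.properDivisors.card ≤ j := by
        rw [Nat.properDivisors]
        exact this.trans (by simp)
      exact_mod_cast h3
    have : 0 ≤ (j : ℝ) * K := by positivity
    nlinarith
  have hρ : ‖x / w‖ < 1 := by
    rw [Real.norm_of_nonneg (div_nonneg hx hw0.le), div_lt_one hw0]; exact hxw
  have hs1 : Summable (fun j : ℕ => (1 / 2 : ℝ) * x ^ j) :=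
    (summable_geometric_of_lt_one hx (hxw.trans hw)).mul_left _
  have hs2 : Summable (fun j : ℕ => K * ((j : ℝ) ^ 1 * (x / w) ^ j)) :=
    (summable_pow_mul_geometric_of_norm_lt_one 1 hρ).mul_left K
  refine Summable.of_nonneg_of_le (fun j => mul_nonneg (D.q_nonneg j) (by positivity)) (fun j => ?_)
    (hs1.add hs2)
  have h1 := mul_le_mul_of_nonneg_right (D.q_le j) (pow_nonneg hx j)
  have h2 := mul_le_mul_of_nonneg_right (hprop j) (pow_nonneg (div_nonneg hx hw0.le) j)
  have h3 : w ^ j * (x / w) ^ j = x ^ j := by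
    rw [← mul_pow]; congr 1; field_simp
  rw [mul_assoc, h3] at h2
  linarith

noncomputable def Mf (m : ℕ → ℝ) (x : ℝ) : ℝ := ∑' n, m n * x ^ n
noncomputable def Qf (a m : ℕ → ℝ) (x : ℝ) : ℝ := ∑' n, qc a m n * x ^ n
noncomputable def cc : ℝ := Real.exp (-(1 / 2)) / 2
noncomputable def Bf (a m : ℕ → ℝ) (x : ℝ) : ℝ := cc * Real.exp (Qf a m x)

theorem cc_pos : 0 < cc := by unfold cc; positivity

theorem Data.m_down (D : Data δ a m) {x y : ℝ} (h : Summable (fun n => m n * x ^ n)) (hy : 0 ≤ y)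
    (hyx : y ≤ x) : Summable (fun n => m n * y ^ n) :=
  Summable.of_nonneg_of_le (fun n => mul_nonneg (D.m_nonneg n) (by positivity))
    (fun n => mul_le_mul_of_nonneg_left (pow_le_pow_left₀ hy hyx n) (D.m_nonneg n)) h

theorem Data.M_pos (D : Data δ a m) {y : ℝ} (h : Summable (fun n => m n * y ^ n)) (hy : 0 ≤ y) :
    1 ≤ Mf m y := by
  have := h.le_tsum 0 (fun n _ => mul_nonneg (D.m_nonneg n) (by positivity))
  simpa [D.m0, Mf] using this

theorem Data.FE (D : Data δ a m) {x y : ℝ} (hx1 : x < 1)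
    (hs : Summable (fun n => m n * x ^ n)) (hy : 0 ≤ y) (hyx : y < x) :
    Mf m y / 2 * Real.exp (-(Mf m y / 2)) = Bf a m y := by
  have hx0 : 0 < x := hy.trans_lt hyx
  have hsq : Summable (fun n => m n * (√x ^ 2) ^ n) := by rw [Real.sq_sqrt hx0.le]; exact hs
  have hsx1 : √x < 1 := by rw [Real.sqrt_lt' one_pos]; linarith
  have hxs : x < √x := by
    rw [Real.lt_sqrt hx0.le]; nlinarith
  have hQ : ∀ z : ℝ, 0 ≤ z → z < x → Summable (fun j => qc a m j * z ^ j) := fun z h0 h1 =>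
    D.q_summable hsx1 hsq h0 (h1.trans hxs)
  have hL : ∀ z : ℝ, 0 ≤ z → z < x → HasSum (fun j => lc a j * z ^ j)
      (Qf a m z + (Mf m z - 1) / 2) := by
    intro z h0 h1
    have hM := (D.m_down hs h0 h1.le).hasSum
    have hone := hasSum_ite_eq (0 : ℕ) (1 : ℝ)
    have := (hQ z h0 h1).hasSum.add ((hM.sub hone).div_const 2)
    convert! this using 1
    funext j
    by_cases hj : j = 0
    · subst hj; simp [lc, qc, D.m0]
    · simp only [qc, if_neg hj]; ring
  have hlrec : ∀ n : ℕ, ((n : ℝ) + 1) * m (n + 1) =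
      ∑ i ∈ Finset.range (n + 1), ((i : ℝ) + 1) * lc a (i + 1) * m (n - i) := by
    intro n
    have h := D.recur (n + 1)
    push_cast at h
    rw [h, ← Finset.Ico_succ_right_eq_Icc, Finset.sum_Ico_eq_sum_range]
    simp only [Order.succ_eq_add_one, Nat.add_sub_cancel]
    refine Finset.sum_congr rfl (fun i _ => ?_)
    have e1 : n + 1 - (1 + i) = n - i := by omega
    rw [e1, add_comm 1 i, lc]
    have : ((i : ℝ) + 1) ≠ 0 := by positivity
    push_cast
    field_simp
  have hexp := exp_series_real (lc a) m hx0 (by simp [lc])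
    (fun n => div_nonneg (Finset.sum_nonneg (fun d _ => mul_nonneg (by positivity) (D.an d)))
      (by positivity))
    (fun z h0 h1 => (hL z h0 h1).summable) D.m0 hlrec hy hyx
  have hM : Mf m y = Real.exp (Qf a m y + (Mf m y - 1) / 2) := by
    rw [← (hL y hy hyx).tsum_eq]
    exact hexp.tsum_eq
  rw [Bf, cc]
  calc Mf m y / 2 * Real.exp (-(Mf m y / 2))
      = Real.exp (Qf a m y + (Mf m y - 1) / 2) / 2 * Real.exp (-(Mf m y / 2)) := by rw [← hM]
    _ = Real.exp (Qf a m y + (Mf m y - 1) / 2 + -(Mf m y / 2)) / 2 := by rw [Real.exp_add _ (-(Mf m y / 2))]; ring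
    _ = Real.exp (-(1/2) + Qf a m y) / 2 := by congr 2; ring
    _ = _ := by rw [Real.exp_add]; ring

theorem Data.B_le (D : Data δ a m) {x y : ℝ} (hx1 : x < 1)
    (hs : Summable (fun n => m n * x ^ n)) (hy : 0 ≤ y) (hyx : y < x) :
    Bf a m y ≤ Real.exp (-1) := by
  rw [← D.FE hx1 hs hy hyx]
  set u := Mf m y / 2
  have := Real.add_one_le_exp (u - 1)
  calc u * Real.exp (-u) ≤ Real.exp (u - 1) * Real.exp (-u) :=
        mul_le_mul_of_nonneg_right (by linarith) (Real.exp_pos _).le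
    _ = Real.exp (-1) := by rw [← Real.exp_add]; congr 1; ring

theorem Data.lt_half (D : Data δ a m) {x y : ℝ} (hx1 : x < 1)
    (hs : Summable (fun n => m n * x ^ n)) (hy : 0 ≤ y) (hyx : y < x) : y < 1 / 2 := by
  have h := D.B_le hx1 hs hy hyx
  have hx0 : 0 < x := hy.trans_lt hyx
  have hsq : Summable (fun n => m n * (√x ^ 2) ^ n) := by rw [Real.sq_sqrt hx0.le]; exact hs
  have hsx1 : √x < 1 := by rw [Real.sqrt_lt' one_pos]; linarith
  have hxs : x < √x := by
    rw [Real.lt_sqrt hx0.le]; nlinarith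
  have hQ := D.q_summable hsx1 hsq hy (hyx.trans hxs)
  have hge : 1 / 2 * y ≤ Qf a m y := by
    have := hQ.le_tsum 1 (fun n _ => mul_nonneg (D.q_nonneg n) (by positivity))
    simpa [D.q_one, Qf] using this
  by_contra hcon
  push Not at hcon
  have h1 : Real.exp (-(1/2)) / 2 * Real.exp (1/4) ≤ Real.exp (-1) :=
    le_trans (mul_le_mul_of_nonneg_left (Real.exp_le_exp.2 (by linarith)) cc_pos.le) h
  have h2 : Real.exp (3/4) ≤ 2 := by
    have h3 := mul_le_mul_of_nonneg_right h1 (Real.exp_pos 1).le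
    have e1 : Real.exp (-(1/2)) / 2 * Real.exp (1/4) * Real.exp 1 = Real.exp (3/4) / 2 := by
      rw [show (3/4 : ℝ) = -(1/2) + 1/4 + 1 by norm_num, Real.exp_add, Real.exp_add]; ring
    rw [e1, ← Real.exp_add] at h3
    norm_num at h3
    linarith
  have h3 : Real.exp 1 ^ 3 = Real.exp (3/4) ^ 4 := by
    rw [← Real.exp_nat_mul, ← Real.exp_nat_mul]; norm_num
  have h4 : Real.exp (3/4) ^ 4 ≤ 2 ^ 4 := pow_le_pow_left₀ (Real.exp_pos _).le h2 4
  have h5 := Real.exp_one_gt_d9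
  have h6 : (2.7 : ℝ) ^ 3 ≤ Real.exp 1 ^ 3 := pow_le_pow_left₀ (by norm_num) (by linarith) 3
  rw [h3] at h6
  have h7 : (2.7 : ℝ) ^ 3 ≤ 2 ^ 4 := h6.trans h4
  norm_num at h7

/-- The radius of convergence. -/
theorem Data.exists_R (D : Data δ a m) : ∃ R : ℝ, 0 < R ∧ R < 1 ∧
    (∀ y, 0 ≤ y → y < R → Summable (fun n => m n * y ^ n)) ∧
    (∀ y, 0 ≤ y → Summable (fun n => m n * y ^ n) → y ≤ R) := by
  set S : Set ℝ := {x | 0 ≤ x ∧ Summable (fun n => m n * x ^ n)} with hS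
  have h9 : (1 / 9 : ℝ) ∈ S := by
    refine ⟨by norm_num, ?_⟩
    refine Summable.of_nonneg_of_le (fun n => mul_nonneg (D.m_nonneg n) (by positivity)) (fun n => ?_)
      (summable_geometric_of_lt_one (r := 8 / 9) (by norm_num) (by norm_num))
    calc m n * (1 / 9) ^ n ≤ 8 ^ n * (1 / 9) ^ n :=
          mul_le_mul_of_nonneg_right (D.mle n) (by positivity)
      _ = _ := by rw [← mul_pow]; norm_num
  have hub : ∀ x ∈ S, x ≤ 1 / 2 := by
    intro x hx
    by_contra hcon
    push Not at hcon
    have h1 : (1 / 2 : ℝ) < min x (3 / 4) := lt_min hcon (by norm_num)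
    have h2 := D.lt_half (x := min x (3 / 4)) (y := 1 / 2)
      ((min_le_right _ _).trans_lt (by norm_num))
      (D.m_down hx.2 (by linarith) (min_le_left _ _)) (by norm_num) h1
    exact lt_irrefl _ h2
  have hbdd : BddAbove S := ⟨1 / 2, hub⟩
  refine ⟨sSup S, ?_, ?_, ?_, ?_⟩
  · have := le_csSup hbdd h9
    linarith
  · have := csSup_le ⟨_, h9⟩ hub
    linarith
  · intro y hy hyR
    obtain ⟨x, hx, hyx⟩ := exists_lt_of_lt_csSup ⟨_, h9⟩ hyR
    exact D.m_down hx.2 hy hyx.le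
  · intro y hy hs
    exact le_csSup hbdd ⟨hy, hs⟩

/-- The power series `c exp(Q)`. -/
noncomputable def Pc (a m : ℕ → ℝ) : PowerSeries ℝ := PowerSeries.mk (fun n => cc * ex (qc a m) n)

theorem Data.P_nonneg (D : Data δ a m) (n : ℕ) : 0 ≤ (Pc a m).coeff n := by
  rw [Pc, PowerSeries.coeff_mk]
  exact mul_nonneg cc_pos.le (ex_nonneg D.q_nonneg n)

/-- Coefficients of the composition with the tree function. -/
noncomputable def uh (a m : ℕ → ℝ) (n : ℕ) : ℝ := ∑' k, tc k * ((Pc a m) ^ k).coeff n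

theorem Data.uh_hasSum (D : Data δ a m) {x : ℝ} (hx : 0 ≤ x)
    (hP : HasSum (fun n => (Pc a m).coeff n * x ^ n) (Bf a m x)) (hB : Bf a m x ≤ Real.exp (-1)) :
    HasSum (fun n => uh a m n * x ^ n) (Tr (Bf a m x)) := by
  have hB0 : 0 ≤ Bf a m x := mul_nonneg cc_pos.le (Real.exp_pos _).le
  have h := (double_sum (h := fun k n => tc k * ((Pc a m) ^ k).coeff n * x ^ n)
    (fun k n => mul_nonneg (mul_nonneg (tc_nonneg k) (pow_coeff_nonneg D.P_nonneg k n))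
      (by positivity))
    (s := fun k => tc k * Bf a m x ^ k)
    (fun k => by
      simpa [mul_assoc] using (pow_hasSum D.P_nonneg hx hP k).mul_left (tc k))
    (tc_summable hB0 hB).hasSum).2
  simp only [tsum_mul_right] at h
  exact h

theorem Data.main (D : Data δ a m) : ∃ C R : ℝ, 0 < C ∧ 0 < R ∧ R < 1 ∧
    Tendsto (fun n : ℕ => a n * R ^ n * (n : ℝ) ^ (3 / 2 : ℝ)) atTop (𝓝 C) := by
  obtain ⟨R, hR0, hR1, hRs, hRmax⟩ := D.exists_R
  have hsR0 : 0 < √R := Real.sqrt_pos.2 hR0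
  have hsR1 : √R < 1 := by rw [Real.sqrt_lt' one_pos]; linarith
  have hsq : √R ^ 2 = R := Real.sq_sqrt hR0.le
  have hRsR : R < √R := by
    rw [Real.lt_sqrt hR0.le]; nlinarith
  have hQ : ∀ x : ℝ, 0 ≤ x → x < √R → Summable (fun j => qc a m j * x ^ j) := by
    intro x hx hxR
    obtain ⟨w, hxw, hwR⟩ := exists_between hxR
    refine D.q_summable (hwR.trans hsR1) (hRs (w ^ 2) (by positivity) ?_) hx hxw
    nlinarith
  have hQcont : ContinuousAt (Qf a m) R := by
    have hfp := ps_hasFP (𝕜 := ℝ) (qc a m) hsR0 (by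
      intro x h1 h2
      simpa [Real.norm_of_nonneg (D.q_nonneg _)] using hQ x h1 h2)
    have := hfp.analyticOnNhd R (by
      rw [Metric.eball_ofReal, mem_ball_zero_iff, Real.norm_of_nonneg hR0.le]; exact hRsR)
    exact this.continuousAt
  have hBcont : ContinuousAt (Bf a m) R := hQcont.rexp.const_mul cc
  have hP : ∀ x : ℝ, 0 ≤ x → x < √R → HasSum (fun n => (Pc a m).coeff n * x ^ n) (Bf a m x) := by
    intro x hx hxR
    have := (exp_series_real (qc a m) (ex (qc a m)) hsR0 (by simp [qc]) D.q_nonneg hQ (ex_zero _)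
      (ex_succ _) hx hxR).mul_left cc
    simpa [Pc, mul_assoc, Bf, Qf] using this
  -- identification of coefficients
  have hu : uh a m = fun n => m n / 2 := by
    have hr : (0 : ℝ) < min (1 / 16) R := lt_min (by norm_num) hR0
    refine ps_unique_real _ _ hr (fun x hx0 hx1 => ?_)
    have hx16 : x < 1 / 16 := hx1.trans_le (min_le_left _ _)
    have hxR : x < R := hx1.trans_le (min_le_right _ _)
    obtain ⟨y, hxy, hyR⟩ := exists_between hxR
    have hy := hRs y (by linarith) hyR
    have hms := hRs x hx0.le hxR
    have hFE := D.FE (hyR.trans hR1) hy hx0.le hxy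
    have hB := D.B_le (hyR.trans hR1) hy hx0.le hxy
    have h1 := D.M_pos hms hx0.le
    have h2 : Mf m x < 2 := by
      have g := hasSum_geometric_of_lt_one (r := 8 * x) (by linarith) (by linarith)
      have h3 : Mf m x ≤ (1 - 8 * x)⁻¹ := by
        refine hasSum_le (fun n => ?_) hms.hasSum g
        rw [mul_pow]
        exact mul_le_mul_of_nonneg_right (D.mle n) (by positivity)
      refine h3.trans_lt ?_
      rw [inv_lt_comm₀ (by linarith) (by norm_num)]
      linarith
    refine ⟨Mf m x / 2, ?_, ?_⟩
    · have h4 := D.uh_hasSum hx0.le (hP x hx0.le (hxR.trans hRsR)) hB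
      rw [← hFE, Tr_inv (by linarith) (by linarith)] at h4
      exact h4
    · have := hms.hasSum.div_const 2
      convert! this using 1
      funext n
      ring
  -- criticality
  have hBR : Bf a m R = Real.exp (-1) := by
    refine le_antisymm ?_ ?_
    · refine le_of_tendsto (hBcont.tendsto.mono_left (nhdsWithin_le_nhds (s := Set.Iio R))) ?_
      filter_upwards [Ioo_mem_nhdsLT hR0] with y hy
      obtain ⟨x, hyx, hxR⟩ := exists_between hy.2
      exact D.B_le (hxR.trans hR1) (hRs x (by linarith [hy.1]) hxR) hy.1.le hyx
    · by_contra hcon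
      push Not at hcon
      have hev : ∀ᶠ x in 𝓝[>] R, Bf a m x < Real.exp (-1) :=
        (hBcont.eventually (gt_mem_nhds hcon)).filter_mono nhdsWithin_le_nhds
      obtain ⟨x, hx1, hx2⟩ := (hev.and (Ioo_mem_nhdsGT hRsR)).exists
      have hx0 : 0 ≤ x := by linarith [hx2.1]
      have h4 := (D.uh_hasSum hx0 (hP x hx0 hx2.2) hx1.le).summable
      rw [hu] at h4
      have h5 : Summable (fun n => m n * x ^ n) := by
        refine (h4.mul_left 2).congr (fun n => ?_)
        ring
      have := hRmax x hx0 h5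
      linarith [hx2.1]
  -- the probability law
  set f : ℕ → ℝ := fun n => Real.exp 1 * ((Pc a m).coeff n * R ^ n) with hf
  have he1 : Real.exp 1 * Real.exp (-1) = 1 := by rw [← Real.exp_add]; simp
  have L : Law f (√R)⁻¹ := by
    refine ⟨fun n => ?_, ?_, ?_, ?_, ?_⟩
    · exact mul_nonneg (Real.exp_pos _).le (mul_nonneg (D.P_nonneg n) (by positivity))
    · have : ex (qc a m) 1 = 1 / 2 := by
        have h := ex_succ (qc a m) 0
        simpa [ex_zero, D.q_one] using h
      simp only [hf, Pc, PowerSeries.coeff_mk, this]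
      have := cc_pos
      positivity
    · have := (hP R hR0.le hRsR).mul_left (Real.exp 1)
      rw [hBR, he1] at this
      exact this
    · exact (one_lt_inv₀ hsR0).2 hsR1
    · intro x hx hxr
      have hRx : R * x < √R := by
        have h1 : R * x < R * (√R)⁻¹ := mul_lt_mul_of_pos_left hxr hR0
        have h2 : R * (√R)⁻¹ = √R := by
          field_simp
          exact hsq.symm
        rwa [h2] at h1
      have := ((hP (R * x) (by positivity) hRx).mul_left (Real.exp 1)).summable
      refine this.congr (fun n => ?_)
      simp only [hf]
      rw [mul_pow]; ring
  have hconv : ∀ k n, conv f k n = Real.exp 1 ^ k * (((Pc a m) ^ k).coeff n * R ^ n) := by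
    intro k n
    have h1 : PowerSeries.mk f = PowerSeries.C (Real.exp 1) * PowerSeries.rescale R (Pc a m) := by
      ext j
      rw [PowerSeries.coeff_C_mul, PowerSeries.coeff_rescale, PowerSeries.coeff_mk]
      simp only [hf]; ring
    rw [conv, h1, mul_pow, ← map_pow, ← map_pow, PowerSeries.coeff_C_mul, PowerSeries.coeff_rescale]
    ring
  have hsum : ∀ n, ∑' k, tal k * conv f k n = m n / 2 * R ^ n := by
    intro n
    have h1 : ∀ k, tal k * conv f k n = tc k * ((Pc a m) ^ k).coeff n * R ^ n := by
      intro k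
      rw [hconv, tal]
      have : Real.exp (-1) ^ k * Real.exp 1 ^ k = 1 := by
        rw [← mul_pow, mul_comm, he1, one_pow]
      linear_combination (tc k * ((Pc a m) ^ k).coeff n * R ^ n) * this
    simp only [h1]
    rw [tsum_mul_right]
    have := congrFun hu n
    rw [uh] at this
    rw [this]
  obtain ⟨ν, hν, hlim⟩ := L.local_lim tal_nonneg tal_le_one tal_lim
  refine ⟨_, R, ?_, hR0, hR1, hlim.congr' ?_⟩
  · have := Real.pi_pos
    positivity
  · filter_upwards [eventually_ge_atTop 3] with n hn
    rw [hsum, D.mn n hn]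
    ring

theorem Data.final (D : Data δ a m) : ∃ C R : ℝ, 0 < C ∧ R ∈ Set.Ioo (0 : ℝ) 1 ∧
    Tendsto (fun n : ℕ => a n / (C * R ^ (-(n : ℝ)) * (n : ℝ) ^ (-(3 / 2) : ℝ))) atTop (𝓝 1) := by
  obtain ⟨C, R, hC, hR0, hR1, h⟩ := D.main
  refine ⟨C, R, hC, ⟨hR0, hR1⟩, ?_⟩
  have h2 := h.div_const C
  rw [div_self hC.ne'] at h2
  refine h2.congr' ?_
  filter_upwards [eventually_ge_atTop 1] with n hn
  have hn0 : (0 : ℝ) < n := by exact_mod_cast hn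
  rw [Real.rpow_neg hR0.le, Real.rpow_natCast, Real.rpow_neg hn0.le]
  have : (n : ℝ) ^ (3 / 2 : ℝ) ≠ 0 := (Real.rpow_pos_of_pos hn0 _).ne'
  have : R ^ n ≠ 0 := (pow_pos hR0 n).ne'
  field_simp

end

end MoonAux

end


namespace MoonAux

theorem data_of (E : Set ℕ) (h1 : 1 ∉ E) (h3 : ∀ n, 3 ≤ n → n ∉ E) {δ : ℝ} (hδ0 : 0 ≤ δ)
    (hδ1 : δ ≤ 1) (h2 : (mN E 2 : ℝ) = 2 * aN E 2 + δ) :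
    Data δ (fun n => (aN E n : ℝ)) (fun n => (mN E n : ℝ)) where
  hδ0 := hδ0
  hδ1 := hδ1
  a0 := by simp [aN_zero]
  an := fun n => Nat.cast_nonneg _
  a1 := by simp [aN_one h1]
  m0 := by simp [mN_zero]
  m1 := by simp [mN_one h1]
  m2 := h2
  mn := fun n hn => by
    have a := mN_split E n
    have b := aN_eq_bN (by omega : 2 ≤ n) (h3 n hn)
    rw [← b] at a
    simp only [a]
    push_cast
    ring
  recur := fun n => by
    have := double_count E n
    exact_mod_cast this
  mle := fun n => by exact_mod_cast mN_le h1 n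

theorem data_all : Data 0 (fun n => (aN ∅ n : ℝ)) (fun n => (mN ∅ n : ℝ)) := by
  refine data_of ∅ (by simp) (by simp) le_rfl zero_le_one ?_
  have a := mN_split ∅ 2
  have b := aN_eq_bN (E := ∅) (le_refl 2) (by simp)
  rw [← b] at a
  rw [a]
  push_cast
  ring

theorem data_two : Data 1 (fun n => (aN {2} n : ℝ)) (fun n => (mN {2} n : ℝ)) := by
  refine data_of {2} (by simp) (by intro n hn; simp; omega) zero_le_one le_rfl ?_
  rw [mN_split, bN_two (by simp), aN_of_mem (by simp)]
  norm_num

end MoonAux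

/-- **Moon.** There are constants `C₀ > 0`, `ρ₀ ∈ (0,1)`, `C₂ > 0`, `ρ₂ ∈ (0,1)` with
`Hₙ ~ C₀ ρ₀⁻ⁿ n^{-3/2}` and `H⁽²⁾ₙ ~ C₂ ρ₂⁻ⁿ n^{-3/2}` as `n → ∞`. -/
theorem moon_asymptotics :
    ∃ (C₀ ρ₀ C₂ ρ₂ : ℝ), 0 < C₀ ∧ ρ₀ ∈ Set.Ioo (0 : ℝ) 1 ∧ 0 < C₂ ∧ ρ₂ ∈ Set.Ioo (0 : ℝ) 1 ∧
      Filter.Tendsto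
        (fun n : ℕ => (hierarchyCount n : ℝ) /
          (C₀ * ρ₀ ^ (-(n : ℝ)) * (n : ℝ) ^ (-(3 / 2) : ℝ)))
        Filter.atTop (nhds 1) ∧
      Filter.Tendsto
        (fun n : ℕ => (hierarchyCountNoSize2 n : ℝ) /
          (C₂ * ρ₂ ^ (-(n : ℝ)) * (n : ℝ) ^ (-(3 / 2) : ℝ)))
        Filter.atTop (nhds 1) := by
  obtain ⟨C₀, ρ₀, h1, h2, h3⟩ := MoonAux.data_all.final
  obtain ⟨C₂, ρ₂, h4, h5, h6⟩ := MoonAux.data_two.final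
  refine ⟨C₀, ρ₀, C₂, ρ₂, h1, h2, h4, h5, ?_, ?_⟩
  · refine h3.congr (fun n => ?_)
    rw [MoonAux.hierarchyCount_eq, MoonAux.aN]
  · refine h6.congr (fun n => ?_)
    rw [MoonAux.hierarchyCountNoSize2_eq, MoonAux.aN]
end

section
/- (Lazzarin–Márquez–Tura) If G and H are threshold graphs on the same number of vertices that are cospectral, then G and H are isomorphic. In other words, no threshold graph has a cospectral mate within the family of threshold graphs. -/
open SimpleGraph

/-- The characteristic polynomial (over `ℝ`) of the adjacency matrix of a finite graph. -/
noncomputable def adjCharPoly {V : Type} [Fintype V] [DecidableEq V] (G : SimpleGraph V) :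
    Polynomial ℝ :=
  letI := Classical.decRel G.Adj
  Matrix.charpoly (G.adjMatrix ℝ)

/-- Two finite graphs are cospectral if their adjacency matrices have the same
characteristic polynomial. -/
def Cospectral {V W : Type} [Fintype V] [DecidableEq V] [Fintype W] [DecidableEq W]
    (G : SimpleGraph V) (H : SimpleGraph W) : Prop :=
  adjCharPoly G = adjCharPoly H

/-- Generalized cospectrality: the graphs are cospectral and so are their complements. -/
def GenCospectral {V W : Type} [Fintype V] [DecidableEq V] [Fintype W] [DecidableEq W]
    (G : SimpleGraph V) (H : SimpleGraph W) : Prop :=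
  Cospectral G H ∧ Cospectral Gᶜ Hᶜ

/-- A cograph is a graph with no induced path `P₄` (on 4 vertices). -/
def IsCograph {V : Type} (G : SimpleGraph V) : Prop :=
  ¬ ∃ f : Fin 4 ↪ V, ∀ i j, G.Adj (f i) (f j) ↔ (SimpleGraph.pathGraph 4).Adj i j

/-- The number of isomorphism classes of graphs on `n` vertices satisfying an
isomorphism-invariant property `P`. -/
noncomputable def classCount (n : ℕ) (P : SimpleGraph (Fin n) → Prop) : ℕ :=
  Nat.card (Quot fun G H : {G : SimpleGraph (Fin n) // P G} => Nonempty (G.1 ≃g H.1))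

/-- A threshold graph: it can be built from a single vertex by repeatedly adding either an
isolated vertex or a dominating vertex. Equivalently, there is an ordering
`σ 0, σ 1, …, σ (n-1)` of the vertices such that each vertex is isolated or dominating in
the subgraph induced on it and the earlier vertices. -/
def IsThreshold {n : ℕ} (G : SimpleGraph (Fin n)) : Prop :=
  1 ≤ n ∧ ∃ σ : Equiv.Perm (Fin n), ∀ i : Fin n,
    (∀ j < i, ¬ G.Adj (σ i) (σ j)) ∨ (∀ j < i, G.Adj (σ i) (σ j))

/-!
Proof idea: evaluate the characteristic polynomial at a primitive cube root of unity `w`.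
For a threshold graph with creation sequence `l` (first letter `false`) the value is
`u * (C + D w)` with `u` a sixth root of unity and `0 ≤ D < C` integers, and `(C, D)` together
with the length determine `l` (Euclidean algorithm / Stern-Brocot).
-/

namespace ThresholdAux

open Matrix

/-- the constant matrix -/
def cst (m n : ℕ) (c : ℂ) : Matrix (Fin m) (Fin n) ℂ := Matrix.of fun _ _ => c

lemma det_block_one {n : ℕ} (M : Matrix (Fin n) (Fin n) ℂ) (u v c : ℂ) :
    (fromBlocks M (cst n 1 u) (cst 1 n v) (cst 1 1 (1 + c))).det
      = c * M.det + (M - cst n n (u * v)).det := by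
  have h1 : fromBlocks M (cst n 1 u) (cst 1 n v) (cst 1 1 (1 + c))
      = (fromBlocks M (cst n 1 u) (cst 1 n v) (1 : Matrix (Fin 1) (Fin 1) ℂ)).updateRow
        (Sum.inr 0) ((fromBlocks M (cst n 1 u) (cst 1 n v) (1 : Matrix (Fin 1) (Fin 1) ℂ)) (Sum.inr 0)
          + (fromBlocks M (cst n 1 u) 0 (cst 1 1 c)) (Sum.inr 0)) := by
    ext i j
    rcases i with i | i <;> rcases j with j | j
    · simp [updateRow_apply]
    · simp [updateRow_apply]
    · have hi : i = 0 := Subsingleton.elim _ _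
      subst hi
      simp [cst]
    · have hi : i = 0 := Subsingleton.elim _ _
      have hj : j = 0 := Subsingleton.elim _ _
      subst hi; subst hj
      simp [cst]
  have h2 : (fromBlocks M (cst n 1 u) (cst 1 n v) (1 : Matrix (Fin 1) (Fin 1) ℂ)).updateRow
        (Sum.inr 0) ((fromBlocks M (cst n 1 u) 0 (cst 1 1 c)) (Sum.inr 0))
      = fromBlocks M (cst n 1 u) 0 (cst 1 1 c) := by
    ext i j
    rcases i with i | i <;> rcases j with j | j
    · simp [updateRow_apply]
    · simp [updateRow_apply]
    · have hi : i = 0 := Subsingleton.elim _ _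
      subst hi
      simp
    · have hi : i = 0 := Subsingleton.elim _ _
      subst hi
      simp
  rw [h1, det_updateRow_add, h2, updateRow_eq_self, det_fromBlocks_one₂₂, det_fromBlocks_zero₂₁]
  have h3 : cst n 1 u * cst 1 n v = cst n n (u * v) := by
    ext i j
    simp [cst, mul_apply]
  have h4 : (cst 1 1 c).det = c := by simp [cst]
  rw [h3, h4]
  ring

lemma det_block_neg {n : ℕ} (M : Matrix (Fin n) (Fin n) ℂ) (u v d : ℂ) :
    (fromBlocks M (cst n 1 u) (cst 1 n v) (cst 1 1 d)).det
      = - (fromBlocks M (cst n 1 u) (cst 1 n (-v)) (cst 1 1 (-d))).det := by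
  have h : fromBlocks M (cst n 1 u) (cst 1 n v) (cst 1 1 d)
      = fromBlocks (1 : Matrix (Fin n) (Fin n) ℂ) 0 0 (cst 1 1 (-1))
        * fromBlocks M (cst n 1 u) (cst 1 n (-v)) (cst 1 1 (-d)) := by
    rw [fromBlocks_multiply]
    congr 1
    · simp
    · simp
    · ext i j; simp [cst, mul_apply]
    · ext i j; simp [cst, mul_apply]
  rw [h, det_mul, det_fromBlocks_zero₂₁]
  simp [cst]

/-- `x I - A` for the threshold graph with creation sequence `f`. -/
def mat (x : ℂ) (f : ℕ → Bool) (n : ℕ) : Matrix (Fin n) (Fin n) ℂ :=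
  Matrix.of fun i j => if i = j then x else if f (max i.1 j.1) then -1 else 0

/-- one step of the recursion -/
def step (x : ℂ) (p : ℂ × ℂ) (b : Bool) : ℂ × ℂ :=
  if b then ((x + 1) * p.1, (x + 1) * p.2 - p.1) else (x * p.1 + p.2, x * p.2)

lemma mat_succ (x c : ℂ) (f : ℕ → Bool) (n : ℕ) :
    (mat x f (n+1) + cst (n+1) (n+1) c).submatrix finSumFinEquiv finSumFinEquiv
      = fromBlocks (mat x f n + cst n n c) (cst n 1 ((if f n then -1 else 0) + c))
        (cst 1 n ((if f n then -1 else 0) + c)) (cst 1 1 (x + c)) := by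
  ext i j
  rcases i with i | i <;> rcases j with j | j
  · simp [mat, cst, Fin.ext_iff]
  · have := i.2
    have hj : j = 0 := Subsingleton.elim _ _
    subst hj
    simp [mat, cst, Fin.ext_iff, this.ne, max_eq_right this.le]
  · have := j.2
    have hj : i = 0 := Subsingleton.elim _ _
    subst hj
    simp [mat, cst, Fin.ext_iff, this.ne', max_eq_left this.le]
  · have hi : i = 0 := Subsingleton.elim _ _
    have hj : j = 0 := Subsingleton.elim _ _
    subst hi; subst hj
    simp [mat, cst]

lemma det_succ (x c : ℂ) (f : ℕ → Bool) (n : ℕ) :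
    (mat x f (n+1) + cst (n+1) (n+1) c).det
      = (fromBlocks (mat x f n + cst n n c) (cst n 1 ((if f n then -1 else 0) + c))
        (cst 1 n ((if f n then -1 else 0) + c)) (cst 1 1 (x + c))).det := by
  rw [← mat_succ, det_submatrix_equiv_self]

lemma cst_add (n : ℕ) (M : Matrix (Fin n) (Fin n) ℂ) (a b : ℂ) :
    M + cst n n a - cst n n b = M + cst n n (a - b) := by
  ext i j; simp [cst]; ring

lemma dets (x : ℂ) (f : ℕ → Bool) (n : ℕ) :
    ((mat x f n + cst n n 1).det, (mat x f n + cst n n 0).det)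
      = ((List.range n).map f).foldl (step x) (1, 1) := by
  induction n with
  | zero => simp
  | succ n ih =>
    rw [List.range_succ, List.map_append, List.foldl_append, ← ih, det_succ, det_succ]
    cases hf : f n
    · have e1 := det_block_one (mat x f n + cst n n 1) 1 1 x
      have e2 := det_block_one (mat x f n + cst n n 0) 0 0 (x - 1)
      rw [cst_add] at e1 e2
      have e3 : 1 + (x - 1) = x + 0 := by ring
      rw [e3] at e2
      rw [add_comm 1 x] at e1
      norm_num at e1 e2
      simp [step, hf, e1, e2]
      ring
    · have e1 := det_block_one (mat x f n + cst n n 1) 0 0 x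
      have e2 := det_block_one (mat x f n + cst n n 0) (-1) 1 (-x-1)
      have e4 := det_block_neg (mat x f n + cst n n 0) (-1) (-1) x
      rw [cst_add] at e1 e2
      have e3 : 1 + (-x - 1) = -x := by ring
      rw [e3] at e2
      rw [add_comm 1 x] at e1
      norm_num at e1 e2 e4
      simp [step, hf, e1, e4, e2]
      constructor <;> ring

/-- the pair `(D, C)` of a word -/
def pr : List Bool → ℤ × ℤ
  | [] => (0, 1)
  | true :: l => ((pr l).1 + (pr l).2, (pr l).2)
  | false :: l => ((pr l).1, (pr l).2 + (pr l).1)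

lemma pr_pos (l : List Bool) : 0 ≤ (pr l).1 ∧ 0 < (pr l).2 := by
  induction l with
  | nil => simp [pr]
  | cons b l ih => cases b <;> simp only [pr] <;> constructor <;> omega

lemma pr_inj : ∀ (l l' : List Bool), l.length = l'.length → pr l = pr l' → l = l'
  | [], [], _, _ => rfl
  | [], _ :: _, h, _ => by simp at h
  | _ :: _, [], h, _ => by simp at h
  | b :: l, b' :: l', h, e => by
    have p := pr_pos l
    have p' := pr_pos l'
    have hl : l.length = l'.length := by simpa using h
    have key : b = b' ∧ pr l = pr l' := by
      cases b <;> cases b' <;> simp only [pr, Prod.ext_iff] at e ⊢ <;> simp <;> omega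
    rw [key.1, pr_inj l l' hl key.2]

lemma fold_eq (w : ℂ) (hw : w ^ 2 + w + 1 = 0) (l : List Bool) :
    ∃ k : ℕ, ∀ p : ℂ × ℂ, (l.foldl (step w) p).2
      = (w + 1) ^ k * (w * (pr l).1 * p.1 + (pr l).2 * p.2) := by
  induction l with
  | nil => exact ⟨0, fun p => by simp [pr]⟩
  | cons b l ih =>
    obtain ⟨k, hk⟩ := ih
    cases b
    · refine ⟨k + 2, fun p => ?_⟩
      rw [List.foldl_cons, hk]
      have h2 : (w + 1) ^ (k + 2) = (w + 1) ^ k * w := by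
        rw [pow_add]; congr 1; linear_combination hw
      rw [h2]
      simp only [step, pr, if_true, Bool.false_eq_true, if_false]
      push_cast
      ring
    · refine ⟨k + 1, fun p => ?_⟩
      rw [List.foldl_cons, hk, pow_succ]
      simp only [step, pr, if_true, Bool.false_eq_true, if_false]
      push_cast
      linear_combination (- (w+1)^k * (pr l).2 * p.1) * hw

lemma indep (w : ℂ) (hw : w ^ 2 + w + 1 = 0) (a b : ℤ) (h : (a : ℂ) + b * w = 0) :
    a = 0 ∧ b = 0 := by
  have h1 : ((a ^ 2 - a * b + b ^ 2 : ℤ) : ℂ) = 0 := by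
    push_cast
    linear_combination (a - b - b * w) * h + b ^ 2 * hw
  have h2 : a ^ 2 - a * b + b ^ 2 = 0 := by exact_mod_cast h1
  have hb : b = 0 := by
    have : b ^ 2 ≤ 0 := by nlinarith [sq_nonneg (2 * a - b)]
    nlinarith [sq_nonneg b, pow_eq_zero_iff (two_ne_zero) |>.1 (le_antisymm this (sq_nonneg b))]
  subst hb
  exact ⟨by simpa using h2, rfl⟩

lemma unit_aux (w : ℂ) (hw : w ^ 2 + w + 1 = 0) (k : ℕ) (C D C' D' : ℤ)
    (h1 : 0 ≤ D) (h2 : D < C) (h1' : 0 ≤ D') (h2' : D' < C')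
    (h : (w + 1) ^ k * ((C : ℂ) + D * w) = C' + D' * w) : C = C' ∧ D = D' := by
  have h6 : (w + 1) ^ 6 = 1 := by
    have : (w + 1) ^ 3 = -1 := by linear_combination (w + 2) * hw
    calc (w + 1) ^ 6 = ((w + 1) ^ 3) ^ 2 := by ring
      _ = 1 := by rw [this]; norm_num
  have hk : (w + 1) ^ k = (w + 1) ^ (k % 6) := by
    conv_lhs => rw [← Nat.div_add_mod k 6, pow_add, pow_mul, h6, one_pow, one_mul]
  rw [hk] at h
  have hlt : k % 6 < 6 := Nat.mod_lt _ (by norm_num)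
  generalize k % 6 = r at h hlt
  have e2 : (w + 1) ^ 2 = w := by linear_combination hw
  have e3 : (w + 1) ^ 3 = -1 := by linear_combination (w + 2) * hw
  have e4 : (w + 1) ^ 4 = -1 - w := by
    calc (w + 1) ^ 4 = (w + 1) ^ 3 * (w + 1) := by ring
      _ = _ := by rw [e3]; ring
  have e5 : (w + 1) ^ 5 = - w := by
    calc (w + 1) ^ 5 = (w + 1) ^ 3 * (w + 1) ^ 2 := by ring
      _ = _ := by rw [e3, e2]; ring
  interval_cases r
  · have := indep w hw (C - C') (D - D') (by push_cast; linear_combination h)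
    omega
  · have := indep w hw (C - D - C') (C - D') (by push_cast; linear_combination h - D * hw)
    omega
  · rw [e2] at h
    have := indep w hw (- D - C') (C - D - D') (by push_cast; linear_combination h - D * hw)
    omega
  · rw [e3] at h
    have := indep w hw (- C - C') (- D - D') (by push_cast; linear_combination h)
    omega
  · rw [e4] at h
    have := indep w hw (- C + D - C') (- C - D') (by push_cast; linear_combination h + D * hw)
    omega
  · rw [e5] at h
    have := indep w hw (D - C') (D - C - D') (by push_cast; linear_combination h + D * hw)
    omega

/-- the threshold graph of a creation sequence -/
def thr (f : ℕ → Bool) (n : ℕ) : SimpleGraph (Fin n) where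
  Adj i j := i ≠ j ∧ f (max i.1 j.1) = true
  symm := ⟨fun i j h => ⟨h.1.symm, by rw [max_comm]; exact h.2⟩⟩
  loopless := ⟨fun i h => h.1 rfl⟩

lemma thr_adj (f : ℕ → Bool) (n : ℕ) (i j : Fin n) :
    (thr f n).Adj i j ↔ i ≠ j ∧ f (max i.1 j.1) = true := Iff.rfl

lemma exists_thr {n : ℕ} (G : SimpleGraph (Fin n)) (hG : IsThreshold G) :
    ∃ f : ℕ → Bool, f 0 = false ∧ Nonempty (thr f n ≃g G) := by
  classical
  obtain ⟨hn, σ, hσ⟩ := hG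
  let f : ℕ → Bool := fun i => decide (i ≠ 0 ∧ ∃ h : i < n, ∀ j < (⟨i, h⟩ : Fin n), G.Adj (σ ⟨i, h⟩) (σ j))
  have key : ∀ i j : Fin n, j < i → (G.Adj (σ i) (σ j) ↔ f i.1 = true) := by
    intro i j hji
    have hi : i.1 ≠ 0 := by have : j.1 < i.1 := hji; omega
    simp only [f, decide_eq_true_eq]
    constructor
    · intro ha
      refine ⟨hi, i.2, ?_⟩
      rcases hσ i with h | h
      · exact absurd ha (h j hji)
      · exact h
    · rintro ⟨_, _, h⟩
      exact h j hji
  refine ⟨f, by simp [f], ⟨⟨σ, ?_⟩⟩⟩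
  intro i j
  rcases lt_trichotomy i j with h | h | h
  · rw [G.adj_comm, key j i h]
    have h' : i.1 ≤ j.1 := h.le
    simp [thr, h.ne, max_eq_right h']
  · subst h
    simp
  · rw [key i j h]
    have h' : j.1 ≤ i.1 := h.le
    simp [thr, h.ne', max_eq_left h']

lemma charpoly_iso {n : ℕ} {G H : SimpleGraph (Fin n)} (e : G ≃g H) :
    adjCharPoly G = adjCharPoly H := by
  classical
  unfold adjCharPoly
  rw [← Matrix.charpoly_reindex e.toEquiv]
  congr 1
  ext i j
  simp only [reindex_apply, submatrix_apply, adjMatrix_apply]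
  have := e.symm.map_adj_iff (v := i) (w := j)
  exact if_congr this rfl rfl

lemma eval_thr (w : ℂ) (f : ℕ → Bool) (n : ℕ) :
    (adjCharPoly (thr f n)).eval₂ (algebraMap ℝ ℂ) w
      = (((List.range n).map f).foldl (step w) (1, 1)).2 := by
  classical
  rw [← dets]
  unfold adjCharPoly
  rw [Polynomial.eval₂_eq_eval_map, ← Matrix.charpoly_map, Matrix.eval_charpoly]
  congr 1
  ext i j
  by_cases hij : i = j
  · subst hij
    simp [mat, cst]
  · rw [Matrix.add_apply, Matrix.sub_apply, Matrix.map_apply, adjMatrix_apply]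
    by_cases hb : f (max i.1 j.1) = true
    · have ha := (thr_adj f n i j).2 ⟨hij, hb⟩
      rw [if_pos ha]
      simp [mat, cst, hij, hb]
    · have ha : ¬ (thr f n).Adj i j := fun h => hb h.2
      rw [if_neg ha]
      simp [mat, cst, hij, hb]

lemma exists_root : ∃ w : ℂ, w ^ 2 + w + 1 = 0 := by
  obtain ⟨s, hs⟩ := IsAlgClosed.exists_pow_nat_eq (-3 : ℂ) (n := 2) (by norm_num)
  exact ⟨(-1 + s) / 2, by linear_combination hs / 4⟩

lemma word_eq {n : ℕ} (f g : ℕ → Bool) (hf : f 0 = false) (hg : g 0 = false)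
    (hn : 1 ≤ n) (h : adjCharPoly (thr f n) = adjCharPoly (thr g n)) :
    (List.range n).map f = (List.range n).map g := by
  obtain ⟨w, hw⟩ := exists_root
  obtain ⟨m, rfl⟩ : ∃ m, n = m + 1 := ⟨n - 1, by omega⟩
  have E : (((List.range (m+1)).map f).foldl (step w) (1, 1)).2
      = (((List.range (m+1)).map g).foldl (step w) (1, 1)).2 := by
    rw [← eval_thr, ← eval_thr, h]
  have pos : ∀ f : ℕ → Bool, f 0 = false →
      0 ≤ (pr ((List.range (m+1)).map f)).1 ∧
      (pr ((List.range (m+1)).map f)).1 < (pr ((List.range (m+1)).map f)).2 := by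
    intro f hf
    rw [List.range_succ_eq_map, List.map_cons, hf]
    have := pr_pos (List.map f (List.map Nat.succ (List.range m)))
    simp only [pr]
    omega
  have pf := pos f hf
  have pg := pos g hg
  have hlen : ((List.range (m+1)).map f).length = ((List.range (m+1)).map g).length := by simp
  generalize (List.range (m+1)).map f = l at *
  generalize (List.range (m+1)).map g = l' at *
  obtain ⟨k, hk⟩ := fold_eq w hw l
  obtain ⟨k', hk'⟩ := fold_eq w hw l'
  rw [hk, hk'] at E
  have h6 : (w + 1) ^ 6 = 1 := by
    have : (w + 1) ^ 3 = -1 := by linear_combination (w + 2) * hw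
    calc (w + 1) ^ 6 = ((w + 1) ^ 3) ^ 2 := by ring
      _ = 1 := by rw [this]; norm_num
  have h6' : (w + 1) ^ (5 * k') * (w + 1) ^ k' = 1 := by
    rw [← pow_add, show 5 * k' + k' = 6 * k' by ring, pow_mul, h6, one_pow]
  have := unit_aux w hw (5 * k' + k) (pr l).2 (pr l).1 (pr l').2 (pr l').1 pf.1 pf.2 pg.1 pg.2 (by
    rw [pow_add]
    linear_combination (w + 1) ^ (5 * k') * E + ((pr l').2 + (pr l').1 * w) * h6')
  exact pr_inj l l' hlen (Prod.ext this.2 this.1)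

end ThresholdAux

open ThresholdAux in
/-- **Lazzarin–Márquez–Tura.** Cospectral threshold graphs are isomorphic: no threshold
graph has a cospectral mate within the family of threshold graphs. -/
theorem threshold_cospectral_implies_isomorphic {n : ℕ} (G H : SimpleGraph (Fin n))
    (hG : IsThreshold G) (hH : IsThreshold H) (h : Cospectral G H) :
    Nonempty (G ≃g H) := by
  have hn := hG.1
  obtain ⟨f, hf, ⟨ef⟩⟩ := exists_thr G hG
  obtain ⟨g, hg, ⟨eg⟩⟩ := exists_thr H hH
  have hc : adjCharPoly (thr f n) = adjCharPoly (thr g n) := by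
    rw [charpoly_iso ef, charpoly_iso eg]; exact h
  have hw := word_eq f g hf hg hn hc
  have hfg : ∀ i < n, f i = g i := by
    intro i hi
    exact List.map_inj_left.1 hw i (List.mem_range.2 hi)
  have hthr : thr f n = thr g n := by
    ext i j
    simp only [thr]
    rw [hfg _ (max_lt i.2 j.2)]
  rw [hthr] at ef
  exact ⟨ef.symm.trans eg⟩
end
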